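/- arXiv:2112.04072 — 2 statements merged into one kernel-verified Lean document; each statement's English description precedes it below -/
import Mathlib

section
/- Let G be a finitely generated co-Hopfian virtually free group. Then G is rigid: every group endomorphism φ of G such that φ ∼ id_G (i.e. φ coincides with a conjugation on every finite subgroup of G) is an automorphism of G (bijective). -/
open FirstOrder Language

/-- Function symbols of the first-order language of groups:
a binary multiplication, a unary inverse and a constant for the identity. -/
inductive GroupFunc : ℕ → Type
  | mul : GroupFunc 2
  | inv : GroupFunc 1
  | one : GroupFunc 0

/-- The first-order language of groups. -/
def groupLang : FirstOrder.Language :=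
  { Functions := GroupFunc
    Relations := fun _ => Empty }

/-- Every group is a structure for the language of groups in the natural way. -/
instance groupLangStructure (G : Type*) [Group G] : groupLang.Structure G where
  funMap {n} f v :=
    match f with
    | .mul => v 0 * v 1
    | .inv => (v 0)⁻¹
    | .one => 1
  RelMap {n} r _ := r.elim

/-- Existential formulas: iterated existential quantifications of a
quantifier-free formula. -/
inductive IsExistentialQF {α : Type*} : ∀ {n : ℕ}, groupLang.BoundedFormula α n → Prop
  | of_isQF {n : ℕ} {φ : groupLang.BoundedFormula α n} (h : φ.IsQF) : IsExistentialQF φ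
  | ex {n : ℕ} {φ : groupLang.BoundedFormula α (n + 1)} (h : IsExistentialQF φ) :
      IsExistentialQF φ.ex

/-- Universal formulas: iterated universal quantifications of a
quantifier-free formula. -/
inductive IsUniversalQF {α : Type*} : ∀ {n : ℕ}, groupLang.BoundedFormula α n → Prop
  | of_isQF {n : ℕ} {φ : groupLang.BoundedFormula α n} (h : φ.IsQF) : IsUniversalQF φ
  | all {n : ℕ} {φ : groupLang.BoundedFormula α (n + 1)} (h : IsUniversalQF φ) :
      IsUniversalQF φ.all

/-- ∀∃-formulas: iterated universal quantifications of an existential formula. -/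
inductive IsAE {α : Type*} : ∀ {n : ℕ}, groupLang.BoundedFormula α n → Prop
  | of_existential {n : ℕ} {φ : groupLang.BoundedFormula α n} (h : IsExistentialQF φ) : IsAE φ
  | all {n : ℕ} {φ : groupLang.BoundedFormula α (n + 1)} (h : IsAE φ) : IsAE φ.all

/-- A group is virtually free if it has a free subgroup of finite index. -/
def VirtuallyFree (G : Type*) [Group G] : Prop :=
  ∃ H : Subgroup G, H.FiniteIndex ∧ Nonempty (IsFreeGroup H)

/-- A group is co-Hopfian if every injective endomorphism is surjective. -/
def CoHopfian (G : Type*) [Group G] : Prop :=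
  ∀ φ : G →* G, Function.Injective φ → Function.Surjective φ

/-- Two homomorphisms `φ, φ' : G → G'` are equivalent if they coincide up to
conjugation on every finite subgroup of `G`. -/
def HomEquiv {G G' : Type*} [Group G] [Group G'] (φ φ' : G →* G') : Prop :=
  ∀ H : Subgroup G, (H : Set G).Finite →
    ∃ g' : G', ∀ h ∈ H, φ' h = g' * φ h * g'⁻¹

/-- Two groups are ∀∃-equivalent if they satisfy the same ∀∃-sentences. -/
def AEEquivalent (G : Type*) (G' : Type*) [Group G] [Group G'] : Prop :=
  ∀ φ : groupLang.Sentence, IsAE φ → (G ⊨ φ ↔ G' ⊨ φ)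

/-- Two groups are ∃-equivalent if they satisfy the same existential sentences. -/
def ExistentiallyEquivalent (G : Type*) (G' : Type*) [Group G] [Group G'] : Prop :=
  ∀ φ : groupLang.Sentence, IsExistentialQF φ → (G ⊨ φ ↔ G' ⊨ φ)

/-- An endomorphism is rigid-testing: `G` is rigid if every endomorphism
equivalent to the identity is an automorphism. -/
def Rigid (G : Type*) [Group G] : Prop :=
  ∀ φ : G →* G, HomEquiv φ (MonoidHom.id G) → Function.Bijective φ

/-- `Out G` is finite, expressed as: the inner automorphisms form a finite index
subgroup of `Aut G`. -/
def OutFinite (G : Type*) [Group G] : Prop :=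
  (MulAut.conj : G →* MulAut G).range.FiniteIndex

/-- Iterated composition of an endomorphism. -/
def homPow {G : Type*} [Group G] (φ : G →* G) : ℕ → (G →* G)
  | 0 => MonoidHom.id G
  | n + 1 => φ.comp (homPow φ n)

/-- An endomorphism `φ` of `G` is class-permuting if some positive power of `φ`
is equivalent to the identity of `G`. -/
def ClassPermuting {G : Type*} [Group G] (φ : G →* G) : Prop :=
  ∃ n : ℕ, 1 ≤ n ∧ HomEquiv (homPow φ n) (MonoidHom.id G)

/-- A maximal finite subgroup: a finite subgroup maximal with respect to
inclusion among finite subgroups. -/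
def MaximalFiniteSubgroup {G : Type*} [Group G] (A : Subgroup G) : Prop :=
  (A : Set G).Finite ∧ ∀ B : Subgroup G, (B : Set G).Finite → A ≤ B → A = B

/-- Two subgroups are conjugate. -/
def SubgroupConj {G : Type*} [Group G] (A B : Subgroup G) : Prop :=
  ∃ g : G, B = A.map (MulAut.conj g).toMonoidHom

/-- A group is strongly co-Hopfian if there is a finite subset `F` of
`G \ {1}` such that every endomorphism whose kernel misses `F` is an
automorphism. -/
def StronglyCoHopfian (G : Type*) [Group G] : Prop :=
  ∃ F : Finset G, (1 : G) ∉ F ∧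
    ∀ φ : G →* G, (∀ f ∈ F, φ f ≠ 1) → Function.Bijective φ

/-- A group is finitely presented. -/
def GroupFinitelyPresented (G : Type*) [Group G] : Prop :=
  ∃ (n : ℕ) (rels : Finset (FreeGroup (Fin n))),
    Nonempty (PresentedGroup (rels : Set (FreeGroup (Fin n))) ≃* G)

/-! ### Trees described by halfspaces -/

open Pointwise

section TreePart

variable {G V : Type*} [Group G] [MulAction G V]

/-- A `G`-tree without inversions, described by the set of its halfspaces. -/
structure HTree (G V : Type*) [Group G] [MulAction G V] where
  H : Set (Set V)
  smul_mem : ∀ (g : G) (a : Set V), a ∈ H → g • a ∈ H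
  compl_mem : ∀ a ∈ H, aᶜ ∈ H
  noinv : ∀ (g : G), ∀ a ∈ H, g • a ≠ aᶜ
  nested : ∀ a ∈ H, ∀ b ∈ H, a ⊆ b ∨ b ⊆ a ∨ (∀ x, x ∈ a → x ∉ b) ∨ (∀ x, x ∈ a ∨ x ∈ b)
  fin : ∀ x y, {a | a ∈ H ∧ x ∉ a ∧ y ∈ a}.Finite
  sep : ∀ x y, x ≠ y → ∃ a ∈ H, x ∉ a ∧ y ∈ a
  edge : ∀ a ∈ H, ∃ x y, x ∉ a ∧ y ∈ a ∧ ∀ b ∈ H, x ∉ b → y ∈ b → b = a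

namespace HTree

variable (T : HTree G V)

/-- `a` is the halfspace of the oriented edge from `x` to `y`. -/
def Edge (x y : V) (a : Set V) : Prop :=
  a ∈ T.H ∧ x ∉ a ∧ y ∈ a ∧ ∀ b ∈ T.H, x ∉ b → y ∈ b → b = a

variable {T}

theorem Edge.mem {x y : V} {a : Set V} (h : T.Edge x y a) : a ∈ T.H := h.1

theorem Edge.symm {x y : V} {a : Set V} (h : T.Edge x y a) : T.Edge y x aᶜ := by
  obtain ⟨h1, h2, h3, h4⟩ := h
  refine ⟨T.compl_mem a h1, by simpa using h3, by simpa using h2, ?_⟩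
  intro b hb hy hx
  have := h4 bᶜ (T.compl_mem b hb) (by simpa using hx) (by simpa using hy)
  rw [← this, _root_.compl_compl]

theorem Edge.smul {x y : V} {a : Set V} (h : T.Edge x y a) (g : G) :
    T.Edge (g • x) (g • y) (g • a) := by
  obtain ⟨h1, h2, h3, h4⟩ := h
  refine ⟨T.smul_mem g a h1, by rwa [Set.smul_mem_smul_set_iff],
    by rwa [Set.smul_mem_smul_set_iff], ?_⟩
  intro b hb hx hy
  have := h4 (g⁻¹ • b) (T.smul_mem _ b hb)
    (by rwa [Set.mem_smul_set_iff_inv_smul_mem, inv_inv])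
    (by rwa [Set.mem_smul_set_iff_inv_smul_mem, inv_inv])
  rw [← this, smul_inv_smul]

theorem Edge.unique_right {x y x' y' : V} {a : Set V} (h : T.Edge x y a) (h' : T.Edge x' y' a) :
    y = y' := by
  by_contra hne
  obtain ⟨b, hb, h1, h2⟩ := T.sep y y' hne
  have hba : b ≠ a := by rintro rfl; exact h1 h.2.2.1
  have hbc : b ≠ aᶜ := by rintro rfl; exact h2 h'.2.2.1
  have hx : x ∉ b := by
    intro hx
    have := h.2.2.2 bᶜ (T.compl_mem b hb) (by simpa using hx) (by simpa using h1)
    exact hbc (by rw [← this, _root_.compl_compl])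
  have hx' : x' ∈ b := by
    by_contra hx'
    exact hba (h'.2.2.2 b hb hx' h2)
  have e1 := h.2.1
  have e2 := h.2.2.1
  have e3 := h'.2.1
  have e4 := h'.2.2.1
  rcases T.nested a h.1 b hb with q | q | q | q
  · exact h1 (q e2)
  · exact e3 (q hx')
  · exact q _ e4 h2
  · rcases q x with q | q
    · exact e1 q
    · exact hx q

theorem Edge.unique_left {x y x' y' : V} {a : Set V} (h : T.Edge x y a) (h' : T.Edge x' y' a) :
    x = x' := h.symm.unique_right h'.symm

theorem Edge.unique_set {x y : V} {a b : Set V} (h : T.Edge x y a) (h' : T.Edge x y b) :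
    a = b := h'.2.2.2 a h.1 h.2.1 h.2.2.1

/-- Two halfspaces at consecutive edges of a reduced path. -/
theorem Edge.chain {x y w : V} {a b : Set V} (h : T.Edge x y a) (h' : T.Edge y w b)
    (hne : w ≠ x) : b ⊆ a := by
  have hbc : b ≠ aᶜ := by
    rintro rfl
    exact hne (h'.unique_right h.symm)
  have hx : x ∉ b := by
    intro hx
    have := h.2.2.2 bᶜ (T.compl_mem b h'.1) (by simpa using hx) (by simpa using h'.2.1)
    exact hbc (by rw [← this, _root_.compl_compl])
  have hw : w ∈ a := by
    by_contra hw
    have := h'.2.2.2 aᶜ (T.compl_mem a h.1) (by simpa using h.2.2.1) (by simpa using hw)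
    exact hbc this.symm
  have e1 := h.2.1
  have e2 := h.2.2.1
  have e3 := h'.2.1
  have e4 := h'.2.2.1
  rcases T.nested a h.1 b h'.1 with q | q | q | q
  · exact absurd (q e2) e3
  · exact q
  · exact absurd e4 (q _ hw)
  · rcases q x with q | q
    · exact absurd q e1
    · exact absurd q hx

theorem exists_edge {a : Set V} (ha : a ∈ T.H) : ∃ x y, T.Edge x y a := by
  obtain ⟨x, y, h1, h2, h3⟩ := T.edge a ha
  exact ⟨x, y, ha, h1, h2, h3⟩

/-- First step of a path from `x` to `y`. -/
theorem exists_step {x y : V} (hne : x ≠ y) : ∃ x' a, T.Edge x x' a ∧ y ∈ a := by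
  obtain ⟨a0, ha0, h1, h2⟩ := T.sep x y hne
  obtain ⟨a, ⟨haH, hxa, hya⟩, hmax⟩ :=
    (T.fin x y).exists_maximal ⟨a0, ha0, h1, h2⟩
  obtain ⟨o, t, he⟩ := exists_edge haH
  suffices o = x by
    subst this
    exact ⟨t, a, he, hya⟩
  by_contra hox
  obtain ⟨b, hb, hxb, hob⟩ := T.sep x o (Ne.symm hox)
  have hba : b ≠ aᶜ ∧ b ≠ a := by
    constructor
    · rintro rfl
      exact hxb hxa
    · rintro rfl
      exact he.2.1 hob
  have htb : t ∈ b := by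
    by_contra htb
    have := he.2.2.2 bᶜ (T.compl_mem b hb) (by simpa using hob) (by simpa using htb)
    exact hba.1 (by rw [← this, _root_.compl_compl])
  have e1 := he.2.1
  have e2 := he.2.2.1
  rcases T.nested a haH b hb with q | q | q | q
  · exact hba.2 (le_antisymm (hmax ⟨hb, hxb, q hya⟩ q) q)
  · exact e1 (q hob)
  · exact q _ e2 htb
  · rcases q x with q | q
    · exact hxa q
    · exact hxb q

/-- Combinatorial distance. -/
noncomputable def dist (T : HTree G V) (x y : V) : ℕ :=
  {a | a ∈ T.H ∧ x ∉ a ∧ y ∈ a}.ncard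

theorem Edge.dist_lt {x x' y : V} {a : Set V} (h : T.Edge x x' a) (hy : y ∈ a) :
    T.dist x' y < T.dist x y := by
  refine Set.ncard_lt_ncard ?_ (T.fin x y)
  refine ⟨?_, ?_⟩
  · rintro b ⟨hb, h1, h2⟩
    refine ⟨hb, ?_, h2⟩
    intro hx
    have := h.2.2.2 bᶜ (T.compl_mem b hb) (by simpa using hx) (by simpa using h1)
    rw [← this] at hy
    exact hy h2
  · intro hsub
    exact (hsub (show a ∈ _ from ⟨h.1, h.2.1, hy⟩)).2.1 h.2.2.1

/-- Induction along paths. -/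
theorem path_induction (T : HTree G V) {Q : V → Prop} (v0 : V) (h0 : Q v0)
    (hstep : ∀ x y a, T.Edge x y a → Q x → Q y) : ∀ x, Q x := by
  have : ∀ n x, T.dist x v0 = n → Q x := by
    intro n
    induction n using Nat.strong_induction_on with
    | _ n ih =>
      intro x hx
      by_cases hxv : x = v0
      · rwa [hxv]
      · obtain ⟨x', a, he, hv⟩ := T.exists_step hxv
        have := ih _ (hx ▸ he.dist_lt hv) x' rfl
        exact hstep x' x aᶜ he.symm this
  exact fun x => this _ x rfl

/-- A function on oriented edges has a primitive. -/
theorem exists_potential (T : HTree G V) (v0 : V) (ζ : Set V → G)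
    (hζ : ∀ a ∈ T.H, ζ aᶜ = (ζ a)⁻¹) :
    ∃ P : V → G, P v0 = 1 ∧ ∀ x y a, T.Edge x y a → P y = P x * ζ a := by
  classical
  have hst : ∀ x, ∃ x', ∃ a, x ≠ v0 → T.Edge x x' a ∧ v0 ∈ a := by
    intro x
    by_cases hx : x = v0
    · exact ⟨x, ∅, fun h => absurd hx h⟩
    · obtain ⟨x', a, h⟩ := T.exists_step hx
      exact ⟨x', a, fun _ => h⟩
  choose pr e hpe using hst
  have hwf : WellFounded (fun x y => T.dist x v0 < T.dist y v0) :=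
    InvImage.wf (fun x => T.dist x v0) Nat.lt_wfRel.wf
  let P : V → G := hwf.fix (fun x ih =>
    if h : x = v0 then 1 else ih (pr x) ((hpe x h).1.dist_lt (hpe x h).2) * (ζ (e x))⁻¹)
  have hP0 : P v0 = 1 := by
    change hwf.fix _ _ = _
    rw [hwf.fix_eq]
    simp
  have hP1 : ∀ x, x ≠ v0 → P x = P (pr x) * (ζ (e x))⁻¹ := by
    intro x hx
    change hwf.fix _ _ = _
    rw [hwf.fix_eq, dif_neg hx]
  have key : ∀ x y a, T.Edge x y a → v0 ∉ a → P y = P x * ζ a := by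
    intro x y a h hv
    have hy : y ≠ v0 := by
      rintro rfl
      exact hv h.2.2.1
    obtain ⟨h1, h2⟩ := hpe y hy
    have hpx : pr y = x := by
      by_contra hne
      exact hv (h.chain h1 hne h2)
    rw [hP1 y hy, hpx]
    rw [hpx] at h1
    rw [h1.unique_set h.symm, hζ a h.1, inv_inv]
  refine ⟨P, hP0, ?_⟩
  intro x y a h
  by_cases hv : v0 ∈ a
  · have := key y x aᶜ h.symm (by simpa using hv)
    rw [this, hζ a h.1]
    group
  · exact key x y a h hv

theorem Edge.fix_left {x y : V} {a : Set V} (h : T.Edge x y a) {g : G} (hg : g • a = a) :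
    g • x = x := by
  have := h.smul g
  rw [hg] at this
  exact this.unique_left h

theorem Edge.fix_right {x y : V} {a : Set V} (h : T.Edge x y a) {g : G} (hg : g • a = a) :
    g • y = y := by
  have := h.smul g
  rw [hg] at this
  exact this.unique_right h

/-- Main consequence of the co-Hopf property. -/
theorem coHopf_commute (T : HTree G V)
    (hco : ∀ φ : G →* G, Function.Injective φ → Function.Surjective φ)
    {a₀ : Set V} (ha₀ : a₀ ∈ T.H) {z : G} (hz : ∀ c : G, c • a₀ = a₀ → z * c = c * z)
    (hza : z • a₀ ⊆ a₀) : z • a₀ = a₀ := by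
  classical
  by_contra hneq
  obtain ⟨v0, w, he0⟩ := exists_edge ha₀
  -- the twisting function
  let ζ : Set V → G := fun a =>
    if h : ∃ g : G, a = g • a₀ then h.choose * z * h.choose⁻¹
    else if h : ∃ g : G, aᶜ = g • a₀ then h.choose * z⁻¹ * h.choose⁻¹ else 1
  have comm : ∀ g g' : G, g • a₀ = g' • a₀ → g * z * g⁻¹ = g' * z * g'⁻¹ := by
    intro g g' h
    have h1 := hz (g'⁻¹ * g) (by rw [mul_smul, h, inv_smul_smul])
    have h2 : g * z = g' * z * (g'⁻¹ * g) := by rw [mul_assoc g', h1]; group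
    rw [h2]
    group
  have comm' : ∀ g g' : G, g • a₀ = g' • a₀ → g * z⁻¹ * g⁻¹ = g' * z⁻¹ * g'⁻¹ := by
    intro g g' h
    have := congrArg (·⁻¹) (comm g g' h)
    simpa [mul_assoc] using this
  have hζ1 : ∀ g : G, ζ (g • a₀) = g * z * g⁻¹ := by
    intro g
    have h : ∃ g' : G, g • a₀ = g' • a₀ := ⟨g, rfl⟩
    change (if h : ∃ g' : G, g • a₀ = g' • a₀ then _ else _) = _
    rw [dif_pos h]
    exact (comm _ _ h.choose_spec).symm
  have hno : ∀ g g' : G, (g • a₀)ᶜ ≠ g' • a₀ := by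
    intro g g' h
    apply T.noinv (g⁻¹ * g') a₀ ha₀
    rw [mul_smul, ← h, Set.smul_set_compl, inv_smul_smul]
  have hζ2 : ∀ g : G, ζ (g • a₀)ᶜ = g * z⁻¹ * g⁻¹ := by
    intro g
    have h0 : ¬ ∃ g' : G, (g • a₀)ᶜ = g' • a₀ := by
      rintro ⟨g', h⟩
      exact hno g g' h
    have h : ∃ g' : G, ((g • a₀)ᶜ)ᶜ = g' • a₀ := ⟨g, _root_.compl_compl _⟩
    change (if h : ∃ g' : G, (g • a₀)ᶜ = g' • a₀ then _ else _) = _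
    rw [dif_neg h0, dif_pos h]
    exact (comm' _ _ ((_root_.compl_compl (g • a₀)).symm.trans h.choose_spec)).symm
  have hζ3 : ∀ a : Set V, (¬ ∃ g : G, a = g • a₀) → (¬ ∃ g : G, aᶜ = g • a₀) → ζ a = 1 := by
    intro a h1 h2
    change (if h : ∃ g' : G, a = g' • a₀ then _ else _) = _
    rw [dif_neg h1, dif_neg h2]
  have hcases : ∀ a : Set V, (∃ g : G, a = g • a₀) ∨ (∃ g : G, a = (g • a₀)ᶜ) ∨
      ((¬ ∃ g : G, a = g • a₀) ∧ (¬ ∃ g : G, aᶜ = g • a₀)) := by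
    intro a
    by_cases h1 : ∃ g : G, a = g • a₀
    · exact Or.inl h1
    · by_cases h2 : ∃ g : G, aᶜ = g • a₀
      · obtain ⟨g, hg⟩ := h2
        exact Or.inr (Or.inl ⟨g, by rw [← hg, _root_.compl_compl]⟩)
      · exact Or.inr (Or.inr ⟨h1, h2⟩)
  have hζc : ∀ a ∈ T.H, ζ aᶜ = (ζ a)⁻¹ := by
    intro a _
    rcases hcases a with ⟨g, rfl⟩ | ⟨g, rfl⟩ | ⟨h1, h2⟩
    · rw [hζ1, hζ2]; group
    · rw [_root_.compl_compl, hζ1, hζ2]; group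
    · rw [hζ3 a h1 h2, hζ3 aᶜ h2 (by simpa using h1), inv_one]
  have hζg : ∀ (g : G) (a : Set V), ζ (g • a) = g * ζ a * g⁻¹ := by
    intro g a
    rcases hcases a with ⟨k, rfl⟩ | ⟨k, rfl⟩ | ⟨h1, h2⟩
    · rw [← mul_smul, hζ1, hζ1]; group
    · rw [Set.smul_set_compl, ← mul_smul, hζ2, hζ2]; group
    · rw [hζ3 a h1 h2, hζ3 (g • a)]
      · group
      · rintro ⟨k, hk⟩
        exact h1 ⟨g⁻¹ * k, by rw [mul_smul, ← hk, inv_smul_smul]⟩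
      · rintro ⟨k, hk⟩
        exact h2 ⟨g⁻¹ * k, by rw [mul_smul, ← hk, Set.smul_set_compl, inv_smul_smul]⟩
  have hζs : ∀ a : Set V, ζ a • a ⊆ a := by
    intro a
    rcases hcases a with ⟨k, rfl⟩ | ⟨k, rfl⟩ | ⟨h1, h2⟩
    · rw [hζ1, ← mul_smul, inv_mul_cancel_right, mul_smul, Set.smul_set_subset_smul_set_iff]
      exact hza
    · rw [hζ2, Set.smul_set_compl, Set.compl_subset_compl, ← mul_smul, inv_mul_cancel_right,
        mul_smul, Set.smul_set_subset_smul_set_iff]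
      intro x hx
      rw [Set.mem_smul_set_iff_inv_smul_mem, inv_inv]
      exact hza (by rwa [Set.smul_mem_smul_set_iff])
    · rw [hζ3 a h1 h2, one_smul]
  obtain ⟨P, hP0, hP⟩ := T.exists_potential v0 ζ hζc
  have hPg : ∀ (g : G) (x : V), P (g • x) = P (g • v0) * g * P x * g⁻¹ := by
    intro g
    refine T.path_induction v0 ?_ ?_
    · rw [hP0]; group
    · intro x y a h hx
      rw [hP _ _ _ (h.smul g), hx, hP _ _ _ h, hζg]
      group
  let ψ : G →* G :=
    { toFun := fun g => P (g • v0) * g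
      map_one' := by simp [hP0]
      map_mul' := by
        intro g h
        rw [mul_smul, hPg g (h • v0)]
        group }
  have hψ : ∀ g, ψ g = P (g • v0) * g := fun g => rfl
  let F : V → V := fun x => P x • x
  have hF : ∀ g x, F (g • x) = ψ g • F x := by
    intro g x
    change P (g • x) • g • x = ψ g • P x • x
    rw [hPg, hψ]
    simp only [← mul_smul]
    congr 1
    group
  have claim : ∀ n x y a u, T.dist y u = n → T.Edge x y a → u ∈ a → F u ∈ P y • a := by
    intro n
    induction n using Nat.strong_induction_on with
    | _ n ih =>
      intro x y a u hn h hu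
      by_cases hyu : y = u
      · subst hyu
        change P y • y ∈ _
        rwa [Set.smul_mem_smul_set_iff]
      · obtain ⟨y', b, hb, hub⟩ := T.exists_step hyu
        have hne : y' ≠ x := by
          rintro rfl
          have := hb.unique_set h.symm
          rw [this] at hub
          exact hub hu
        have h1 := ih _ (hn ▸ hb.dist_lt hub) y y' b u rfl hb hub
        rw [hP _ _ _ hb, mul_smul] at h1
        have h2 : P y • ζ b • b ⊆ P y • a := by
          rw [Set.smul_set_subset_smul_set_iff]
          exact (hζs b).trans (h.chain hb hne)
        exact h2 h1
  have hF0 : F v0 = v0 := by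
    change P v0 • v0 = v0
    rw [hP0, one_smul]
  have claim0 : ∀ y a u, T.Edge v0 y a → u ∈ a → F u ∈ a := by
    intro y a u h hu
    have := claim _ v0 y a u rfl h hu
    rw [hP _ _ _ h, hP0, one_mul] at this
    exact hζs a this
  have hinj : Function.Injective ψ := by
    rw [injective_iff_map_eq_one]
    intro g hg
    by_cases hgv : v0 = g • v0
    · rw [hψ, ← hgv, hP0, one_mul] at hg
      exact hg
    · exfalso
      obtain ⟨y, a, h, ha⟩ := T.exists_step hgv
      have := claim0 y a _ h ha
      rw [hF, hg, one_smul, hF0] at this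
      exact h.2.1 this
  obtain ⟨g, hg⟩ := hco ψ hinj z⁻¹
  have hPw : P w = z := by
    rw [hP _ _ _ he0, hP0, one_mul]
    have := hζ1 1
    simpa using this
  have hFw : F (g • w) = w := by
    rw [hF, hg]
    change z⁻¹ • P w • w = w
    rw [hPw, inv_smul_smul]
  by_cases hx : g • w ∈ a₀
  · have h1 := claim _ v0 w a₀ _ rfl he0 hx
    rw [hFw, hPw] at h1
    exact hneq (he0.2.2.2 _ (T.smul_mem z _ ha₀) (fun h => he0.2.1 (hza h)) h1)
  · by_cases hxv : v0 = g • w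
    · rw [← hxv, hF0] at hFw
      rw [hFw] at he0
      exact he0.2.1 he0.2.2.1
    · obtain ⟨y, b, hb, hxb⟩ := T.exists_step hxv
      have h1 := claim0 y b _ hb hxb
      rw [hFw] at h1
      have := he0.2.2.2 b hb.1 hb.2.1 h1
      rw [this] at hxb
      exact hx hxb

end HTree
end TreePart

/-! ### Endomorphisms equivalent to the identity, acting on the tree -/

section TreePartB

open Pointwise

variable {G V : Type*} [Group G] [MulAction G V]

namespace HTree

variable {T : HTree G V}

/-- Stabilizer of a halfspace, as a set. -/
def stab (G : Type*) {V : Type*} [Group G] [MulAction G V] (a : Set V) : Set G := {g | g • a = a}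

theorem mem_stab {a : Set V} {g : G} : g ∈ stab G a ↔ g • a = a := Iff.rfl

theorem stab_compl (a : Set V) : stab G aᶜ = stab G a := by
  ext g
  rw [mem_stab, mem_stab, Set.smul_set_compl, compl_inj_iff]

theorem mem_stab_smul {a : Set V} {g h : G} : g ∈ stab G (h • a) ↔ h⁻¹ * g * h ∈ stab G a := by
  rw [mem_stab, mem_stab, mul_smul, mul_smul, inv_smul_eq_iff]

theorem ncard_stab_smul (h : G) (a : Set V) : (stab G (h • a)).ncard = (stab G a).ncard := by
  have : stab G (h • a) = (MulAut.conj h) '' stab G a := by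
    ext g
    rw [mem_stab_smul]
    constructor
    · intro hg
      exact ⟨_, hg, by simp [mul_assoc]⟩
    · rintro ⟨k, hk, rfl⟩
      simpa [mul_assoc] using hk
  rw [this, Set.ncard_image_of_injective _ (MulAut.conj h).injective]

theorem stab_smul_eq {a b : Set V} (h : G) (hab : stab G a = stab G b) :
    stab G (h • a) = stab G (h • b) := by
  ext g
  rw [mem_stab_smul, mem_stab_smul, hab]

theorem coHopf_norm (T : HTree G V)
    (hco : ∀ φ : G →* G, Function.Injective φ → Function.Surjective φ)
    {a : Set V} (ha : a ∈ T.H) (hfin : (stab G a).Finite) {z : G}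
    (hz : stab G (z • a) = stab G a) (hza : z • a ⊆ a) : z • a = a := by
  have hpow : ∀ n : ℕ, stab G (z ^ n • a) = stab G a := by
    intro n
    induction n with
    | zero => simp
    | succ n ih => rw [pow_succ', mul_smul, stab_smul_eq z ih, hz]
  have : Finite (stab G a) := hfin
  let f : ℕ → (stab G a → stab G a) := fun n c =>
    ⟨z ^ n * c * (z ^ n)⁻¹, by
      have h1 : z ^ n * (c : G) * (z ^ n)⁻¹ ∈ stab G (z ^ n • a) := by
        rw [mem_stab_smul]
        simp [mul_assoc]
      rwa [hpow n] at h1⟩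
  obtain ⟨i, j, hij, hf⟩ : ∃ i j, i < j ∧ f i = f j := by
    obtain ⟨i, j, hne, h⟩ := Finite.exists_ne_map_eq_of_infinite f
    rcases lt_or_gt_of_ne hne with h' | h'
    · exact ⟨i, j, h', h⟩
    · exact ⟨j, i, h', h.symm⟩
  obtain ⟨m, rfl⟩ : ∃ m, j = i + (m + 1) := ⟨j - i - 1, by omega⟩
  have hcomm : ∀ c : G, c • a = a → z ^ (m + 1) * c = c * z ^ (m + 1) := by
    intro c hc
    have h1 := congrArg Subtype.val (congrFun hf ⟨c, hc⟩)
    have h2 : z ^ i * c * (z ^ i)⁻¹ = z ^ (i + (m + 1)) * c * (z ^ (i + (m + 1)))⁻¹ := h1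
    rw [pow_add] at h2
    have h3 : c = z ^ (m + 1) * c * (z ^ (m + 1))⁻¹ := by
      have := congrArg (fun t => (z ^ i)⁻¹ * t * z ^ i) h2
      simpa [mul_assoc] using this
    conv_rhs => rw [h3]
    group
  have hsub : ∀ n : ℕ, z ^ n • a ⊆ a := by
    intro n
    induction n with
    | zero => simp
    | succ n ih =>
      rw [pow_succ', mul_smul]
      exact (Set.smul_set_mono ih).trans hza
  have h1 := T.coHopf_commute hco ha hcomm (hsub _)
  apply le_antisymm hza
  conv_lhs => rw [← h1]
  rw [pow_succ', mul_smul]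
  exact Set.smul_set_mono (hsub m)

/-- A halfspace which is disjoint from a translate by the centralizer of its stabilizer. -/
def Rooted (G : Type*) {V : Type*} [Group G] [MulAction G V] (a : Set V) : Prop :=
  ∃ z : G, (∀ c : G, c • a = a → z * c = c * z) ∧ ∀ x, x ∈ a → x ∉ z • a

theorem Rooted.compl
    (hco : ∀ φ : G →* G, Function.Injective φ → Function.Surjective φ)
    {a : Set V} (ha : a ∈ T.H) (h : Rooted G a) (h' : Rooted G aᶜ) : False := by
  obtain ⟨z, hz, hd⟩ := h
  obtain ⟨w, hw, hd'⟩ := h'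
  have h1 : z • a ⊆ aᶜ := fun x hx hxa => hd x hxa hx
  have h2 : w • aᶜ ⊆ a := by
    intro x hx
    by_contra hxa
    exact hd' x hxa hx
  have hw' : ∀ c : G, c • a = a → w * c = c * w := by
    intro c hc
    exact hw c (by rw [Set.smul_set_compl, hc])
  have h3 : (w * z) • a ⊆ w • aᶜ := by
    rw [mul_smul]
    exact Set.smul_set_mono h1
  have h4 := T.coHopf_commute hco ha (z := w * z) (by
    intro c hc
    rw [mul_assoc, hz c hc, ← mul_assoc, hw' c hc, mul_assoc]) (h3.trans h2)
  have h5 : w • aᶜ = a := le_antisymm h2 (by rwa [h4] at h3)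
  apply T.noinv w⁻¹ a ha
  rw [inv_smul_eq_iff, h5]

theorem rooted_unique
    (hco : ∀ φ : G →* G, Function.Injective φ → Function.Surjective φ)
    {e a d : Set V} (he : e ∈ T.H) (ha : a = e ∨ a = eᶜ) (hd : d = e ∨ d = eᶜ)
    (hra : Rooted G a) (hrd : Rooted G d) : a = d := by
  rcases ha with rfl | rfl <;> rcases hd with rfl | rfl
  · rfl
  · exact (hra.compl hco he hrd).elim
  · exact (hrd.compl hco he hra).elim
  · rfl

theorem Rooted.smul {a : Set V} (h : Rooted G a) (g : G) : Rooted G (g • a) := by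
  obtain ⟨z, hz, hd⟩ := h
  refine ⟨g * z * g⁻¹, ?_, ?_⟩
  · intro c hc
    have := hz (g⁻¹ * c * g) (mem_stab_smul.1 hc)
    have h2 := congrArg (fun t => g * t * g⁻¹) this
    simpa [mul_assoc] using h2
  · intro x hx hx'
    rw [← mul_smul, inv_mul_cancel_right, mul_smul, Set.mem_smul_set_iff_inv_smul_mem] at hx'
    rw [Set.mem_smul_set_iff_inv_smul_mem] at hx
    exact hd _ hx hx'

/-- The order on halfspaces: `b` is bigger than `e`. -/
def Prec (G : Type*) {V : Type*} [Group G] [MulAction G V] (b e : Set V) : Prop :=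
  (stab G e).ncard < (stab G b).ncard ∨ ((stab G e).ncard = (stab G b).ncard ∧
    ∃ (a d : Set V) (n : G), (a = e ∨ a = eᶜ) ∧ (d = b ∨ d = bᶜ) ∧ Rooted G a ∧ Rooted G d ∧
      a ⊆ n • d ∧ a ≠ n • d ∧ stab G a = stab G (n • d))

theorem prec_trans
    (hco : ∀ φ : G →* G, Function.Injective φ → Function.Surjective φ)
    {b e f : Set V} (he : e ∈ T.H) (h1 : Prec G b e) (h2 : Prec G e f) : Prec G b f := by
  rcases h1 with h1 | ⟨h1, a, d, n, ha, hd, hra, hrd, hs, hne, hst⟩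
  · rcases h2 with h2 | ⟨h2, _⟩
    · exact Or.inl (h2.trans h1)
    · exact Or.inl (h2 ▸ h1)
  · rcases h2 with h2 | ⟨h2, a', d', n', ha', hd', hra', hrd', hs', hne', hst'⟩
    · exact Or.inl (h1 ▸ h2)
    · refine Or.inr ⟨h2.trans h1, a', d, n' * n, ha', hd, hra', hrd, ?_, ?_, ?_⟩
      all_goals
        have := rooted_unique hco he ha hd' hra hrd'
        subst this
      · rw [mul_smul]
        exact hs'.trans (Set.smul_set_mono hs)
      · intro heq
        rw [mul_smul] at heq
        apply hne'
        apply le_antisymm hs'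
        rw [heq]
        exact Set.smul_set_mono hs
      · rw [mul_smul, hst', stab_smul_eq n' hst]

theorem prec_irrefl
    (hco : ∀ φ : G →* G, Function.Injective φ → Function.Surjective φ)
    {b : Set V} (hb : b ∈ T.H) (hfin : (stab G b).Finite) : ¬ Prec G b b := by
  rintro (h | ⟨-, a, d, n, ha, hd, hra, hrd, hs, hne, hst⟩)
  · exact lt_irrefl _ h
  · have := rooted_unique hco hb ha hd hra hrd
    subst this
    have haH : a ∈ T.H := by
      rcases ha with rfl | rfl
      · exact hb
      · exact T.compl_mem _ hb
    have hfin' : (stab G a).Finite := by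
      rcases ha with rfl | rfl
      · exact hfin
      · rwa [stab_compl]
    have h1 : n⁻¹ • a = a := by
      apply T.coHopf_norm hco haH hfin'
      · rw [stab_smul_eq n⁻¹ hst, inv_smul_smul]
      · have := Set.smul_set_mono (a := n⁻¹) hs
        rwa [inv_smul_smul] at this
    apply hne
    rw [inv_smul_eq_iff] at h1
    exact h1

theorem Prec.compl_left {b e : Set V} (h : Prec G b e) : Prec G bᶜ e := by
  rcases h with h | ⟨h1, a, d, n, ha, hd, hra, hrd, hs, hne, hst⟩
  · exact Or.inl (by rwa [stab_compl])
  · exact Or.inr ⟨by rwa [stab_compl], a, d, n, ha, by rw [_root_.compl_compl]; exact hd.symm,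
      hra, hrd, hs, hne, hst⟩

theorem Prec.compl_right {b e : Set V} (h : Prec G b e) : Prec G b eᶜ := by
  rcases h with h | ⟨h1, a, d, n, ha, hd, hra, hrd, hs, hne, hst⟩
  · exact Or.inl (by rwa [stab_compl])
  · exact Or.inr ⟨by rwa [stab_compl], a, d, n, by rw [_root_.compl_compl]; exact ha.symm, hd,
      hra, hrd, hs, hne, hst⟩

theorem Prec.smul_left {b e : Set V} (h : Prec G b e) (g : G) : Prec G (g • b) e := by
  rcases h with h | ⟨h1, a, d, n, ha, hd, hra, hrd, hs, hne, hst⟩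
  · exact Or.inl (by rwa [ncard_stab_smul])
  · have e1 : (n * g⁻¹) • g • d = n • d := by rw [← mul_smul, inv_mul_cancel_right]
    refine Or.inr ⟨by rwa [ncard_stab_smul], a, g • d, n * g⁻¹, ha, ?_, hra, hrd.smul g, ?_⟩
    · rcases hd with rfl | rfl
      · exact Or.inl rfl
      · exact Or.inr (Set.smul_set_compl)
    · rw [e1]
      exact ⟨hs, hne, hst⟩

theorem Prec.smul_right {b e : Set V} (h : Prec G b e) (g : G) : Prec G b (g • e) := by
  rcases h with h | ⟨h1, a, d, n, ha, hd, hra, hrd, hs, hne, hst⟩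
  · exact Or.inl (by rwa [ncard_stab_smul])
  · refine Or.inr ⟨by rwa [ncard_stab_smul], g • a, d, g * n, ?_, hd, hra.smul g, hrd, ?_⟩
    · rcases ha with rfl | rfl
      · exact Or.inl rfl
      · exact Or.inr (Set.smul_set_compl)
    · rw [mul_smul]
      exact ⟨Set.smul_set_mono hs, fun h => hne (smul_left_cancel g h), stab_smul_eq g hst⟩

theorem prec_smul_left {b e : Set V} (g : G) : Prec G (g • b) e ↔ Prec G b e :=
  ⟨fun h => by simpa using h.smul_left g⁻¹, fun h => h.smul_left g⟩

theorem prec_smul_right {b e : Set V} (g : G) : Prec G b (g • e) ↔ Prec G b e :=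
  ⟨fun h => by simpa using h.smul_right g⁻¹, fun h => h.smul_right g⟩

theorem prec_compl_left {b e : Set V} : Prec G bᶜ e ↔ Prec G b e :=
  ⟨fun h => by simpa using h.compl_left, fun h => h.compl_left⟩

theorem prec_compl_right {b e : Set V} : Prec G b eᶜ ↔ Prec G b e :=
  ⟨fun h => by simpa using h.compl_right, fun h => h.compl_right⟩

theorem stab_finite (hst : ∀ x : V, {g : G | g • x = x}.Finite) {a : Set V} (ha : a ∈ T.H) :
    (stab G a).Finite := by
  obtain ⟨x, y, h⟩ := exists_edge ha
  exact (hst x).subset (fun g hg => h.fix_left hg)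

theorem fix_of_sep (hst : ∀ x : V, {g : G | g • x = x}.Finite) {b : Set V} (hb : b ∈ T.H)
    {c : G} {u w : V} (hu : u ∉ b) (hw : w ∈ b) (hcu : c • u = u) (hcw : c • w = w) :
    c • b = b := by
  have hord : ∀ c : G, c • u = u → c • b ⊆ b → c • b = b := by
    intro c hcu hsub
    have hmem : ∀ n : ℕ, c ^ n ∈ {g : G | g • u = u} := by
      intro n
      induction n with
      | zero => simp
      | succ n ih =>
        change c ^ (n + 1) • u = u
        rw [pow_succ, mul_smul, hcu]
        exact ih
    have hfo : IsOfFinOrder c := by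
      by_contra hno
      have hinj := injective_pow_iff_not_isOfFinOrder.2 hno
      exact Set.infinite_range_of_injective hinj
        ((hst u).subset (by rintro _ ⟨n, rfl⟩; exact hmem n))
    obtain ⟨n, hn, hcn⟩ := isOfFinOrder_iff_pow_eq_one.1 hfo
    have hs : ∀ n : ℕ, c ^ n • b ⊆ b := by
      intro n
      induction n with
      | zero => simp
      | succ n ih =>
        rw [pow_succ', mul_smul]
        exact (Set.smul_set_mono ih).trans hsub
    apply le_antisymm hsub
    obtain ⟨m, rfl⟩ : ∃ m, n = m + 1 := ⟨n - 1, by omega⟩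
    have : b = c ^ (m + 1) • b := by rw [hcn, one_smul]
    conv_lhs => rw [this]
    rw [pow_succ', mul_smul]
    exact Set.smul_set_mono (hs m)
  have hu' : u ∉ c • b := by rwa [← hcu, Set.smul_mem_smul_set_iff]
  have hw' : w ∈ c • b := by rwa [← hcw, Set.smul_mem_smul_set_iff]
  rcases T.nested _ (T.smul_mem c b hb) b hb with q | q | q | q
  · exact hord c hcu q
  · have := hord c⁻¹ (by rw [inv_smul_eq_iff, hcu])
      (by have := Set.smul_set_mono (a := c⁻¹) q; rwa [inv_smul_smul] at this)
    rw [inv_smul_eq_iff] at this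
    exact this.symm
  · exact (q w hw' hw).elim
  · rcases q u with q | q
    · exact (hu' q).elim
    · exact (hu q).elim

theorem key_disj
    (hco : ∀ φ : G →* G, Function.Injective φ → Function.Surjective φ)
    (hst : ∀ x : V, {g : G | g • x = x}.Finite)
    {x y : V} {a : Set V} (h : T.Edge x y a) {z : G} (hz : ∀ c : G, c • a = a → z * c = c * z)
    (hd : ∀ u, u ∈ a → u ∉ z • a) {b : Set V} (hb : b ∈ T.H) (hxb : x ∉ b) (hyb : z • y ∈ b) :
    b = z • a ∨ Prec G b a := by
  by_cases hbz : b = z • a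
  · exact Or.inl hbz
  right
  obtain ⟨-, hxa, hya, huniq⟩ := id h
  have hz1 := h.smul z
  have hzx : z • x ∈ b := by
    by_contra hzx
    exact hbz (hz1.2.2.2 b hb hzx hyb)
  have hzya : z • y ∉ a := fun hh => hd _ hh hz1.2.2.1
  have hyb' : y ∉ b := by
    intro hyb'
    have := huniq b hb hxb hyb'
    rw [this] at hyb
    exact hzya hyb
  have hsub : z • a ⊆ b := by
    rcases T.nested b hb (z • a) hz1.1 with q | q | q | q
    · exact (hz1.2.1 (q hzx)).elim
    · exact q
    · exact (q _ hyb hz1.2.2.1).elim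
    · exfalso
      have hx : x ∈ z • a := (q x).resolve_left hxb
      exact T.noinv z a h.1 (h.symm.2.2.2 _ hz1.1 (hd y hya) hx)
  have hdab : ∀ u, u ∈ a → u ∉ b := by
    rcases T.nested a h.1 b hb with q | q | q | q
    · exact (hyb' (q hya)).elim
    · exact (hzya (q hyb)).elim
    · exact q
    · rcases q x with q | q
      · exact (hxa q).elim
      · exact (hxb q).elim
  have hstab : stab G a ⊆ stab G b := by
    intro c hc
    have hcy := h.fix_right hc
    refine fix_of_sep hst hb hxb hyb (h.fix_left hc) ?_
    rw [← mul_smul, ← hz c hc, mul_smul, hcy]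
  have hfb : (stab G b).Finite := stab_finite hst hb
  by_cases hcard : (stab G a).ncard < (stab G b).ncard
  · exact Or.inl hcard
  have heq : stab G a = stab G b := Set.eq_of_subset_of_ncard_le hstab (not_lt.1 hcard) hfb
  have hzb : ∀ c : G, c • b = b → z * c = c * z := by
    intro c hc
    apply hz
    have : c ∈ stab G b := hc
    rwa [← heq] at this
  have hzib : ∀ c : G, c • b = b → z⁻¹ * c = c * z⁻¹ := by
    intro c hc
    have := hzb c hc
    rw [inv_mul_eq_iff_eq_mul, ← mul_assoc, this, mul_inv_cancel_right]
  have hzib' : ∀ c : G, c • bᶜ = bᶜ → z⁻¹ * c = c * z⁻¹ := by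
    intro c hc
    apply hzib
    rwa [Set.smul_set_compl, compl_inj_iff] at hc
  have hra : Rooted G a := ⟨z, hz, hd⟩
  have hsub' : a ⊆ z⁻¹ • b := by
    have := Set.smul_set_mono (a := z⁻¹) hsub
    rwa [inv_smul_smul] at this
  have hzne : z⁻¹ • b ≠ b := by
    intro hh
    rw [hh] at hsub'
    exact hyb' (hsub' hya)
  refine Or.inr ⟨by rw [heq], ?_⟩
  rcases T.nested _ (T.smul_mem z⁻¹ b hb) b hb with q | q | q | q
  · exact (hzne (T.coHopf_commute hco hb hzib q)).elim
  · have h1 : z • b ⊆ b := by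
      have := Set.smul_set_mono (a := z) q
      rwa [smul_inv_smul] at this
    have h2 := T.coHopf_commute hco hb hzb h1
    exact (hzne (by rw [inv_smul_eq_iff, h2])).elim
  · refine ⟨a, b, z⁻¹, Or.inl rfl, Or.inl rfl, hra, ⟨z⁻¹, hzib, fun u hu hu' => q u hu' hu⟩,
      hsub', ?_, ?_⟩
    · intro hh
      apply hbz
      rw [hh, smul_inv_smul]
    · rw [heq]
      ext c
      rw [mem_stab_smul, inv_inv]
      constructor
      · intro hc
        rwa [hzb c hc, mul_inv_cancel_right]
      · intro hc
        have h1 := hzb _ hc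
        have h2 : z * c * z⁻¹ = c := by
          have := congrArg (fun t => z⁻¹ * t) h1
          simp only [mul_assoc] at this
          simp at this
          rw [← mul_assoc] at this
          exact this
        rwa [h2] at hc
  · refine ⟨a, bᶜ, 1, Or.inl rfl, Or.inr rfl, hra, ⟨z⁻¹, hzib', ?_⟩, ?_, ?_, ?_⟩
    · intro u hu hu'
      rw [Set.smul_set_compl] at hu'
      rcases q u with q | q
      · exact hu' q
      · exact hu q
    · rw [one_smul]
      exact hdab
    · rw [one_smul]
      intro hh
      rw [hh] at hxa
      exact hxa hxb
    · rw [one_smul, stab_compl, heq]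

/-- The image edge: the distinguished halfspace separating the images of the endpoints. -/
def Special (T : HTree G V) (F : V → V) (x y : V) (a B : Set V) : Prop :=
  B ∈ T.H ∧ F x ∉ B ∧ F y ∈ B ∧ ¬ Prec G B a ∧
    ∀ b ∈ T.H, F x ∉ b → F y ∈ b → b = B ∨ Prec G b a

theorem Special.unique {F : V → V} {x y : V} {a B B' : Set V} (h : T.Special F x y a B)
    (h' : T.Special F x y a B') : B = B' :=
  (h'.2.2.2.2 B h.1 h.2.1 h.2.2.1).resolve_right h.2.2.2.1

theorem Special.symm {F : V → V} {x y : V} {a B : Set V} (h : T.Special F x y a B) :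
    T.Special F y x aᶜ Bᶜ := by
  obtain ⟨h1, h2, h3, h4, h5⟩ := h
  refine ⟨T.compl_mem _ h1, by simpa using h3, by simpa using h2, ?_, ?_⟩
  · rwa [prec_compl_left, prec_compl_right]
  · intro b hb hy hx
    rcases h5 bᶜ (T.compl_mem b hb) (by simpa using hx) (by simpa using hy) with h | h
    · exact Or.inl (by rw [← h, _root_.compl_compl])
    · rw [prec_compl_left] at h
      exact Or.inr h.compl_right

theorem Special.smul {F : V → V} {φ : G →* G} (hF : ∀ h x, F (h • x) = φ h • F x)
    {x y : V} {a B : Set V} (h : T.Special F x y a B) (g : G) :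
    T.Special F (g • x) (g • y) (g • a) (φ g • B) := by
  obtain ⟨h1, h2, h3, h4, h5⟩ := h
  refine ⟨T.smul_mem _ _ h1, ?_, ?_, ?_, ?_⟩
  · rwa [hF, Set.smul_mem_smul_set_iff]
  · rwa [hF, Set.smul_mem_smul_set_iff]
  · rwa [prec_smul_left, prec_smul_right]
  · intro b hb hx hy
    rw [hF] at hx hy
    rcases h5 ((φ g)⁻¹ • b) (T.smul_mem _ b hb)
      (by rwa [Set.mem_smul_set_iff_inv_smul_mem, inv_inv])
      (by rwa [Set.mem_smul_set_iff_inv_smul_mem, inv_inv]) with h | h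
    · exact Or.inl (by rw [← h, smul_inv_smul])
    · rw [prec_smul_left] at h
      exact Or.inr (h.smul_right g)

theorem exists_special
    (hco : ∀ φ : G →* G, Function.Injective φ → Function.Surjective φ)
    (hst : ∀ x : V, {g : G | g • x = x}.Finite) (φ : G →* G) (P : V → G)
    (hP1 : ∀ x h, h • x = x → φ h = P x * h * (P x)⁻¹)
    {x y : V} {a : Set V} (h : T.Edge x y a) :
    ∃ g : G, T.Special (fun x => P x • x) x y a (g • a) ∧
      ∀ c : G, c • a = a → φ c = g * c * g⁻¹ := by
  obtain ⟨z, hzdef⟩ : ∃ z, z = (P x)⁻¹ * P y := ⟨_, rfl⟩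
  have hPy : P y = P x * z := by rw [hzdef]; group
  have hcx : ∀ c : G, c • a = a → φ c = P x * c * (P x)⁻¹ :=
    fun c hc => hP1 x c (h.fix_left hc)
  have hcy : ∀ c : G, c • a = a → φ c = P y * c * (P y)⁻¹ :=
    fun c hc => hP1 y c (h.fix_right hc)
  have hz : ∀ c : G, c • a = a → z * c = c * z := by
    intro c hc
    have h1 := (hcx c hc).symm.trans (hcy c hc)
    rw [hPy] at h1
    have h2 := congrArg (fun t => (P x)⁻¹ * t * (P x) * z) h1
    simp [mul_assoc] at h2
    exact h2.symm
  have hzi : ∀ c : G, c • a = a → z⁻¹ * c = c * z⁻¹ := by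
    intro c hc
    have := hz c hc
    rw [inv_mul_eq_iff_eq_mul, ← mul_assoc, this, mul_inv_cancel_right]
  have hirr : ∀ g : G, ¬ Prec G (g • a) a := by
    intro g
    rw [prec_smul_left]
    exact prec_irrefl hco h.1 (stab_finite hst h.1)
  obtain ⟨k, hk, hkx, hky, hkb⟩ : ∃ k : G, (k = 1 ∨ k = z) ∧ x ∉ k • a ∧ z • y ∈ k • a ∧
      ∀ b ∈ T.H, x ∉ b → z • y ∈ b → b = k • a ∨ Prec G b a := by
    have heqcase : z • a = a → ∃ k : G, (k = 1 ∨ k = z) ∧ x ∉ k • a ∧ z • y ∈ k • a ∧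
      ∀ b ∈ T.H, x ∉ b → z • y ∈ b → b = k • a ∨ Prec G b a := by
      intro hza
      refine ⟨1, Or.inl rfl, ?_⟩
      rw [h.fix_right hza, one_smul]
      exact ⟨h.2.1, h.2.2.1, fun b hb h1 h2 => Or.inl (h.2.2.2 b hb h1 h2)⟩
    rcases T.nested _ (T.smul_mem z a h.1) a h.1 with q | q | q | q
    · exact heqcase (T.coHopf_commute hco h.1 hz q)
    · have h1 : z⁻¹ • a ⊆ a := by
        have := Set.smul_set_mono (a := z⁻¹) q
        rwa [inv_smul_smul] at this
      have h2 := T.coHopf_commute hco h.1 hzi h1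
      exact heqcase (by rw [inv_smul_eq_iff] at h2; exact h2.symm)
    · refine ⟨z, Or.inr rfl, ?_, ?_, ?_⟩
      · intro hx
        exact T.noinv z a h.1
          (h.symm.2.2.2 _ (T.smul_mem z a h.1) (fun hh => q y hh h.2.2.1) hx)
      · rw [Set.smul_mem_smul_set_iff]
        exact h.2.2.1
      · intro b hb h1 h2
        exact key_disj hco hst h hz (fun u hu hu' => q u hu' hu) hb h1 h2
    · refine ⟨1, Or.inl rfl, ?_, ?_, ?_⟩
      · rw [one_smul]
        exact h.2.1
      · rw [one_smul]
        by_contra hzy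
        have hzx : z • x ∈ a := by
          rcases q (z • x) with q | q
          · rw [Set.smul_mem_smul_set_iff] at q
            exact (h.2.1 q).elim
          · exact q
        have := (h.smul z).symm.2.2.2 a h.1 hzy hzx
        exact T.noinv z a h.1 (by conv_rhs => rw [this, _root_.compl_compl])
      · intro b hb h1 h2
        have hb' : z⁻¹ • bᶜ ∈ T.H := T.smul_mem _ _ (T.compl_mem b hb)
        have k1 : ∀ u, u ∈ aᶜ → u ∉ z⁻¹ • aᶜ := by
          intro u hu hu'
          rw [Set.mem_smul_set_iff_inv_smul_mem, inv_inv] at hu'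
          rcases q (z • u) with q | q
          · rw [Set.smul_mem_smul_set_iff] at q
            exact hu q
          · exact hu' q
        have k2 : y ∉ z⁻¹ • bᶜ := by
          rw [Set.mem_smul_set_iff_inv_smul_mem, inv_inv]
          simpa using h2
        have k3 : z⁻¹ • x ∈ z⁻¹ • bᶜ := by
          rw [Set.smul_mem_smul_set_iff]
          exact h1
        have k4 : ∀ c : G, c • aᶜ = aᶜ → z⁻¹ * c = c * z⁻¹ := by
          intro c hc
          rw [Set.smul_set_compl, compl_inj_iff] at hc
          exact hzi c hc
        rcases key_disj hco hst h.symm k4 k1 hb' k2 k3 with h' | h'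
        · left
          rw [one_smul]
          exact compl_inj_iff.1 (smul_left_cancel _ h')
        · right
          rwa [prec_smul_left, prec_compl_left, prec_compl_right] at h'
  refine ⟨P x * k, ⟨T.smul_mem _ _ h.1, ?_, ?_, hirr _, ?_⟩, ?_⟩
  · rw [mul_smul, Set.smul_mem_smul_set_iff]
    exact hkx
  · change P y • y ∈ _
    rw [hPy, mul_smul, mul_smul, Set.smul_mem_smul_set_iff]
    exact hky
  · intro b hb h1 h2
    change P x • x ∉ b at h1
    change P y • y ∈ b at h2
    rw [hPy, mul_smul] at h2
    rcases hkb ((P x)⁻¹ • b) (T.smul_mem _ b hb)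
      (by rwa [Set.mem_smul_set_iff_inv_smul_mem, inv_inv])
      (by rwa [Set.mem_smul_set_iff_inv_smul_mem, inv_inv]) with h' | h'
    · left
      rw [mul_smul, ← h', smul_inv_smul]
    · rw [prec_smul_left] at h'
      exact Or.inr h'
  · rcases hk with rfl | rfl
    · rw [mul_one]
      exact hcx
    · rw [← hPy]
      exact hcy

/-- Reduced paths exist. -/
theorem exists_path (T : HTree G V) (y : V) : ∀ (n : ℕ) (x : V), T.dist x y = n →
    ∃ (l : ℕ) (p : ℕ → V) (e : ℕ → Set V), p 0 = x ∧ p l = y ∧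
      (∀ i < l, T.Edge (p i) (p (i + 1)) (e i)) ∧ (∀ i < l, y ∈ e i) ∧
      (∀ i, i + 1 < l → p (i + 2) ≠ p i) := by
  intro n
  induction n using Nat.strong_induction_on with
  | _ n ih =>
    intro x hx
    by_cases hxy : x = y
    · exact ⟨0, fun _ => x, fun _ => ∅, rfl, hxy, by simp, by simp, by simp⟩
    obtain ⟨x', a, ha, hya⟩ := T.exists_step hxy
    obtain ⟨l, p, e, h1, h2, h3, h4, h5⟩ := ih _ (hx ▸ ha.dist_lt hya) x' rfl
    refine ⟨l + 1, fun i => Nat.casesOn i x p, fun i => Nat.casesOn i a e, rfl, h2, ?_, ?_, ?_⟩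
    · rintro (_ | i) hi
      · change T.Edge x (p 0) a
        rwa [h1]
      · exact h3 i (by omega)
    · rintro (_ | i) hi
      · exact hya
      · exact h4 i (by omega)
    · rintro (_ | i) hi
      · change p 1 ≠ x
        intro hh
        have h6 := h3 0 (by omega)
        rw [h1] at h6
        simp only [zero_add] at h6
        rw [hh] at h6
        have := h6.unique_set ha.symm
        have h7 := h4 0 (by omega)
        rw [this] at h7
        exact h7 hya
      · exact h5 i (by omega)

theorem exists_conjugators (φ : G →* G)
    (hst : ∀ x : V, {g : G | g • x = x}.Finite)
    (hφ : ∀ H : Subgroup G, (H : Set G).Finite → ∃ g' : G, ∀ h ∈ H, h = g' * φ h * g'⁻¹) :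
    ∃ P : V → G, (∀ x h, h • x = x → φ h = P x * h * (P x)⁻¹) ∧
      ∀ h x, P (h • x) = φ h * P x * h⁻¹ := by
  have hQ : ∀ x : V, ∃ q : G, ∀ h : G, h • x = x → φ h = q * h * q⁻¹ := by
    intro x
    obtain ⟨g, hg⟩ := hφ (MulAction.stabilizer G x) (hst x)
    refine ⟨g⁻¹, fun h hh => ?_⟩
    have := hg h hh
    conv_rhs => rw [this]
    group
  choose Q hQ using hQ
  let rep : V → V := fun x => (Quotient.mk (MulAction.orbitRel G V) x).out
  have hrep : ∀ x, ∃ h : G, h • rep x = x := by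
    intro x
    have h1 : MulAction.orbitRel G V (rep x) x := Quotient.mk_out (s := MulAction.orbitRel G V) x
    have h2 := (MulAction.orbitRel G V).symm h1
    exact MulAction.orbitRel_apply.1 h2
  choose k hk using hrep
  have hrepg : ∀ (h : G) x, rep (h • x) = rep x := by
    intro h x
    have : Quotient.mk (MulAction.orbitRel G V) (h • x) = Quotient.mk _ x := by
      apply Quotient.sound
      change MulAction.orbitRel G V _ _
      rw [MulAction.orbitRel_apply]
      exact ⟨h, rfl⟩
    change Quotient.out _ = Quotient.out _
    rw [this]
  let P : V → G := fun x => φ (k x) * Q (rep x) * (k x)⁻¹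
  have hP2 : ∀ h x, P (h • x) = φ h * P x * h⁻¹ := by
    intro h x
    change φ (k (h • x)) * Q (rep (h • x)) * (k (h • x))⁻¹ =
      φ h * (φ (k x) * Q (rep x) * (k x)⁻¹) * h⁻¹
    rw [hrepg]
    obtain ⟨s, hs⟩ : ∃ s, s = (k (h • x))⁻¹ * h * k x := ⟨_, rfl⟩
    have hsr : s • rep x = rep x := by
      have h1 := hk (h • x)
      rw [hrepg] at h1
      rw [hs, mul_smul, mul_smul, hk, inv_smul_eq_iff, h1]
    have h2 := hQ _ _ hsr
    have h3 : h = k (h • x) * s * (k x)⁻¹ := by rw [hs]; group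
    have h4 : φ h = φ (k (h • x)) * φ s * (φ (k x))⁻¹ := by
      conv_lhs => rw [h3]
      simp
    have h5 : h⁻¹ = k x * s⁻¹ * (k (h • x))⁻¹ := by rw [hs]; group
    rw [h4, h5, h2]
    group
  refine ⟨P, ?_, hP2⟩
  intro x h hh
  have := hP2 h x
  rw [hh] at this
  have h2 := congrArg (fun t => t * h * (P x)⁻¹) this
  simpa [mul_assoc] using h2.symm

theorem injective_of_equiv (T : HTree G V) (v : V)
    (hco : ∀ φ : G →* G, Function.Injective φ → Function.Surjective φ)
    (hst : ∀ x : V, {g : G | g • x = x}.Finite) (φ : G →* G)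
    (hφ : ∀ H : Subgroup G, (H : Set G).Finite → ∃ g' : G, ∀ h ∈ H, h = g' * φ h * g'⁻¹) :
    Function.Injective φ := by
  obtain ⟨P, hP1, hP2⟩ := exists_conjugators (V := V) φ hst hφ
  obtain ⟨F, hFdef⟩ : ∃ F : V → V, F = fun x => P x • x := ⟨_, rfl⟩
  have hF : ∀ h x, F (h • x) = φ h • F x := by
    intro h x
    simp only [hFdef]
    rw [hP2]
    simp [mul_smul]
  have hsp : ∀ {x y : V} {a : Set V}, T.Edge x y a → ∃ g : G, T.Special F x y a (g • a) ∧
      ∀ c : G, c • a = a → φ c = g * c * g⁻¹ := by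
    intro x y a h
    rw [hFdef]
    exact exists_special hco hst φ P hP1 h
  have hfix : ∀ (k : G) (x : V), k • x = x → φ k = 1 → k = 1 := by
    intro k x hk h1
    have := hP1 x k hk
    rw [h1] at this
    have h2 := congrArg (fun t => (P x)⁻¹ * t * P x) this
    simpa [mul_assoc] using h2.symm
  have main : ∀ (n : ℕ) (p : ℕ → V) (e : ℕ → Set V),
      (∀ i < n, T.Edge (p i) (p (i + 1)) (e i)) → (∀ i, i + 1 < n → p (i + 2) ≠ p i) →
      F (p 0) = F (p n) → n = 0 := by
    intro n
    induction n using Nat.strong_induction_on with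
    | _ n ih =>
      intro p e he hr h0n
      by_contra hn
      have hG : ∀ i, ∃ g : G, i < n → T.Special F (p i) (p (i + 1)) (e i) (g • e i) ∧
          ∀ c : G, c • e i = e i → φ c = g * c * g⁻¹ := by
        intro i
        by_cases hi : i < n
        · obtain ⟨g, hg⟩ := hsp (he i hi)
          exact ⟨g, fun _ => hg⟩
        · exact ⟨1, fun h => absurd h hi⟩
      choose gg hgg using hG
      -- opposite image edges are impossible
      have hopp : ∀ i j, i < j → j < n → gg j • e j = (gg i • e i)ᶜ → False := by
        intro i j hij hj heq
        have hi : i < n := hij.trans hj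
        obtain ⟨hsi, hci⟩ := hgg i hi
        obtain ⟨hsj, hcj⟩ := hgg j hj
        obtain ⟨h, hh⟩ : ∃ h, h = (gg j)⁻¹ * gg i := ⟨_, rfl⟩
        have hhe : h • e i = (e j)ᶜ := by
          rw [hh, mul_smul, inv_smul_eq_iff, Set.smul_set_compl, heq, _root_.compl_compl]
        have he1 := (he i hi).smul h
        rw [hhe] at he1
        have hpi : h • p i = p (j + 1) := he1.unique_left (he j hj).symm
        have hpi1 : h • p (i + 1) = p j := he1.unique_right (he j hj).symm
        have hs1 := hsi.smul hF h
        rw [hhe, hpi, hpi1] at hs1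
        have hs2 := hsj.symm
        rw [heq, _root_.compl_compl] at hs2
        have hs3 := hs1.unique hs2
        obtain ⟨c, hc⟩ : ∃ c, c = (gg i)⁻¹ * φ h * gg i := ⟨_, rfl⟩
        have hce : c • e i = e i := by
          rw [hc, mul_smul, mul_smul, hs3, inv_smul_smul]
        have hφc : φ c = φ h := by
          rw [hci c hce, hc]
          group
        have hcp : c • p i = p i := (he i hi).fix_left hce
        have hcp1 : c • p (i + 1) = p (i + 1) := (he i hi).fix_right hce
        obtain ⟨k, hk⟩ : ∃ k, k = h * c⁻¹ := ⟨_, rfl⟩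
        have hφk : φ k = 1 := by
          rw [hk, map_mul, map_inv, hφc, mul_inv_cancel]
        have hkp : k • p i = p (j + 1) := by
          rw [hk, mul_smul, inv_smul_eq_iff.2 hcp.symm, hpi]
        have hkp1 : k • p (i + 1) = p j := by
          rw [hk, mul_smul, inv_smul_eq_iff.2 hcp1.symm, hpi1]
        have hFF : F (p (i + 1)) = F (p j) := by
          rw [← hkp1, hF, hφk, one_smul]
        have hlen : j - (i + 1) = 0 := by
          apply ih (j - (i + 1)) (by omega) (fun t => p (i + 1 + t)) (fun t => e (i + 1 + t))
          · intro t ht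
            exact he (i + 1 + t) (by omega)
          · intro t ht
            exact hr (i + 1 + t) (by omega)
          · change F (p (i + 1 + 0)) = F (p (i + 1 + (j - (i + 1))))
            rw [Nat.add_zero, Nat.add_sub_cancel' (by omega), hFF]
        have hji : j = i + 1 := by omega
        subst hji
        have hk1 := hfix k _ hkp1 hφk
        rw [hk1, one_smul] at hkp
        exact hr i hj hkp.symm
      -- choose a maximal edge
      obtain ⟨m, hm, hmax⟩ : ∃ m, m < n ∧ ∀ i < n, ¬ Prec G (e m) (e i) := by
        let r : Fin n → Fin n → Prop := fun i j => Prec G (e j) (e i)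
        have : IsTrans (Fin n) r := ⟨fun i j k h1 h2 => prec_trans hco (he j j.2).1 h2 h1⟩
        have : Std.Irrefl r :=
          ⟨fun i => prec_irrefl hco (he i i.2).1 (stab_finite hst (he i i.2).1)⟩
        have wf : WellFounded r := Finite.wellFounded_of_trans_of_irrefl r
        obtain ⟨m, -, hm⟩ := wf.has_min Set.univ ⟨⟨0, by omega⟩, trivial⟩
        exact ⟨m, m.2, fun i hi => hm ⟨i, hi⟩ trivial⟩
      obtain ⟨hsm, -⟩ := hgg m hm
      obtain ⟨j, hj, hj1, hj2⟩ : ∃ j, j < n ∧ F (p j) ∈ gg m • e m ∧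
          F (p (j + 1)) ∉ gg m • e m := by
        by_contra hcon
        push Not at hcon
        have hup : ∀ d, m + 1 + d ≤ n → F (p (m + 1 + d)) ∈ gg m • e m := by
          intro d
          induction d with
          | zero => intro _; exact hsm.2.2.1
          | succ d ihd => intro hd; exact hcon (m + 1 + d) (by omega) (ihd (by omega))
        have hn' := hup (n - (m + 1)) (by omega)
        rw [Nat.add_sub_cancel' (by omega), ← h0n] at hn'
        have hup2 : ∀ d, d ≤ n → F (p d) ∈ gg m • e m := by
          intro d
          induction d with
          | zero => intro _; exact hn'
          | succ d ihd => intro hd; exact hcon _ (by omega) (ihd (by omega))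
        exact hsm.2.1 (hup2 m hm.le)
      have heq : (gg m • e m)ᶜ = gg j • e j := by
        refine ((hgg j hj).1.2.2.2.2 _ (T.compl_mem _ hsm.1) (by simpa using hj1)
          (by simpa using hj2)).resolve_right ?_
        rw [prec_compl_left, prec_smul_left]
        exact hmax j hj
      rcases lt_trichotomy m j with h | h | h
      · exact hopp m j h hj heq.symm
      · subst h
        exact hsm.2.1 hj1
      · exact hopp j m h hm (by rw [← heq, _root_.compl_compl])
  rw [injective_iff_map_eq_one]
  intro k hk
  obtain ⟨l, p, e, h1, h2, h3, -, h5⟩ := T.exists_path (k • v) _ v rfl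
  have h6 : F (p 0) = F (p l) := by
    rw [h1, h2, hF, hk, one_smul]
  have h7 := main l p e h3 h5 h6
  subst h7
  exact hfix k v (h2.symm.trans h1) hk

end HTree
end TreePartB

/-! ### Nested families of minimal cuts -/

section Cuts

open Pointwise

namespace Cuts

variable {X : Type*}

/-- Oriented edges leaving `A`. -/
def bd (E : X → X → Prop) (A : Set X) : Set (X × X) := {p | E p.1 p.2 ∧ p.1 ∈ A ∧ p.2 ∉ A}

/-- `A` separates two ultrafilters. -/
def Sep (α β : Ultrafilter X) (A : Set X) : Prop := A ∈ α ∧ A ∉ β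

/-- `A` is a minimal cut between two ultrafilters. -/
def IsMin (E : X → X → Prop) (α β : Ultrafilter X) (A : Set X) : Prop :=
  Sep α β A ∧ (bd E A).Finite ∧
    ∀ B, Sep α β B → (bd E B).Finite → (bd E A).ncard ≤ (bd E B).ncard

/-- All minimal cuts of bounded size. -/
def MM (E : X → X → Prop) (K : ℕ) : Set (Set X) :=
  {A | (bd E A).ncard ≤ K ∧ ∃ α β, IsMin E α β A}

/-- The four corners are nonempty. -/
def Cross (A D : Set X) : Prop :=
  (∃ x, x ∈ A ∧ x ∈ D) ∧ (∃ x, x ∈ A ∧ x ∉ D) ∧ (∃ x, x ∉ A ∧ x ∈ D) ∧ (∃ x, x ∉ A ∧ x ∉ D)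

/-- Minimal cuts crossing `A`. -/
def Cr (E : X → X → Prop) (K : ℕ) (A : Set X) : Set (Set X) := {D | D ∈ MM E K ∧ Cross A D}

/-- The optimal cuts. -/
def EE (E : X → X → Prop) (K : ℕ) : Set (Set X) :=
  {A | (bd E A).ncard ≤ K ∧ ∃ α β, IsMin E α β A ∧
    ∀ B, IsMin E α β B → (Cr E K A).ncard ≤ (Cr E K B).ncard}

variable {E : X → X → Prop} {K : ℕ}

theorem bd_compl (hs : ∀ x y, E x y → E y x) (A : Set X) : bd E Aᶜ = Prod.swap '' bd E A := by
  ext ⟨x, y⟩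
  simp only [bd, Set.mem_ofPred_eq, Set.mem_compl_iff, not_not, Set.mem_image, Prod.exists,
    Prod.swap_prod_mk, Prod.mk.injEq]
  constructor
  · rintro ⟨h1, h2, h3⟩
    exact ⟨y, x, ⟨hs _ _ h1, h3, h2⟩, rfl, rfl⟩
  · rintro ⟨a, b, ⟨h1, h2, h3⟩, rfl, rfl⟩
    exact ⟨hs _ _ h1, h3, h2⟩

theorem bd_compl_finite (hs : ∀ x y, E x y → E y x) {A : Set X} (h : (bd E A).Finite) :
    (bd E Aᶜ).Finite := by
  rw [bd_compl hs]
  exact h.image _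

theorem bd_compl_ncard (hs : ∀ x y, E x y → E y x) (A : Set X) :
    (bd E Aᶜ).ncard = (bd E A).ncard := by
  rw [bd_compl hs, Set.ncard_image_of_injective _ Prod.swap_injective]

theorem cross_compl {A D : Set X} : Cross Aᶜ D ↔ Cross A D := by
  simp only [Cross, Set.mem_compl_iff, not_not]
  tauto

theorem cross_compl_right {A D : Set X} : Cross A Dᶜ ↔ Cross A D := by
  simp only [Cross, Set.mem_compl_iff, not_not]
  tauto

theorem cross_comm {A D : Set X} : Cross A D ↔ Cross D A := by
  simp only [Cross]
  constructor
  · rintro ⟨⟨x, hx⟩, ⟨y, hy⟩, ⟨z, hz⟩, ⟨w, hw⟩⟩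
    exact ⟨⟨x, hx.symm⟩, ⟨z, hz.symm⟩, ⟨y, hy.symm⟩, ⟨w, hw.symm⟩⟩
  · rintro ⟨⟨x, hx⟩, ⟨y, hy⟩, ⟨z, hz⟩, ⟨w, hw⟩⟩
    exact ⟨⟨x, hx.symm⟩, ⟨z, hz.symm⟩, ⟨y, hy.symm⟩, ⟨w, hw.symm⟩⟩

theorem cr_compl (A : Set X) : Cr E K Aᶜ = Cr E K A := by
  ext D
  simp only [Cr, Set.mem_ofPred_eq, cross_compl]

theorem sep_compl {α β : Ultrafilter X} {A : Set X} : Sep α β Aᶜ ↔ Sep β α A := by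
  simp only [Sep, Ultrafilter.compl_mem_iff_notMem, not_not]
  tauto

theorem IsMin.compl (hs : ∀ x y, E x y → E y x) {α β : Ultrafilter X} {A : Set X}
    (h : IsMin E α β A) : IsMin E β α Aᶜ := by
  obtain ⟨h1, h2, h3⟩ := h
  refine ⟨sep_compl.2 h1, bd_compl_finite hs h2, ?_⟩
  intro B hB hf
  have := h3 Bᶜ (sep_compl.2 hB) (bd_compl_finite hs hf)
  rw [bd_compl_ncard hs] at this ⊢
  exact this

theorem MM_compl (hs : ∀ x y, E x y → E y x) {A : Set X} (h : A ∈ MM E K) : Aᶜ ∈ MM E K := by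
  obtain ⟨h1, α, β, h2⟩ := h
  exact ⟨by rwa [bd_compl_ncard hs], β, α, h2.compl hs⟩

theorem EE_compl (hs : ∀ x y, E x y → E y x) {A : Set X} (h : A ∈ EE E K) : Aᶜ ∈ EE E K := by
  obtain ⟨h1, α, β, h2, h3⟩ := h
  refine ⟨by rwa [bd_compl_ncard hs], β, α, h2.compl hs, ?_⟩
  intro B hB
  have := h3 Bᶜ (hB.compl hs)
  rwa [cr_compl] at this ⊢

/-- Connectedness of subsets. -/
def Conn (E : X → X → Prop) (D : Set X) : Prop :=
  ∀ C, C ⊆ D → C.Nonempty → C ≠ D → ∃ u ∈ C, ∃ v ∈ D, v ∉ C ∧ E u v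

theorem IsMin.conn (hc : ∀ C : Set X, C.Nonempty → C ≠ Set.univ → (bd E C).Nonempty)
    (hs : ∀ x y, E x y → E y x) {α β : Ultrafilter X} {A : Set X} (h : IsMin E α β A) :
    Conn E A := by
  obtain ⟨⟨hα, hβ⟩, hf, hm⟩ := h
  -- no subset in `α` with a union of components
  have key : ∀ C, C ⊆ A → C ∈ α → (A \ C).Nonempty →
      (∀ u ∈ C, ∀ v ∈ A \ C, ¬ E u v) → False := by
    intro C hC hCα hne hno
    have hCβ : C ∉ β := fun hh => hβ (Filter.mem_of_superset hh hC)
    have hsub : bd E C ⊆ bd E A := by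
      rintro ⟨u, v⟩ ⟨h1, h2, h3⟩
      refine ⟨h1, hC h2, fun hv => hno u h2 v ⟨hv, h3⟩ h1⟩
    have hle := hm C ⟨hCα, hCβ⟩ (hf.subset hsub)
    have heq := Set.eq_of_subset_of_ncard_le hsub hle hf
    obtain ⟨⟨u, v⟩, h1, h2, h3⟩ := hc (A \ C) hne (by
      intro hh
      have : C = ∅ := by
        ext x
        have : x ∈ A \ C := by rw [hh]; trivial
        simp [this.2]
      rw [this] at hCα
      exact Ultrafilter.empty_notMem hCα)
    simp only at h1 h2 h3
    have hvA : v ∉ A := by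
      intro hvA
      have hvC : v ∈ C := by
        by_contra hvC
        exact h3 ⟨hvA, hvC⟩
      exact hno v hvC u h2 (hs _ _ h1)
    have : (u, v) ∈ bd E C := by
      rw [heq]
      exact ⟨h1, h2.1, hvA⟩
    exact h2.2 this.2.1
  intro C hC hne hCA
  by_contra hno
  push Not at hno
  have hne' : (A \ C).Nonempty := by
    rw [Set.nonempty_iff_ne_empty]
    intro hh
    exact hCA (le_antisymm hC (Set.sdiff_eq_empty.1 hh))
  by_cases hCα : C ∈ α
  · exact key C hC hCα hne' (fun u hu v hv => hno u hu v hv.1 hv.2)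
  · have h1 : A \ C ∈ α := Filter.inter_mem hα (Ultrafilter.compl_mem_iff_notMem.2 hCα)
    refine key (A \ C) Set.sdiff_subset h1 ?_ ?_
    · rwa [Set.sdiff_sdiff_cancel_left hC]
    · intro u hu v hv huv
      rw [Set.sdiff_sdiff_cancel_left hC] at hv
      exact hno v hv u hu.1 hu.2 (hs _ _ huv)

/-- A path meets the boundary of every set separating its endpoints. -/
theorem exists_darts {R : X → X → Prop} {x y : X} (h : Relation.ReflTransGen R x y) :
    ∃ W : Set (X × X), W.Finite ∧ (∀ p ∈ W, R p.1 p.2) ∧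
      ∀ D : Set X, x ∈ D → y ∉ D → ∃ p ∈ W, p.1 ∈ D ∧ p.2 ∉ D := by
  induction h with
  | refl => exact ⟨∅, Set.finite_empty, by simp, fun D h1 h2 => (h2 h1).elim⟩
  | @tail b c _ hbc ih =>
    obtain ⟨W, h1, h2, h3⟩ := ih
    refine ⟨insert (b, c) W, h1.insert _, ?_, ?_⟩
    · rintro p (rfl | hp)
      · exact hbc
      · exact h2 p hp
    · intro D hx hc
      by_cases hb : b ∈ D
      · exact ⟨(b, c), Set.mem_insert _ _, hb, hc⟩
      · obtain ⟨p, hp, hp'⟩ := h3 D hx hb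
        exact ⟨p, Set.mem_insert_of_mem _ hp, hp'⟩

theorem comp_eq (hs : ∀ x y, E x y → E y x) {x y : X} {S : Set (X × X)} {D : Set X}
    (hxy : ¬ Relation.ReflTransGen (fun u v => E u v ∧ (u, v) ∉ S ∧ (v, u) ∉ S) x y)
    (h1 : Conn E D) (h2 : Conn E Dᶜ) (hx : x ∈ D) (hy : y ∉ D) (hS : S ⊆ bd E D) :
    D = {u | Relation.ReflTransGen (fun u v => E u v ∧ (u, v) ∉ S ∧ (v, u) ∉ S) x u} := by
  have hsymm : ∀ u v, Relation.ReflTransGen (fun u v => E u v ∧ (u, v) ∉ S ∧ (v, u) ∉ S) u v →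
      Relation.ReflTransGen (fun u v => E u v ∧ (u, v) ∉ S ∧ (v, u) ∉ S) v u := by
    intro u v h
    induction h with
    | refl => exact Relation.ReflTransGen.refl
    | tail _ h ih => exact Relation.ReflTransGen.head ⟨hs _ _ h.1, h.2.2, h.2.1⟩ ih
  have hcomp : ∀ (B : Set X) (w : X), Conn E B → w ∈ B →
      (∀ u v, u ∈ B → v ∈ B → (u, v) ∉ S) →
      ∀ u ∈ B, Relation.ReflTransGen (fun u v => E u v ∧ (u, v) ∉ S ∧ (v, u) ∉ S) w u := by
    intro B w hB hw hBS
    by_contra hcon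
    push Not at hcon
    obtain ⟨t, htB, ht⟩ := hcon
    obtain ⟨u, hu, v, hv, hvC, huv⟩ := hB
      {u | u ∈ B ∧ Relation.ReflTransGen (fun u v => E u v ∧ (u, v) ∉ S ∧ (v, u) ∉ S) w u}
      (fun u hu => hu.1) ⟨w, hw, Relation.ReflTransGen.refl⟩
      (by intro hh; rw [← hh] at htB; exact ht htB.2)
    exact hvC ⟨hv, hu.2.tail ⟨huv, hBS _ _ hu.1 hv, hBS _ _ hv hu.1⟩⟩
  ext u
  constructor
  · exact hcomp D x h1 hx (fun u v _ hv huv => (hS huv).2.2 hv) u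
  · intro hu
    by_contra huD
    have := hcomp Dᶜ y h2 hy (fun u v hu _ huv => hu (hS huv).2.1) u huD
    exact hxy (Relation.ReflTransGen.trans hu (hsymm _ _ this))

theorem finite_sep_aux (hs : ∀ x y, E x y → E y x) (x y : X) :
    ∀ (k : ℕ) (S : Set (X × X)), S.Finite →
    {D : Set X | Conn E D ∧ Conn E Dᶜ ∧ x ∈ D ∧ y ∉ D ∧ S ⊆ bd E D ∧ (bd E D).Finite ∧
      (bd E D).ncard ≤ S.ncard + k}.Finite := by
  intro k
  induction k with
  | zero =>
    intro S hS
    by_cases hxy : Relation.ReflTransGen (fun u v => E u v ∧ (u, v) ∉ S ∧ (v, u) ∉ S) x y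
    · obtain ⟨W, -, hW2, hW3⟩ := exists_darts hxy
      convert Set.finite_empty
      rw [Set.eq_empty_iff_forall_notMem]
      rintro D ⟨h1, h2, hx, hy, h3, h4, h5⟩
      obtain ⟨p, hp, hp1, hp2⟩ := hW3 D hx hy
      have := Set.eq_of_subset_of_ncard_le h3 (by simpa using h5) h4
      apply (hW2 p hp).2.1
      rw [this]
      exact ⟨(hW2 p hp).1, hp1, hp2⟩
    · refine (Set.finite_singleton {u | Relation.ReflTransGen
        (fun u v => E u v ∧ (u, v) ∉ S ∧ (v, u) ∉ S) x u}).subset ?_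
      rintro D ⟨h1, h2, hx, hy, h3, -⟩
      exact comp_eq hs hxy h1 h2 hx hy h3
  | succ k ih =>
    intro S hS
    by_cases hxy : Relation.ReflTransGen (fun u v => E u v ∧ (u, v) ∉ S ∧ (v, u) ∉ S) x y
    · obtain ⟨W, hW1, hW2, hW3⟩ := exists_darts hxy
      refine (Set.Finite.biUnion hW1 (fun p _ => ih (insert p S) (hS.insert p))).subset ?_
      rintro D ⟨h1, h2, hx, hy, h3, h4, h5⟩
      obtain ⟨p, hp, hp1, hp2⟩ := hW3 D hx hy
      rw [Set.mem_iUnion₂]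
      refine ⟨p, hp, h1, h2, hx, hy, ?_, h4, ?_⟩
      · exact Set.insert_subset ⟨(hW2 p hp).1, hp1, hp2⟩ h3
      · rw [Set.ncard_insert_of_notMem (hW2 p hp).2.1 hS]
        omega
    · refine (Set.finite_singleton {u | Relation.ReflTransGen
        (fun u v => E u v ∧ (u, v) ∉ S ∧ (v, u) ∉ S) x u}).subset ?_
      rintro D ⟨h1, h2, hx, hy, h3, -⟩
      exact comp_eq hs hxy h1 h2 hx hy h3

theorem finite_sep (hc : ∀ C : Set X, C.Nonempty → C ≠ Set.univ → (bd E C).Nonempty)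
    (hs : ∀ x y, E x y → E y x) (x y : X) : {D | D ∈ MM E K ∧ x ∈ D ∧ y ∉ D}.Finite := by
  refine (finite_sep_aux hs x y K ∅ Set.finite_empty).subset ?_
  rintro D ⟨⟨h1, α, β, h2⟩, hx, hy⟩
  exact ⟨h2.conn hc hs, (h2.compl hs).conn hc hs, hx, hy, Set.empty_subset _, h2.2.1,
    by simpa using h1⟩

theorem Conn.exists_bd {D A : Set X} (h : Conn E D) (h1 : ∃ x, x ∈ A ∧ x ∈ D)
    (h2 : ∃ x, x ∉ A ∧ x ∈ D) : ∃ p ∈ bd E A, p.1 ∈ D := by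
  obtain ⟨x, hxA, hxD⟩ := h1
  obtain ⟨y, hyA, hyD⟩ := h2
  obtain ⟨u, hu, v, hv, hvC, huv⟩ := h (D ∩ A) Set.inter_subset_left ⟨x, hxD, hxA⟩ (by
    intro hh
    rw [← hh] at hyD
    exact hyA hyD.2)
  exact ⟨(u, v), ⟨huv, hu.2, fun hvA => hvC ⟨hv, hvA⟩⟩, hu.1⟩

theorem cr_finite (hc : ∀ C : Set X, C.Nonempty → C ≠ Set.univ → (bd E C).Nonempty)
    (hs : ∀ x y, E x y → E y x) {A : Set X} (hA : (bd E A).Finite) : (Cr E K A).Finite := by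
  refine (Set.Finite.biUnion hA (fun p _ => Set.Finite.biUnion hA
    (fun q _ => finite_sep (K := K) hc hs p.1 q.1))).subset ?_
  rintro D ⟨hD, c1, c2, c3, c4⟩
  obtain ⟨-, α, β, h2⟩ := id hD
  obtain ⟨p, hp, hpD⟩ := (h2.conn hc hs).exists_bd c1 c3
  obtain ⟨q, hq, hqD⟩ := ((h2.compl hs).conn hc hs).exists_bd c2 c4
  rw [Set.mem_iUnion₂]
  refine ⟨p, hp, ?_⟩
  rw [Set.mem_iUnion₂]
  exact ⟨q, hq, hD, hpD, hqD⟩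

theorem ncard_submod {Y : Type*} {S T A B : Set Y} (hA : A.Finite) (hB : B.Finite)
    (h1 : S ∪ T ⊆ A ∪ B) (h2 : S ∩ T ⊆ A ∩ B) : S.ncard + T.ncard ≤ A.ncard + B.ncard := by
  have hf := hA.union hB
  have hS : S.Finite := hf.subset (Set.subset_union_left.trans h1)
  have hT : T.Finite := hf.subset (Set.subset_union_right.trans h1)
  have e1 := Set.ncard_union_add_ncard_inter S T hS hT
  have e2 := Set.ncard_union_add_ncard_inter A B hA hB
  have e3 := Set.ncard_le_ncard h1 hf
  have e4 := Set.ncard_le_ncard h2 (hA.inter_of_left B)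
  omega

theorem ncard_submod_lt {Y : Type*} {S T A B : Set Y} (hA : A.Finite) (hB : B.Finite)
    (h1 : S ∪ T ⊂ A ∪ B) (h2 : S ∩ T ⊆ A ∩ B) : S.ncard + T.ncard < A.ncard + B.ncard := by
  have hf := hA.union hB
  have hS : S.Finite := hf.subset (Set.subset_union_left.trans h1.1)
  have hT : T.Finite := hf.subset (Set.subset_union_right.trans h1.1)
  have e1 := Set.ncard_union_add_ncard_inter S T hS hT
  have e2 := Set.ncard_union_add_ncard_inter A B hA hB
  have e3 := Set.ncard_lt_ncard h1 hf
  have e4 := Set.ncard_le_ncard h2 (hA.inter_of_left B)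
  omega

theorem bd_inter_union_subset (A B : Set X) :
    bd E (A ∩ B) ∪ bd E (A ∪ B) ⊆ bd E A ∪ bd E B := by
  rintro ⟨u, v⟩ h
  simp only [bd, Set.mem_union, Set.mem_inter_iff, Set.mem_ofPred_eq] at h ⊢
  tauto

theorem bd_submod {A B : Set X} (hA : (bd E A).Finite) (hB : (bd E B).Finite) :
    (bd E (A ∩ B)).ncard + (bd E (A ∪ B)).ncard ≤ (bd E A).ncard + (bd E B).ncard := by
  refine ncard_submod hA hB (bd_inter_union_subset A B) ?_
  rintro ⟨u, v⟩ h
  simp only [bd, Set.mem_union, Set.mem_inter_iff, Set.mem_ofPred_eq] at h ⊢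
  tauto

theorem cross_inter {A B D : Set X} (hAB : Cross A B) (h : Cross (A ∩ B) D) :
    Cross A D ∨ Cross B D := by
  obtain ⟨⟨x1, a1, b1⟩, ⟨x2, a2, b2⟩, ⟨x3, a3, b3⟩, ⟨x4, a4, b4⟩⟩ := h
  obtain ⟨-, -, -, ⟨w, w1, w2⟩⟩ := hAB
  by_contra hcon
  rw [not_or] at hcon
  obtain ⟨n1, n2⟩ := hcon
  have m1 : (∀ x, x ∉ A → x ∉ D) ∨ (∀ x, x ∉ A → x ∈ D) := by
    by_contra hh
    push Not at hh
    exact n1 ⟨⟨x1, a1.1, b1⟩, ⟨x2, a2.1, b2⟩, hh.1, hh.2⟩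
  have m2 : (∀ x, x ∉ B → x ∉ D) ∨ (∀ x, x ∉ B → x ∈ D) := by
    by_contra hh
    push Not at hh
    exact n2 ⟨⟨x1, a1.2, b1⟩, ⟨x2, a2.2, b2⟩, hh.1, hh.2⟩
  rcases m1 with m1 | m1 <;> rcases m2 with m2 | m2
  · apply a3
    constructor
    · by_contra hh
      exact m1 _ hh b3
    · by_contra hh
      exact m2 _ hh b3
  · exact m1 _ w1 (m2 _ w2)
  · exact m2 _ w2 (m1 _ w1)
  · apply a4
    constructor
    · by_contra hh
      exact b4 (m1 _ hh)
    · by_contra hh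
      exact b4 (m2 _ hh)

theorem cross_union {A B D : Set X} (hAB : Cross A B) (h : Cross (A ∪ B) D) :
    Cross A D ∨ Cross B D := by
  have h1 : Cross (Aᶜ ∩ Bᶜ) D := by
    rwa [← Set.compl_union, cross_compl]
  have h2 := cross_inter (by rwa [cross_compl, cross_compl_right]) h1
  rwa [cross_compl, cross_compl] at h2

theorem cr_submod (hc : ∀ C : Set X, C.Nonempty → C ≠ Set.univ → (bd E C).Nonempty)
    (hs : ∀ x y, E x y → E y x) {A B : Set X} (hA : (bd E A).Finite) (hB : (bd E B).Finite)
    (hAM : A ∈ MM E K) (hAB : Cross A B) :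
    (Cr E K (A ∩ B)).ncard + (Cr E K (A ∪ B)).ncard < (Cr E K A).ncard + (Cr E K B).ncard := by
  refine ncard_submod_lt (cr_finite hc hs hA) (cr_finite hc hs hB) ⟨?_, ?_⟩ ?_
  · rintro D (⟨hD, h⟩ | ⟨hD, h⟩)
    · exact (cross_inter hAB h).imp (fun h => ⟨hD, h⟩) (fun h => ⟨hD, h⟩)
    · exact (cross_union hAB h).imp (fun h => ⟨hD, h⟩) (fun h => ⟨hD, h⟩)
  · intro hh
    have : A ∈ Cr E K (A ∩ B) ∪ Cr E K (A ∪ B) := hh (Or.inr ⟨hAM, cross_comm.1 hAB⟩)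
    rcases this with ⟨-, -, ⟨x, hx, hx'⟩, -⟩ | ⟨-, -, -, ⟨x, hx, hx'⟩, -⟩
    · exact hx' hx.1
    · exact hx (Or.inl hx')
  · rintro D ⟨⟨hD, ⟨x1, a1, b1⟩, ⟨x2, a2, b2⟩, -, -⟩, ⟨-, -, -, ⟨x3, a3, b3⟩, ⟨x4, a4, b4⟩⟩⟩
    exact ⟨⟨hD, ⟨x1, a1.1, b1⟩, ⟨x2, a2.1, b2⟩, ⟨x3, fun h => a3 (Or.inl h), b3⟩,
        ⟨x4, fun h => a4 (Or.inl h), b4⟩⟩,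
      ⟨hD, ⟨x1, a1.2, b1⟩, ⟨x2, a2.2, b2⟩, ⟨x3, fun h => a3 (Or.inr h), b3⟩,
        ⟨x4, fun h => a4 (Or.inr h), b4⟩⟩⟩

theorem EE_subset_MM : EE E K ⊆ MM E K := by
  rintro A ⟨h1, α, β, h2, -⟩
  exact ⟨h1, α, β, h2⟩

/-- Optimal cuts do not cross. -/
theorem EE_not_cross (hc : ∀ C : Set X, C.Nonempty → C ≠ Set.univ → (bd E C).Nonempty)
    (hs : ∀ x y, E x y → E y x) {A B : Set X} (hA : A ∈ EE E K) (hB : B ∈ EE E K) :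
    ¬ Cross A B := by
  intro hAB
  have hAM := EE_subset_MM hA
  obtain ⟨-, α, β, ⟨sA, fA, mA⟩, oA⟩ := hA
  obtain ⟨-, γ, δ, ⟨sB, fB, mB⟩, oB⟩ := hB
  obtain ⟨N, hN⟩ : ∃ N, N = (Cr E K A).ncard + (Cr E K B).ncard + 1 := ⟨_, rfl⟩
  obtain ⟨w, hw⟩ : ∃ w : Set X → ℕ, ∀ C, w C = N * (bd E C).ncard + (Cr E K C).ncard :=
    ⟨_, fun C => rfl⟩
  have wc : ∀ C, w Cᶜ = w C := by
    intro C
    rw [hw, hw, bd_compl_ncard hs, cr_compl]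
  have wmin : ∀ (α β : Ultrafilter X) (A : Set X), Sep α β A → (bd E A).Finite →
      (∀ B, Sep α β B → (bd E B).Finite → (bd E A).ncard ≤ (bd E B).ncard) →
      (∀ B, IsMin E α β B → (Cr E K A).ncard ≤ (Cr E K B).ncard) → (Cr E K A).ncard ≤ N →
      ∀ C, Sep α β C → (bd E C).Finite → w A ≤ w C := by
    intro α β A sA fA mA oA hAN C sC fC
    rw [hw, hw]
    have h1 := mA C sC fC
    rcases h1.eq_or_lt with h2 | h2
    · have := oA C ⟨sC, fC, fun B sB fB => h2 ▸ mA B sB fB⟩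
      rw [h2]
      omega
    · have h3 : N * ((bd E A).ncard + 1) ≤ N * (bd E C).ncard := Nat.mul_le_mul_left _ h2
      rw [mul_add, mul_one] at h3
      omega
  have wA := wmin α β A sA fA mA oA (by omega)
  have wB := wmin γ δ B sB fB mB oB (by omega)
  have wA' : ∀ C, Sep β α C → (bd E C).Finite → w A ≤ w C := by
    intro C h1 h2
    rw [← wc C]
    exact wA _ (sep_compl.2 h1) (bd_compl_finite hs h2)
  have wB' : ∀ C, Sep δ γ C → (bd E C).Finite → w B ≤ w C := by
    intro C h1 h2
    rw [← wc C]
    exact wB _ (sep_compl.2 h1) (bd_compl_finite hs h2)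
  have fBc := bd_compl_finite hs fB
  have sub : ∀ B, (bd E B).Finite → Cross A B →
      w (A ∩ B) + w (A ∪ B) < w A + w B ∧ (bd E (A ∩ B)).Finite ∧ (bd E (A ∪ B)).Finite := by
    intro B fB hAB
    have h1 := bd_submod fA fB
    have h2 := cr_submod hc hs fA fB hAM hAB
    have h3 := Nat.mul_le_mul_left N h1
    rw [mul_add, mul_add] at h3
    refine ⟨?_, ?_, ?_⟩
    · rw [hw, hw, hw, hw]
      omega
    · exact (fA.union fB).subset (Set.subset_union_left.trans (bd_inter_union_subset A B))
    · exact (fA.union fB).subset (Set.subset_union_right.trans (bd_inter_union_subset A B))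
  obtain ⟨i1, f1, f2⟩ := sub B fB hAB
  obtain ⟨i2, f3, f4⟩ := sub Bᶜ fBc (cross_compl_right.2 hAB)
  rw [wc B] at i2
  have hint : ∀ (u : Ultrafilter X) (s t : Set X), s ∩ t ∈ u ↔ s ∈ u ∧ t ∈ u :=
    fun u s t => Filter.inter_mem_iff
  have a1 := fun h => wA _ h f1
  have a2 := fun h => wA _ h f2
  have a3 := fun h => wA _ h f3
  have a4 := fun h => wA _ h f4
  have b1 := fun h => wB _ h f1
  have b2 := fun h => wB _ h f2
  have b3 := fun h => wB' _ h f3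
  have b4 := fun h => wB' _ h f4
  simp only [Sep, hint, Ultrafilter.union_mem_iff,
    Ultrafilter.compl_mem_iff_notMem] at a1 a2 a3 a4 b1 b2 b3 b4 sA sB
  obtain ⟨sA1, sA2⟩ := sA
  obtain ⟨sB1, sB2⟩ := sB
  simp only [sA1, sA2, sB1, sB2, true_and, true_or, false_and, false_or, not_false_eq_true,
    and_true, not_true_eq_false, or_false, not_not, or_true, and_false] at a1 a2 a3 a4 b1 b2 b3 b4
  by_cases p : B ∈ α <;> by_cases q : B ∈ β <;> by_cases r : A ∈ γ <;> by_cases s : A ∈ δ <;>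
    simp only [p, q, r, s, true_imp_iff, false_imp_iff, not_true_eq_false,
      not_false_eq_true, forall_true_left, forall_false] at a1 a2 a3 a4 b1 b2 b3 b4 <;> omega

end Cuts
end Cuts

/-! ### Existence and invariance of optimal cuts -/

section CutsTwo

open Pointwise

namespace Cuts

variable {X : Type*} {E : X → X → Prop} {K : ℕ}

theorem exists_EE {α β : Ultrafilter X} {A₀ : Set X} (h0 : Sep α β A₀) (hf : (bd E A₀).Finite)
    (hK : (bd E A₀).ncard ≤ K) : ∃ A ∈ EE E K, Sep α β A := by
  have h1 : ∃ A, Sep α β A ∧ (bd E A).Finite ∧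
      ∀ B, (Sep α β B ∧ (bd E B).Finite) → (bd E A).ncard ≤ (bd E B).ncard := by
    obtain ⟨A, hA, hm⟩ := (InvImage.wf (fun A : Set X => (bd E A).ncard)
      (Nat.lt_wfRel.wf)).has_min {A | Sep α β A ∧ (bd E A).Finite} ⟨A₀, h0, hf⟩
    refine ⟨A, hA.1, hA.2, fun B hB => ?_⟩
    exact not_lt.1 (hm B hB)
  obtain ⟨A₁, s1, f1, m1⟩ := h1
  have hm1 : IsMin E α β A₁ := ⟨s1, f1, fun B hB hB' => m1 B ⟨hB, hB'⟩⟩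
  obtain ⟨A, hA, hm⟩ := (InvImage.wf (fun A : Set X => (Cr E K A).ncard)
      (Nat.lt_wfRel.wf)).has_min {A | IsMin E α β A} ⟨A₁, hm1⟩
  refine ⟨A, ⟨(hA.2.2 A₀ h0 hf).trans hK, α, β, hA, fun B hB => not_lt.1 (hm B hB)⟩, hA.1⟩

variable {G : Type*} [Group G] [MulAction G X]

theorem bd_smul (hE : ∀ (g : G) x y, E x y → E (g • x) (g • y)) (g : G) (A : Set X) :
    bd E (g • A) = (fun p : X × X => g • p) '' bd E A := by
  ext ⟨x, y⟩
  constructor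
  · rintro ⟨h1, h2, h3⟩
    refine ⟨(g⁻¹ • x, g⁻¹ • y), ⟨hE _ _ _ h1, ?_, ?_⟩, by simp⟩
    · exact Set.mem_smul_set_iff_inv_smul_mem.1 h2
    · exact fun h => h3 (Set.mem_smul_set_iff_inv_smul_mem.2 h)
  · rintro ⟨⟨x', y'⟩, ⟨h1, h2, h3⟩, h4⟩
    obtain ⟨rfl, rfl⟩ := Prod.ext_iff.1 h4
    exact ⟨hE _ _ _ h1, Set.smul_mem_smul_set h2,
      fun h => h3 (Set.smul_mem_smul_set_iff.1 h)⟩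

theorem bd_smul_finite (hE : ∀ (g : G) x y, E x y → E (g • x) (g • y)) (g : G) {A : Set X}
    (h : (bd E A).Finite) : (bd E (g • A)).Finite := by
  rw [bd_smul hE]; exact h.image _

theorem bd_smul_ncard (hE : ∀ (g : G) x y, E x y → E (g • x) (g • y)) (g : G) (A : Set X) :
    (bd E (g • A)).ncard = (bd E A).ncard := by
  rw [bd_smul hE]; exact Set.ncard_image_of_injective _ (MulAction.injective g)

theorem sep_smul (g : G) {α β : Ultrafilter X} {B : Set X} :
    Sep (α.map (fun x => g • x)) (β.map (fun x => g • x)) B ↔ Sep α β (g⁻¹ • B) := by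
  unfold Sep
  rw [Ultrafilter.mem_map, Ultrafilter.mem_map, Set.preimage_smul]

theorem IsMin.smul (hE : ∀ (g : G) x y, E x y → E (g • x) (g • y)) (g : G)
    {α β : Ultrafilter X} {A : Set X} (h : IsMin E α β A) :
    IsMin E (α.map (fun x => g • x)) (β.map (fun x => g • x)) (g • A) := by
  refine ⟨sep_smul g |>.2 (by simpa using h.1), bd_smul_finite hE g h.2.1, ?_⟩
  intro B hB hf
  rw [bd_smul_ncard hE, ← bd_smul_ncard hE g⁻¹ B]
  exact h.2.2 _ ((sep_smul g).1 hB) (bd_smul_finite hE _ hf)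

theorem IsMin.of_map (hE : ∀ (g : G) x y, E x y → E (g • x) (g • y)) (g : G)
    {α β : Ultrafilter X} {A : Set X}
    (h : IsMin E (α.map (fun x => g • x)) (β.map (fun x => g • x)) A) :
    IsMin E α β (g⁻¹ • A) := by
  refine ⟨(sep_smul g).1 h.1, bd_smul_finite hE _ h.2.1, ?_⟩
  intro B hB hf
  rw [bd_smul_ncard hE, ← bd_smul_ncard hE g B]
  exact h.2.2 _ ((sep_smul g).2 (by simpa using hB)) (bd_smul_finite hE _ hf)

theorem MM_smul (hE : ∀ (g : G) x y, E x y → E (g • x) (g • y)) (g : G) {A : Set X}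
    (h : A ∈ MM E K) : g • A ∈ MM E K := by
  obtain ⟨h1, α, β, h2⟩ := h
  exact ⟨by rwa [bd_smul_ncard hE], _, _, h2.smul hE g⟩

theorem Cross.smul (g : G) {A B : Set X} (h : Cross A B) : Cross (g • A) (g • B) := by
  obtain ⟨⟨a, ha⟩, ⟨b, hb⟩, ⟨c, hc⟩, ⟨d, hd⟩⟩ := h
  exact ⟨⟨g • a, by simpa using ha⟩, ⟨g • b, by simpa using hb⟩, ⟨g • c, by simpa using hc⟩,
    ⟨g • d, by simpa using hd⟩⟩

theorem cr_smul_ncard (hE : ∀ (g : G) x y, E x y → E (g • x) (g • y)) (g : G) (A : Set X) :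
    (Cr E K (g • A)).ncard = (Cr E K A).ncard := by
  have : Cr E K (g • A) = (fun D : Set X => g • D) '' Cr E K A := by
    ext D
    constructor
    · rintro ⟨h1, h2⟩
      refine ⟨g⁻¹ • D, ⟨MM_smul hE _ h1, ?_⟩, by simp⟩
      simpa using h2.smul g⁻¹
    · rintro ⟨D', ⟨h1, h2⟩, rfl⟩
      exact ⟨MM_smul hE _ h1, h2.smul g⟩
  rw [this]
  exact Set.ncard_image_of_injective _ (MulAction.injective g)

theorem EE_smul (hE : ∀ (g : G) x y, E x y → E (g • x) (g • y)) (g : G) {A : Set X}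
    (h : A ∈ EE E K) : g • A ∈ EE E K := by
  obtain ⟨h1, α, β, h2, h3⟩ := h
  refine ⟨by rwa [bd_smul_ncard hE], _, _, h2.smul hE g, ?_⟩
  intro B hB
  rw [cr_smul_ncard hE, ← cr_smul_ncard hE g⁻¹ B]
  exact h3 _ (hB.of_map hE)

theorem EE_nonempty {A : Set X} (h : A ∈ EE E K) : A.Nonempty := by
  obtain ⟨h1, α, β, h2, h3⟩ := h
  exact Ultrafilter.nonempty_of_mem h2.1.1

theorem EE_ne_univ {A : Set X} (h : A ∈ EE E K) : A ≠ Set.univ := by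
  obtain ⟨h1, α, β, h2, h3⟩ := h
  rintro rfl
  exact h2.1.2 Filter.univ_mem

end Cuts

/-! ### Cuts in a Cayley graph -/

namespace Cuts

variable {G : Type*} [Group G]

/-- The Cayley graph relation. -/
def Cay (S : Set G) (x y : G) : Prop := x⁻¹ * y ∈ S

variable {S : Set G} {K : ℕ}

theorem Cay_symm (hS : ∀ s ∈ S, s⁻¹ ∈ S) : ∀ x y, Cay S x y → Cay S y x := by
  intro x y h
  have := hS _ h
  simpa [Cay] using this

theorem Cay_smul : ∀ (g : G) x y, Cay S x y → Cay S (g • x) (g • y) := by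
  intro g x y h
  simpa [Cay, mul_assoc] using h

theorem Cay_conn (hg : Subgroup.closure S = ⊤) (hS : ∀ s ∈ S, s⁻¹ ∈ S) :
    ∀ C : Set G, C.Nonempty → C ≠ Set.univ → (bd (Cay S) C).Nonempty := by
  intro C ⟨x, hx⟩ hC
  by_contra hne
  rw [Set.not_nonempty_iff_eq_empty] at hne
  apply hC
  have key : ∀ g ∈ Subgroup.closure S, ∀ x, x ∈ C ↔ x * g ∈ C := by
    intro g hg
    have hfor : ∀ s ∈ S, ∀ x, x ∈ C → x * s ∈ C := by
      intro s hs x hx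
      by_contra hx2
      have : (x, x * s) ∈ bd (Cay S) C := ⟨by simpa [Cay] using hs, hx, hx2⟩
      rw [hne] at this
      exact this
    induction hg using Subgroup.closure_induction with
    | mem s hs =>
      intro x
      refine ⟨hfor s hs x, fun h => ?_⟩
      simpa using hfor _ (hS s hs) _ h
    | one => simp
    | mul a b _ _ ha hb => intro x; rw [ha x, hb, mul_assoc]
    | inv a _ ha => intro x; rw [ha (x * a⁻¹)]; simp
  ext y
  refine ⟨fun _ => trivial, fun _ => ?_⟩
  have := (key (x⁻¹ * y) (by rw [hg]; trivial) x).1 hx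
  simpa using this

theorem almost_inv (hSf : S.Finite) (hg : Subgroup.closure S = ⊤) (hS : ∀ s ∈ S, s⁻¹ ∈ S)
    {A : Set G} (hA : (bd (Cay S) A).Finite) (g : G) : {x | ¬ (x ∈ A ↔ x * g ∈ A)}.Finite := by
  have hg' : g ∈ Subgroup.closure S := by rw [hg]; trivial
  induction hg' using Subgroup.closure_induction with
  | mem s hs =>
    refine ((hA.image Prod.fst).union ((bd_compl_finite (Cay_symm hS) hA).image Prod.fst)).subset ?_
    intro x hx
    by_cases hxA : x ∈ A
    · left
      refine ⟨(x, x * s), ⟨by simpa [Cay] using hs, hxA, ?_⟩, rfl⟩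
      intro h; exact hx ⟨fun _ => h, fun _ => hxA⟩
    · right
      refine ⟨(x, x * s), ⟨by simpa [Cay] using hs, hxA, ?_⟩, rfl⟩
      intro h; exact hx ⟨fun h' => absurd h' hxA, fun h' => absurd h' h⟩
  | one => simp
  | mul a b _ _ ha hb =>
    refine (ha.union (hb.preimage (f := fun x => x * a) (fun x _ y _ h => mul_right_cancel h))).subset ?_
    intro x hx
    by_contra hcon
    apply hx
    simp only [Set.mem_union, Set.mem_preimage, Set.mem_ofPred_eq, not_or, not_not] at hcon
    rw [hcon.1, hcon.2, mul_assoc]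
  | inv a _ ha =>
    refine (ha.preimage (f := fun x => x * a⁻¹) (fun x _ y _ h => mul_right_cancel h)).subset ?_
    intro x hx
    simp only [Set.mem_preimage, Set.mem_ofPred_eq] at hx ⊢
    intro h; apply hx; rw [h]; simp

theorem axis_aux (hSf : S.Finite) (hg : Subgroup.closure S = ⊤) (hS : ∀ s ∈ S, s⁻¹ ∈ S)
    {A : Set G} (hA : (bd (Cay S) A).Finite) (c : G) (hinj : Function.Injective (fun n : ℕ => c ^ n)) :
    ∃ N, ∀ n ≥ N, c ^ n ∈ A ↔ c ^ N ∈ A := by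
  have := (almost_inv hSf hg hS hA c).preimage (f := fun n : ℕ => c ^ n) hinj.injOn
  obtain ⟨N, hN⟩ := this.bddAbove
  refine ⟨N + 1, fun n hn => ?_⟩
  induction n, hn using Nat.le_induction with
  | base => rfl
  | succ n hn ih =>
    rw [← ih, pow_succ]
    by_contra hcon
    have : n ≤ N := hN (show ¬ (c ^ n ∈ A ↔ c ^ n * c ∈ A) from fun h => hcon h.symm)
    omega

theorem axis (hSf : S.Finite) (hg : Subgroup.closure S = ⊤) (hS : ∀ s ∈ S, s⁻¹ ∈ S)
    {B : Set G} (hB : (bd (Cay S) B).Finite) (hK : (bd (Cay S) B).ncard ≤ K) (c : G)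
    (hp : ∀ n : ℕ, c ^ (n + 1) ∈ B) (hm : ∀ n : ℕ, c⁻¹ ^ (n + 1) ∉ B) :
    ∃ A ∈ EE (Cay S) K, c • A ⊂ A ∨ A ⊂ c • A := by
  have hc1 : ∀ n : ℕ, c ^ (n + 1) ≠ 1 := by
    intro n h
    apply hm n
    rw [inv_pow, h, inv_one, ← h]
    exact hp n
  have hinj : Function.Injective (fun n : ℕ => c ^ n) := by
    rw [injective_pow_iff_not_isOfFinOrder, isOfFinOrder_iff_pow_eq_one]
    rintro ⟨n, hn, h⟩
    obtain ⟨m, rfl⟩ := Nat.exists_eq_succ_of_ne_zero hn.ne'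
    exact hc1 m h
  have hinj' : Function.Injective (fun n : ℕ => c⁻¹ ^ n) := by
    intro a b h
    simp only [inv_pow, inv_inj] at h
    exact hinj h
  set U : Ultrafilter ℕ := Ultrafilter.of Filter.atTop with hU
  have hUle : (U : Filter ℕ) ≤ Filter.atTop := Ultrafilter.of_le _
  set α := U.map (fun n : ℕ => c ^ n)
  set β := U.map (fun n : ℕ => c⁻¹ ^ n)
  have hge : ∀ N : ℕ, {n : ℕ | N ≤ n} ∈ U := fun N => hUle (Filter.mem_atTop N)
  have hsB : Sep α β B := by
    constructor
    · rw [Ultrafilter.mem_map]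
      refine Filter.mem_of_superset (hge 1) ?_
      intro n hn
      obtain ⟨m, rfl⟩ := Nat.exists_eq_add_of_le' (show 1 ≤ n from hn)
      exact hp m
    · rw [Ultrafilter.mem_map, ← Ultrafilter.compl_mem_iff_notMem]
      refine Filter.mem_of_superset (hge 1) ?_
      intro n hn
      obtain ⟨m, rfl⟩ := Nat.exists_eq_add_of_le' (show 1 ≤ n from hn)
      exact hm m
  obtain ⟨A, hAE, hsA⟩ := exists_EE hsB hB hK
  have hAf : (bd (Cay S) A).Finite := by
    obtain ⟨-, _, _, h, -⟩ := hAE; exact h.2.1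
  obtain ⟨N, hN⟩ := axis_aux hSf hg hS hAf c hinj
  obtain ⟨M, hM⟩ := axis_aux hSf hg hS hAf c⁻¹ hinj'
  have hNA : c ^ N ∈ A := by
    have h1 := hsA.1
    rw [Ultrafilter.mem_map] at h1
    obtain ⟨n, hn1, hn2⟩ := Ultrafilter.nonempty_of_mem (Filter.inter_mem h1 (hge N))
    exact (hN n hn2).1 hn1
  have hMA : c⁻¹ ^ M ∉ A := by
    intro hcon
    apply hsA.2
    rw [Ultrafilter.mem_map]
    refine Filter.mem_of_superset (hge M) ?_
    intro n hn
    exact (hM n hn).2 hcon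
  have hpos : ∀ n ≥ N, c ^ n ∈ A := fun n hn => (hN n hn).2 hNA
  have hneg : ∀ n ≥ M, c⁻¹ ^ n ∉ A := fun n hn h => hMA ((hM n hn).1 h)
  have hcA : c • A ∈ EE (Cay S) K := EE_smul Cay_smul c hAE
  have hnc := EE_not_cross (Cay_conn hg hS) (Cay_symm hS) hAE hcA
  have hposc : ∀ n ≥ N + 1, c ^ n ∈ c • A := by
    intro n hn
    rw [Set.mem_smul_set_iff_inv_smul_mem]
    obtain ⟨m, rfl⟩ := Nat.exists_eq_add_of_le' hn
    have := hpos (m + N) (by omega)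
    rw [← add_assoc, pow_succ']
    simpa using this
  have hnegc : ∀ n ≥ M, c⁻¹ ^ n ∉ c • A := by
    intro n hn
    rw [Set.mem_smul_set_iff_inv_smul_mem, smul_eq_mul, ← pow_succ']
    exact hneg _ (by omega)
  have hne : A ≠ c • A := by
    intro heq
    have hz : ∀ n : ℕ, ∀ x, c ^ n * x ∈ A → x ∈ A := by
      intro n
      induction n with
      | zero => simp
      | succ n ih =>
        intro x hx
        apply ih
        rw [heq, Set.mem_smul_set_iff_inv_smul_mem] at hx
        rw [pow_succ', mul_assoc] at hx
        simpa using hx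
    apply hMA
    apply hz (N + M)
    rw [pow_add, mul_assoc]
    simpa using hNA
  have hsub : c • A ⊆ A ∨ A ⊆ c • A := by
    by_contra hcon
    push Not at hcon
    rw [Set.not_subset, Set.not_subset] at hcon
    obtain ⟨⟨x, hx1, hx2⟩, ⟨y, hy1, hy2⟩⟩ := hcon
    exact hnc ⟨⟨c ^ (N + 1), hpos _ (by omega), hposc _ le_rfl⟩, ⟨y, hy1, hy2⟩, ⟨x, hx2, hx1⟩,
      ⟨c⁻¹ ^ M, hMA, hnegc _ le_rfl⟩⟩
  refine ⟨A, hAE, hsub.imp (fun h => ?_) (fun h => ?_)⟩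
  · exact h.ssubset_of_ne hne.symm
  · exact h.ssubset_of_ne hne

theorem axis_conj {c k : G} (h : ∃ A ∈ EE (Cay S) K, c • A ⊂ A ∨ A ⊂ c • A) :
    ∃ A ∈ EE (Cay S) K, (k * c * k⁻¹) • A ⊂ A ∨ A ⊂ (k * c * k⁻¹) • A := by
  obtain ⟨A, hA, h⟩ := h
  refine ⟨k • A, EE_smul Cay_smul k hA, ?_⟩
  have e : (k * c * k⁻¹) • k • A = k • c • A := by
    simp [smul_smul]
  rw [e]
  have m : ∀ P Q : Set G, P ⊂ Q → k • P ⊂ k • Q := by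
    intro P Q h
    rw [ssubset_iff_subset_not_subset] at h ⊢
    simpa using h
  exact h.imp (m _ _) (m _ _)

end Cuts

end CutsTwo

/-! ### Cuts coming from a free subgroup of finite index -/

section FreeCuts

open Pointwise

namespace Cuts

section

variable {ι : Type*} [DecidableEq ι]

/-- Elements of a free group whose inverse ends with the letter `a`. -/
def hs (a : ι × Bool) : Set (FreeGroup ι) := {w | (w⁻¹).toWord.getLast? = some a}

theorem hs_letter (a l : ι × Bool) (u : FreeGroup ι) (h1 : u.toWord.getLast? = some a)
    (h2 : (FreeGroup.mk [l] * u).toWord.getLast? ≠ some a) : u = FreeGroup.mk [a] := by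
  have h3 : (FreeGroup.mk [l] * u).toWord = FreeGroup.reduce (l :: u.toWord) := by
    conv_lhs => rw [← FreeGroup.mk_toWord (x := u), FreeGroup.mul_mk, FreeGroup.toWord_mk]
    rfl
  rw [h3, FreeGroup.reduce.cons, FreeGroup.reduce_toWord] at h2
  conv_lhs => rw [← FreeGroup.mk_toWord (x := u)]
  rcases hu : u.toWord with _ | ⟨m, t⟩
  · rw [hu] at h1; simp at h1
  · rw [hu] at h1 h2
    simp only at h2
    rcases t with _ | ⟨m', t⟩
    · simp at h1
      rw [h1]
    · exfalso
      apply h2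
      split_ifs <;> simpa using h1

/-- Elements of the halfspace leaving it under right multiplication by `c`. -/
def leave (a : ι × Bool) (c : FreeGroup ι) : Set (FreeGroup ι) := {w | w ∈ hs a ∧ w * c ∉ hs a}

theorem leave_letter (a l : ι × Bool) : (leave a (FreeGroup.mk [l])⁻¹).encard ≤ 1 := by
  have : leave a (FreeGroup.mk [l])⁻¹ ⊆ {(FreeGroup.mk [a])⁻¹} := by
    rintro w ⟨h1, h2⟩
    have := hs_letter a l w⁻¹ h1 (by
      have h3 : (w * (FreeGroup.mk [l])⁻¹)⁻¹ = FreeGroup.mk [l] * w⁻¹ := by group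
      rw [← h3]
      exact h2)
    rw [Set.mem_singleton_iff, ← this, inv_inv]
  exact (Set.encard_le_encard this).trans (by simp)

theorem leave_bound (c : FreeGroup ι) : ∃ n : ℕ, ∀ a : ι × Bool, (leave a c).encard ≤ n := by
  induction c using FreeGroup.induction_on with
  | C1 => exact ⟨0, fun a => by simp [leave]⟩
  | of i =>
    refine ⟨1, fun a => ?_⟩
    have := leave_letter a (i, false)
    rw [FreeGroup.inv_mk] at this
    simpa [FreeGroup.invRev, FreeGroup.of] using this
  | inv_of i _ =>
    exact ⟨1, fun a => leave_letter a (i, true)⟩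
  | mul c d hc hd =>
    obtain ⟨n, hn⟩ := hc
    obtain ⟨m, hm⟩ := hd
    refine ⟨n + m, fun a => ?_⟩
    have : leave a (c * d) ⊆ leave a c ∪ (fun w => w * c⁻¹) '' leave a d := by
      rintro w ⟨h1, h2⟩
      by_cases h : w * c ∈ hs a
      · right
        exact ⟨w * c, ⟨h, by rwa [mul_assoc]⟩, by simp⟩
      · left; exact ⟨h1, h⟩
    refine (Set.encard_le_encard this).trans ((Set.encard_union_le _ _).trans ?_)
    push_cast
    exact add_le_add (hn a) ((Set.encard_image_le _ _).trans (hm a))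

theorem leave_bound_fin {C : Set (FreeGroup ι)} (hC : C.Finite) :
    ∃ n : ℕ, ∀ a : ι × Bool, (⋃ c ∈ C, leave a c).encard ≤ n := by
  induction C, hC using Set.Finite.induction_on with
  | empty => exact ⟨0, by simp⟩
  | @insert c C _ _ ih =>
    obtain ⟨n, hn⟩ := ih
    obtain ⟨m, hm⟩ := leave_bound c
    refine ⟨m + n, fun a => ?_⟩
    rw [Set.biUnion_insert]
    refine (Set.encard_union_le _ _).trans ?_
    push_cast
    exact add_le_add (hm a) (hn a)

theorem cyc_word {u : FreeGroup ι} (hu : u ≠ 1) : ∃ (k v : FreeGroup ι) (a : ι × Bool),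
    u = k * v * k⁻¹ ∧ (∀ n : ℕ, (v ^ (n + 1)).toWord.getLast? = some a) ∧
    (∀ n : ℕ, ((v ^ (n + 1))⁻¹).toWord.getLast? ≠ some a) := by
  have hcyc := FreeGroup.reduceCyclically.isCyclicallyReduced (FreeGroup.isReduced_toWord (x := u))
  have hconj := FreeGroup.reduceCyclically.conj_conjugator_reduceCyclically u.toWord
  set L := FreeGroup.reduceCyclically u.toWord with hL
  set k := FreeGroup.reduceCyclically.conjugator u.toWord
  have hu2 : u = FreeGroup.mk k * FreeGroup.mk L * (FreeGroup.mk k)⁻¹ := by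
    rw [FreeGroup.inv_mk, FreeGroup.mul_mk, FreeGroup.mul_mk, hconj, FreeGroup.mk_toWord]
  have hLne : L ≠ [] := by
    intro h
    apply hu
    rw [hu2, h, ← FreeGroup.one_eq_mk, mul_one, mul_inv_cancel]
  have hpow : ∀ n : ℕ, (FreeGroup.mk L ^ n).toWord = (List.replicate n L).flatten := by
    intro n
    rw [FreeGroup.toWord_pow, FreeGroup.toWord_mk, hcyc.isReduced.reduce_eq,
      (hcyc.flatten_replicate n).isReduced.reduce_eq]
  refine ⟨FreeGroup.mk k, FreeGroup.mk L, L.getLast hLne, hu2, ?_, ?_⟩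
  · intro n
    rw [hpow, List.getLast?_flatten_replicate (h := by simp)]
    exact List.getLast?_eq_some_getLast hLne
  · intro n h
    rw [FreeGroup.toWord_inv, hpow, FreeGroup.invRev, List.getLast?_reverse, List.head?_map,
      List.head?_flatten_replicate (h := by simp), List.head?_eq_some_head hLne] at h
    simp only [Option.map_some, Option.some.injEq] at h
    have := hcyc.2 (L.getLast hLne) (List.getLast?_eq_some_getLast hLne) (L.head hLne)
      (List.head?_eq_some_head hLne)
    rw [← h] at this
    simp at this

end

variable {G : Type*} [Group G]

theorem exists_transversal (H : Subgroup G) [H.FiniteIndex] :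
    ∃ (p : G → G), (Set.range p).Finite ∧ (∀ x, x * p x ∈ H) ∧
      (∀ x ∈ H, p x = 1) := by
  classical
  refine ⟨fun x => if x ∈ H then 1 else ((x⁻¹ : G) : G ⧸ H).out, ?_, ?_, ?_⟩
  · have : (Set.range (fun q : G ⧸ H => q.out)).Finite := Set.finite_range _
    refine (this.union (Set.finite_singleton 1)).subset ?_
    rintro _ ⟨x, rfl⟩
    by_cases h : x ∈ H
    · simp [h]
    · left
      exact ⟨((x⁻¹ : G) : G ⧸ H), by simp [h]⟩
  · intro x
    by_cases h : x ∈ H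
    · simp [h]
    · simp only [h, if_false]
      have := QuotientGroup.eq.1 (QuotientGroup.out_eq' ((x⁻¹ : G) : G ⧸ H)).symm
      simpa using this
  · intro x h
    simp [h]

theorem free_axis {S : Set G} (hSf : S.Finite) (hg : Subgroup.closure S = ⊤)
    (hS : ∀ s ∈ S, s⁻¹ ∈ S) (H : Subgroup G) [H.FiniteIndex] {ι : Type*} (e : H ≃* FreeGroup ι) :
    ∃ K : ℕ, ∀ g ∈ H, g ≠ 1 → ∃ A ∈ EE (Cay S) K, g • A ⊂ A ∨ A ⊂ g • A := by
  classical
  obtain ⟨p, hpf, hpH, hp1⟩ := exists_transversal H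
  let r : G → FreeGroup ι := fun x => e ⟨x * p x, hpH x⟩
  let D : Set H := {h | ∃ q ∈ Set.range p, ∃ s ∈ S, ∃ q' ∈ Set.range p, (h : G) = q⁻¹ * s * q'}
  have hD : D.Finite := by
    have h1 : ((Set.range p)⁻¹ * S * Set.range p).Finite := (hpf.inv.mul hSf).mul hpf
    refine (h1.preimage (f := fun h : H => (h : G)) Subtype.val_injective.injOn).subset ?_
    rintro h ⟨q, hq, s, hs, q', hq', heq⟩
    rw [Set.mem_preimage, heq]
    exact Set.mul_mem_mul (Set.mul_mem_mul (by simpa using hq) hs) hq'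
  obtain ⟨n, hn⟩ := leave_bound_fin (hD.image e)
  have hbd : ∀ a, (bd (Cay S) (r ⁻¹' hs a)).encard ≤ n * ((Set.range p).ncard * S.ncard : ℕ) := by
    intro a
    have hsub : bd (Cay S) (r ⁻¹' hs a) ⊆
        (fun t : FreeGroup ι × G × G =>
          (((e.symm t.1 : H) : G) * t.2.1⁻¹, ((e.symm t.1 : H) : G) * t.2.1⁻¹ * t.2.2)) ''
          ((⋃ c ∈ e '' D, leave a c) ×ˢ (Set.range p ×ˢ S)) := by
      rintro ⟨x, y⟩ ⟨h1, h2, h3⟩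
      refine ⟨(r x, p x, x⁻¹ * y), ⟨?_, ⟨x, rfl⟩, h1⟩, by simp [r]⟩
      have hd : (⟨x * p x, hpH x⟩ : H)⁻¹ * ⟨y * p y, hpH y⟩ ∈ D := by
        refine ⟨p x, ⟨x, rfl⟩, x⁻¹ * y, h1, p y, ⟨y, rfl⟩, ?_⟩
        simp [mul_assoc]
      refine Set.mem_biUnion (Set.mem_image_of_mem e hd) ⟨h2, ?_⟩
      rw [map_mul, map_inv]
      simpa [r] using h3
    refine (Set.encard_le_encard hsub).trans ((Set.encard_image_le _ _).trans ?_)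
    rw [Set.encard_prod, Set.encard_prod]
    push_cast
    rw [hpf.cast_ncard_eq, hSf.cast_ncard_eq]
    exact mul_le_mul_left (hn a) _
  refine ⟨n * ((Set.range p).ncard * S.ncard), ?_⟩
  intro g hgH hg1
  have hu : (e ⟨g, hgH⟩)⁻¹ ≠ 1 := by
    simpa using hg1
  obtain ⟨k, v, a, hkv, hpos, hneg⟩ := cyc_word hu
  have hgk : g = ((e.symm k : H) : G) * ((e.symm v⁻¹ : H) : G) * ((e.symm k : H) : G)⁻¹ := by
    have h1 : (⟨g, hgH⟩ : H) = e.symm k * e.symm v⁻¹ * (e.symm k)⁻¹ := by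
      apply e.injective
      rw [← inv_inv (e ⟨g, hgH⟩), hkv]
      simp [mul_assoc]
    have := congrArg Subtype.val h1
    simpa using this
  rw [hgk]
  apply axis_conj
  have hle := hbd a
  have hrH : ∀ h : H, r (h : G) = e h := by
    intro h
    simp only [r]
    congr 1
    ext
    simp [hp1 _ h.2]
  have hfin : (bd (Cay S) (r ⁻¹' hs a)).Finite :=
    Set.finite_of_encard_le_coe (k := n * ((Set.range p).ncard * S.ncard)) (by exact_mod_cast hle)
  refine axis hSf hg hS (B := r ⁻¹' hs a) hfin ?_ _ ?_ ?_
  · rw [← hfin.cast_ncard_eq] at hle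
    exact_mod_cast hle
  · intro m
    have h1 : ((e.symm v⁻¹ : H) : G) ^ (m + 1) = (((e.symm v⁻¹) ^ (m + 1) : H) : G) := by simp
    rw [h1, Set.mem_preimage, hrH]
    simpa [hs] using hpos m
  · intro m
    have h1 : ((e.symm v⁻¹ : H) : G)⁻¹ ^ (m + 1) = (((e.symm v⁻¹)⁻¹ ^ (m + 1) : H) : G) := by simp
    rw [h1, Set.mem_preimage, hrH]
    simpa [hs] using hneg m

end Cuts

end FreeCuts

/-! ### The tree dual to a nested family of cuts -/

section Dual

open Pointwise

/-- A nested `G`-invariant family of cuts of `X`. -/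
structure Nest (G X : Type*) [Group G] [MulAction G X] where
  E : Set (Set X)
  smul_mem : ∀ (g : G), ∀ A ∈ E, g • A ∈ E
  compl_mem : ∀ A ∈ E, Aᶜ ∈ E
  not_cross : ∀ A ∈ E, ∀ B ∈ E, ¬ Cuts.Cross A B
  nonempty : ∀ A ∈ E, A.Nonempty
  fin : ∀ x y : X, {A | A ∈ E ∧ x ∈ A ∧ y ∉ A}.Finite

namespace Nest

variable {G X : Type*} [Group G] [MulAction G X]

/-- The order on doubled cuts. -/
def Le (a b : Set X × Bool) : Prop := a.1 ⊂ b.1 ∨ (a.1 = b.1 ∧ (a.2 = true → b.2 = true))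

/-- The involution on doubled cuts. -/
def st (a : Set X × Bool) : Set X × Bool := (a.1ᶜ, !a.2)

@[simp] theorem st_st (a : Set X × Bool) : st (st a) = a := by simp [st]

theorem Le.sub {a b : Set X × Bool} (h : Le a b) : a.1 ⊆ b.1 := by
  rcases h with h | h
  · exact h.1
  · exact h.1.subset

theorem Le.refl (a : Set X × Bool) : Le a a := Or.inr ⟨rfl, id⟩

theorem Le.trans {a b c : Set X × Bool} (h : Le a b) (h' : Le b c) : Le a c := by
  rcases h with h | h
  · exact Or.inl (h.trans_subset h'.sub)
  · rcases h' with h' | h'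
    · exact Or.inl (h.1 ▸ h')
    · exact Or.inr ⟨h.1.trans h'.1, fun t => h'.2 (h.2 t)⟩

theorem Le.antisymm {a b : Set X × Bool} (h : Le a b) (h' : Le b a) : a = b := by
  have h1 : a.1 = b.1 := h.sub.antisymm h'.sub
  rcases h with h | h
  · exact absurd h1 h.ne
  rcases h' with h' | h'
  · exact absurd h1.symm h'.ne
  refine Prod.ext h1 ?_
  exact Bool.eq_iff_iff.2 ⟨h.2, h'.2⟩

theorem Le.st {a b : Set X × Bool} (h : Le a b) : Le (st b) (st a) := by
  rcases h with h | h
  · exact Or.inl (compl_lt_compl_iff_lt.2 h)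
  · refine Or.inr ⟨by simp [Nest.st, h.1], ?_⟩
    have := h.2
    simp only [Nest.st]
    cases ha : a.2 <;> cases hb : b.2 <;> simp_all

theorem Le.st' {a b : Set X × Bool} (h : Le (Nest.st a) b) : Le (Nest.st b) a := by
  simpa using h.st

variable (N : Nest G X)

theorem not_le_st {a : Set X × Bool} (ha : a.1 ∈ N.E) : ¬ Le a (st a) := by
  intro h
  obtain ⟨x, hx⟩ := N.nonempty _ ha
  exact h.sub hx hx

theorem st_mem {a : Set X × Bool} (ha : a.1 ∈ N.E) : (st a).1 ∈ N.E := N.compl_mem _ ha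

theorem le_total_of {a b : Set X × Bool} (h : a.1 ⊆ b.1) : Le a b ∨ Le b a := by
  by_cases he : a.1 = b.1
  · cases ha : a.2 with
    | false => exact Or.inl (Or.inr ⟨he, by simp [ha]⟩)
    | true => exact Or.inr (Or.inr ⟨he.symm, fun _ => ha⟩)
  · exact Or.inl (Or.inl (h.ssubset_of_ne he))

theorem nested {a b : Set X × Bool} (ha : a.1 ∈ N.E) (hb : b.1 ∈ N.E) :
    Le a b ∨ Le b a ∨ Le a (st b) ∨ Le (st b) a := by
  have h := N.not_cross _ ha _ hb
  have h4 : a.1 ⊆ b.1 ∨ b.1 ⊆ a.1 ∨ a.1 ⊆ (st b).1 ∨ (st b).1 ⊆ a.1 := by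
    by_contra hcon
    push Not at hcon
    simp only [Set.not_subset] at hcon
    obtain ⟨⟨x, hx, hx'⟩, ⟨y, hy, hy'⟩, ⟨z, hz, hz'⟩, ⟨w, hw, hw'⟩⟩ := hcon
    refine h ⟨⟨z, hz, ?_⟩, ⟨x, hx, hx'⟩, ⟨y, hy', hy⟩, ⟨w, hw', hw⟩⟩
    by_contra hzb
    exact hz' hzb
  rcases h4 with h | h | h | h
  · have := le_total_of h; tauto
  · have := le_total_of h; tauto
  · have := le_total_of h; tauto
  · have := le_total_of h; tauto

/-- A vertex of the dual tree. -/
@[ext] structure Vert where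
  c : Set (Set X × Bool)
  mem : ∀ a ∈ c, a.1 ∈ N.E
  iff : ∀ a : Set X × Bool, a.1 ∈ N.E → (a ∈ c ↔ st a ∉ c)
  up : ∀ a ∈ c, ∀ b : Set X × Bool, b.1 ∈ N.E → Le a b → b ∈ c
  fin : ∀ x : X, {a | a ∈ c ∧ x ∉ a.1}.Finite

theorem fin_aux (x y : X) : {a : Set X × Bool | a.1 ∈ N.E ∧ x ∈ a.1 ∧ y ∉ a.1}.Finite := by
  refine ((N.fin x y).prod (Set.finite_univ (α := Bool))).subset ?_
  rintro ⟨A, i⟩ h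
  exact ⟨h, trivial⟩

/-- The vertex of a point. -/
def vpt (x : X) : Vert N where
  c := {a | a.1 ∈ N.E ∧ x ∈ a.1}
  mem := fun a h => h.1
  iff := by
    intro a ha
    constructor
    · rintro ⟨-, h⟩ ⟨-, h'⟩
      exact h' h
    · intro h
      refine ⟨ha, ?_⟩
      by_contra hx
      exact h ⟨N.compl_mem _ ha, hx⟩
  up := fun a h b hb hab => ⟨hb, hab.sub h.2⟩
  fin := by
    intro y
    refine (N.fin_aux x y).subset ?_
    rintro a ⟨⟨h1, h2⟩, h3⟩
    exact ⟨h1, h2, h3⟩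

/-- The terminal vertex of an oriented edge. -/
def tv (a : Set X × Bool) (ha : a.1 ∈ N.E) : Vert N where
  c := {b | b.1 ∈ N.E ∧ (Le a b ∨ (Le (st b) a ∧ st b ≠ a))}
  mem := fun a h => h.1
  iff := by
    intro b hb
    constructor
    · rintro ⟨-, h⟩ ⟨-, h'⟩
      rw [st_st] at h'
      rcases h with h | ⟨h, hne⟩ <;> rcases h' with h' | ⟨h', hne'⟩
      · exact N.not_le_st ha (h.trans (by simpa using h'.st))
      · exact hne' (h'.antisymm h)
      · exact hne (h.antisymm h')
      · exact N.not_le_st (N.st_mem ha) (by simpa using (h.st').trans h')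
    · intro h
      refine ⟨hb, ?_⟩
      by_contra hcon
      apply h
      refine ⟨N.compl_mem _ hb, ?_⟩
      rw [st_st]
      push Not at hcon
      rcases N.nested ha hb with h1 | h1 | h1 | h1
      · exact absurd h1 hcon.1
      · refine Or.inr ⟨h1, ?_⟩
        rintro rfl
        exact hcon.1 h1
      · exact Or.inl h1
      · exact Or.inl (hcon.2 h1 ▸ Le.refl _)
  up := by
    rintro b ⟨hb, h⟩ d hd hbd
    refine ⟨hd, ?_⟩
    rcases h with h | ⟨h, hne⟩
    · exact Or.inl (h.trans hbd)
    · refine Or.inr ⟨hbd.st.trans h, ?_⟩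
      rintro rfl
      exact hne (h.antisymm hbd.st)
  fin := by
    intro x
    obtain ⟨y, hy⟩ := N.nonempty _ ha
    obtain ⟨z, hz⟩ := N.nonempty _ (N.compl_mem _ ha)
    refine ((N.fin_aux y x).union (N.fin_aux z x)).subset ?_
    rintro b ⟨⟨hb, h⟩, hx⟩
    rcases h with h | ⟨h, -⟩
    · exact Or.inl ⟨hb, h.sub hy, hx⟩
    · refine Or.inr ⟨hb, ?_, hx⟩
      by_contra hzb
      exact hz (h.sub hzb)

variable {N}

theorem mem_tv_self {a : Set X × Bool} (ha : a.1 ∈ N.E) : a ∈ (N.tv a ha).c :=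
  ⟨ha, Or.inl (Le.refl a)⟩

theorem not_mem_tv_st {a : Set X × Bool} (ha : a.1 ∈ N.E) : a ∉ (N.tv (st a) (N.st_mem ha)).c := by
  intro h
  exact ((N.tv (st a) (N.st_mem ha)).iff a ha).1 h (mem_tv_self (N.st_mem ha))

theorem eq_of_tv {a b : Set X × Bool} (ha : a.1 ∈ N.E) (h1 : b ∈ (N.tv a ha).c)
    (h2 : b ∉ (N.tv (st a) (N.st_mem ha)).c) : b = a := by
  by_contra hne
  obtain ⟨hb, h⟩ := h1
  apply h2
  refine ⟨hb, ?_⟩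
  rcases h with h | ⟨h, -⟩
  · refine Or.inr ⟨h.st, ?_⟩
    intro he
    apply hne
    rw [← st_st b, he, st_st]
  · exact Or.inl h.st'

/-- The action on doubled cuts. -/
def act (g : G) (a : Set X × Bool) : Set X × Bool := (g • a.1, a.2)

theorem act_act (g h : G) (a : Set X × Bool) : act g (act h a) = act (g * h) a := by
  simp [act, mul_smul]

theorem act_one (a : Set X × Bool) : act (1 : G) a = a := by simp [act]

@[simp] theorem act_inv_act (g : G) (a : Set X × Bool) : act g (act g⁻¹ a) = a := by
  rw [act_act, mul_inv_cancel, act_one]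

@[simp] theorem act_act_inv (g : G) (a : Set X × Bool) : act g⁻¹ (act g a) = a := by
  rw [act_act, inv_mul_cancel, act_one]

theorem act_st (g : G) (a : Set X × Bool) : act g (st a) = st (act g a) := by
  simp [act, st, Set.smul_set_compl]

theorem act_le (g : G) {a b : Set X × Bool} (h : Le a b) : Le (act g a) (act g b) := by
  rcases h with h | h
  · left
    rw [ssubset_iff_subset_not_subset] at h ⊢
    simpa [act] using h
  · right
    simpa [act] using h

theorem act_mem (g : G) {a : Set X × Bool} (h : a.1 ∈ N.E) : (act g a).1 ∈ N.E :=
  N.smul_mem g _ h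

theorem act_mem_iff (g : G) {a : Set X × Bool} : (act g a).1 ∈ N.E ↔ a.1 ∈ N.E :=
  ⟨fun h => by simpa using act_mem g⁻¹ h, act_mem g⟩

/-- The action on vertices. -/
def vsmul (g : G) (v : Vert N) : Vert N where
  c := {a | act g⁻¹ a ∈ v.c}
  mem := fun a h => (act_mem_iff g⁻¹).1 (v.mem _ h)
  iff := by
    intro a ha
    simp only [Set.mem_ofPred_eq, act_st]
    exact v.iff _ (act_mem _ ha)
  up := fun a h b hb hab => v.up _ h _ (act_mem _ hb) (act_le _ hab)
  fin := by
    intro x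
    refine ((v.fin (g⁻¹ • x)).image (act g)).subset ?_
    rintro a ⟨h1, h2⟩
    exact ⟨act g⁻¹ a, ⟨h1, by simpa [act] using h2⟩, by simp⟩

instance vertAction : MulAction G (Vert N) where
  smul := vsmul
  one_smul := by
    intro v
    apply Vert.ext
    ext a
    change act (1 : G)⁻¹ a ∈ v.c ↔ _
    rw [inv_one, act_one]
  mul_smul := by
    intro g h v
    apply Vert.ext
    ext a
    change act (g * h)⁻¹ a ∈ v.c ↔ act h⁻¹ (act g⁻¹ a) ∈ v.c
    rw [act_act, mul_inv_rev]

theorem mem_smul_vert (g : G) (v : Vert N) (a : Set X × Bool) :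
    a ∈ (g • v).c ↔ act g⁻¹ a ∈ v.c := Iff.rfl

/-- The halfspace of a doubled cut. -/
def half (N : Nest G X) (a : Set X × Bool) : Set (Vert N) := {v | a ∈ v.c}

theorem half_smul (g : G) (a : Set X × Bool) : g • half N a = half N (act g a) := by
  ext v
  rw [Set.mem_smul_set_iff_inv_smul_mem]
  change a ∈ (g⁻¹ • v).c ↔ act g a ∈ v.c
  rw [mem_smul_vert, inv_inv]

theorem half_compl {a : Set X × Bool} (ha : a.1 ∈ N.E) : (half N a)ᶜ = half N (st a) := by
  ext v
  change ¬ (a ∈ v.c) ↔ st a ∈ v.c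
  rw [v.iff a ha, not_not]

theorem half_inj {a b : Set X × Bool} (ha : a.1 ∈ N.E) (h : half N a = half N b) : b = a := by
  have h1 : N.tv a ha ∈ half N b := by rw [← h]; exact mem_tv_self ha
  have h2 : N.tv (st a) (N.st_mem ha) ∉ half N b := by rw [← h]; exact not_mem_tv_st ha
  exact eq_of_tv ha h1 h2

/-- The dual tree. -/
def tree (N : Nest G X) : HTree G (Vert N) where
  H := {s | ∃ a : Set X × Bool, a.1 ∈ N.E ∧ s = half N a}
  smul_mem := by
    rintro g _ ⟨a, ha, rfl⟩
    exact ⟨act g a, act_mem g ha, half_smul g a⟩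
  compl_mem := by
    rintro _ ⟨a, ha, rfl⟩
    exact ⟨st a, N.st_mem ha, half_compl ha⟩
  noinv := by
    rintro g _ ⟨a, ha, rfl⟩ h
    rw [half_smul, half_compl ha] at h
    have := congrArg Prod.snd (half_inj (act_mem g ha) h)
    simp [act, st] at this
  nested := by
    rintro _ ⟨a, ha, rfl⟩ _ ⟨b, hb, rfl⟩
    rcases N.nested ha hb with h | h | h | h
    · exact Or.inl fun v hv => v.up _ hv _ hb h
    · exact Or.inr (Or.inl fun v hv => v.up _ hv _ ha h)
    · refine Or.inr (Or.inr (Or.inl fun v hv hv' => ?_))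
      exact (v.iff b hb).1 hv' (v.up _ hv _ (N.st_mem hb) h)
    · refine Or.inr (Or.inr (Or.inr fun v => ?_))
      by_cases hv : b ∈ v.c
      · exact Or.inr hv
      · left
        have : st b ∈ v.c := by
          by_contra h'
          exact hv ((v.iff b hb).2 h')
        exact v.up _ this _ ha h
  fin := by
    intro v w
    by_cases hX : Nonempty X
    · obtain ⟨x⟩ := hX
      refine (((w.fin x).union ((v.fin x).image st)).image (half N)).subset ?_
      rintro _ ⟨⟨a, ha, rfl⟩, h1, h2⟩
      refine ⟨a, ?_, rfl⟩
      by_cases hx : x ∈ a.1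
      · right
        refine ⟨st a, ⟨?_, fun h => h hx⟩, st_st a⟩
        by_contra h'
        exact h1 ((v.iff a ha).2 h')
      · exact Or.inl ⟨h2, hx⟩
    · refine Set.finite_empty.subset ?_
      rintro _ ⟨⟨a, ha, rfl⟩, -⟩
      obtain ⟨x, -⟩ := N.nonempty _ ha
      exact hX ⟨x⟩
  sep := by
    intro v w hne
    by_contra hcon
    push Not at hcon
    have hsub : ∀ a ∈ w.c, a ∈ v.c := by
      intro a ha
      by_contra hv
      exact hcon (half N a) ⟨a, w.mem a ha, rfl⟩ hv ha
    apply hne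
    apply Vert.ext
    ext a
    refine ⟨fun ha => ?_, hsub a⟩
    rw [w.iff a (v.mem a ha)]
    intro h
    exact (v.iff a (v.mem a ha)).1 ha (hsub _ h)
  edge := by
    rintro _ ⟨a, ha, rfl⟩
    refine ⟨N.tv (st a) (N.st_mem ha), N.tv a ha, not_mem_tv_st ha, mem_tv_self ha, ?_⟩
    rintro _ ⟨b, hb, rfl⟩ h1 h2
    rw [eq_of_tv ha h2 h1]

theorem no_fix_aux {g : G} {v : Vert N} (hv : g • v = v) {a : Set X × Bool} (ha : a ∈ v.c)
    (h : g • a.1 ⊂ a.1) : False := by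
  have hpow : ∀ n : ℕ, act (g ^ n) a ∈ v.c := by
    intro n
    induction n with
    | zero => simpa [act_one] using ha
    | succ n ih =>
      rw [← hv, mem_smul_vert, act_act, pow_succ']
      simpa using ih
  have hanti : StrictAnti (fun n : ℕ => g ^ n • a.1) := by
    apply strictAnti_nat_of_succ_lt
    intro n
    rw [pow_succ, mul_smul]
    rw [ssubset_iff_subset_not_subset] at h ⊢
    simpa using h
  obtain ⟨y, hy⟩ := N.nonempty _ (N.compl_mem _ (v.mem a ha))
  have hinj : Function.Injective (fun n : ℕ => act (g ^ n) a) := by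
    intro m n hmn
    exact hanti.injective (congrArg Prod.fst hmn)
  refine Set.infinite_range_of_injective hinj ((v.fin y).subset ?_)
  rintro _ ⟨n, rfl⟩
  refine ⟨hpow n, fun hyn => hy ?_⟩
  have := hanti.antitone (Nat.zero_le n) hyn
  simpa using this

theorem no_fix {g : G} {v : Vert N} (hv : g • v = v) {A : Set X} (hA : A ∈ N.E)
    (h : g • A ⊂ A ∨ A ⊂ g • A) : False := by
  have key : ∀ g : G, g • v = v → ∀ A ∈ N.E, g • A ⊂ A → False := by
    intro g hv A hA h
    by_cases hm : ((A, true) : Set X × Bool) ∈ v.c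
    · exact no_fix_aux hv hm h
    · have hm' : st ((A, true) : Set X × Bool) ∈ v.c := by
        by_contra h'
        exact hm ((v.iff _ hA).2 h')
      refine no_fix_aux (g := g⁻¹) (by rw [inv_smul_eq_iff, hv]) hm' ?_
      change g⁻¹ • Aᶜ ⊂ Aᶜ
      rw [Set.smul_set_compl]
      refine compl_lt_compl_iff_lt.2 ?_
      change A ⊂ g⁻¹ • A
      rw [ssubset_iff_subset_not_subset] at h ⊢
      rwa [← Set.smul_set_subset_iff_subset_inv_smul_set,
        ← Set.subset_smul_set_iff]
  rcases h with h | h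
  · exact key g hv A hA h
  · refine key g⁻¹ (by rw [inv_smul_eq_iff, hv]) A hA ?_
    rw [ssubset_iff_subset_not_subset] at h ⊢
    rwa [← Set.smul_set_subset_iff_subset_inv_smul_set,
      ← Set.subset_smul_set_iff]

theorem stab_finite (H : Subgroup G) [H.FiniteIndex]
    (hH : ∀ g ∈ H, g ≠ 1 → ∃ A ∈ N.E, g • A ⊂ A ∨ A ⊂ g • A) (v : Vert N) :
    {g : G | g • v = v}.Finite := by
  by_contra hinf
  obtain ⟨a, ha, b, hb, hne, heq⟩ := Set.Infinite.exists_ne_map_eq_of_mapsTo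
    (f := fun g : G => (g : G ⧸ H)) (t := Set.univ) hinf (fun _ _ => trivial) Set.finite_univ
  have hab : a⁻¹ * b ∈ H := QuotientGroup.eq.1 heq
  obtain ⟨A, hA, h⟩ := hH _ hab (fun h => hne (by
    rw [inv_mul_eq_one] at h; exact h))
  refine no_fix (v := v) ?_ hA h
  change a • v = v at ha
  change b • v = v at hb
  rw [mul_smul, hb, inv_smul_eq_iff, ha]

end Nest

theorem virtuallyFree_injective {G : Type*} [Group G] (hfg : Group.FG G) (H : Subgroup G)
    [H.FiniteIndex] (hfree : IsFreeGroup H)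
    (hco : ∀ φ : G →* G, Function.Injective φ → Function.Surjective φ) (φ : G →* G)
    (hφ : ∀ H : Subgroup G, (H : Set G).Finite → ∃ g' : G, ∀ h ∈ H, h = g' * φ h * g'⁻¹) :
    Function.Injective φ := by
  obtain ⟨S₀, hS₀, hS₀f⟩ := (Group.fg_iff).1 hfg
  let S : Set G := S₀ ∪ S₀⁻¹
  have hSf : S.Finite := hS₀f.union hS₀f.inv
  have hS : ∀ s ∈ S, s⁻¹ ∈ S := by
    rintro s (hs | hs)
    · right; simpa using hs
    · left; simpa using hs
  have hg : Subgroup.closure S = ⊤ := by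
    rw [eq_top_iff, ← hS₀]
    exact Subgroup.closure_mono Set.subset_union_left
  obtain ⟨K, hK⟩ := Cuts.free_axis hSf hg hS H (IsFreeGroup.toFreeGroup H)
  let N : Nest G G :=
    { E := Cuts.EE (Cuts.Cay S) K
      smul_mem := fun g A hA => Cuts.EE_smul Cuts.Cay_smul g hA
      compl_mem := fun A hA => Cuts.EE_compl (Cuts.Cay_symm hS) hA
      not_cross := fun A hA B hB =>
        Cuts.EE_not_cross (Cuts.Cay_conn hg hS) (Cuts.Cay_symm hS) hA hB
      nonempty := fun A hA => Cuts.EE_nonempty hA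
      fin := fun x y =>
        (Cuts.finite_sep (K := K) (Cuts.Cay_conn hg hS) (Cuts.Cay_symm hS) x y).subset
          (fun A hA => ⟨Cuts.EE_subset_MM hA.1, hA.2⟩) }
  exact N.tree.injective_of_equiv (N.vpt 1) hco (fun v => Nest.stab_finite H hK v) φ hφ

end Dual

/-- Finitely generated co-Hopfian virtually free groups are rigid: every
endomorphism equivalent to the identity is an automorphism. -/
theorem coHopfian_virtuallyFree_rigid
    (G : Type*) [Group G] (hfg : Group.FG G) (hvf : VirtuallyFree G)
    (hco : CoHopfian G) :
    ∀ φ : G →* G, HomEquiv φ (MonoidHom.id G) → Function.Bijective φ := by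
  intro φ hφ
  obtain ⟨H, hH, ⟨hfree⟩⟩ := hvf
  have hinj : Function.Injective φ := virtuallyFree_injective hfg H hfree hco φ
    (fun F hF => by
      obtain ⟨g, hg⟩ := hφ F hF
      exact ⟨g, fun h hh => by simpa using hg h hh⟩)
  exact ⟨hinj, hco φ hinj⟩
end

section
/- Let G be a finitely generated virtually free group and let A be a finite subgroup of G. The following are equivalent: (1) A is a maximal finite subgroup of G, i.e. A is maximal with respect to inclusion among finite subgroups of G; (2) for every element g ∈ G \ A of finite order, there exists a ∈ A such that the element g·a has infinite order. -/
open FirstOrder Language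

open scoped Pointwise

theorem fin_order_smul_eq {K : Type*} [Group K] {h : K} (hh : IsOfFinOrder h) {E : Set K}
    (hE : h • E ⊆ E) : h • E = E := by
  obtain ⟨n, hn, h1⟩ := hh.exists_pow_eq_one
  have key : ∀ n : ℕ, h ^ (n + 1) • E ⊆ h • E := by
    intro n
    induction n with
    | zero => simp
    | succ n ih =>
      rw [pow_succ' h (n + 1), mul_smul]
      exact Set.smul_set_mono (ih.trans hE)
  refine hE.antisymm ?_
  have := key (n - 1)
  rwa [Nat.sub_add_cancel hn, h1, one_smul] at this

theorem serre_nested {K : Type*} [Group K] [Infinite K] (C : Set (Set K))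
    (hinv : ∀ E ∈ C, ∀ k : K, k • E ∈ C) (hcompl : ∀ E ∈ C, Eᶜ ∈ C)
    (hnest : ∀ E ∈ C, ∀ F ∈ C, E ⊆ F ∨ F ⊆ E ∨ E ⊆ Fᶜ ∨ Fᶜ ⊆ E)
    (hsep : ∀ x y : K, {E | E ∈ C ∧ x ∈ E ∧ y ∉ E}.Finite)
    (hstab : ∀ E ∈ C, {k : K | k • E = E}.Finite)
    (hinf : ∀ E ∈ C, E.Infinite) (hne : C.Nonempty)
    (B : Set K) (hB : B.Finite) (hgen : Subgroup.closure B = ⊤)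
    (hfo : ∀ h ∈ B, IsOfFinOrder h)
    (hfo2 : ∀ h ∈ B, ∀ h' ∈ B, IsOfFinOrder (h' * h)) : False := by
  have fact1 : ∀ h ∈ B, ∀ h' ∈ B, ∀ E F : Set K, h • E ⊆ Eᶜ → h' • F ⊆ Fᶜ → Eᶜ ⊆ F →
      F = Eᶜ ∧ h • E = Eᶜ ∧ h' • E = Eᶜ := by
    intro h hh h' hh' E F h1 h2 h3
    have a1 : (h' * h) • E ⊆ h' • F := by
      rw [mul_smul]; exact Set.smul_set_mono (h1.trans h3)
    have h4 : Fᶜ ⊆ E := Set.compl_subset_comm.1 h3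
    have a2 : (h' * h) • E = E := fin_order_smul_eq (hfo2 h hh h' hh') (a1.trans (h2.trans h4))
    have b1 : h' • F = E := (h2.trans h4).antisymm (a2 ▸ a1)
    have b2 : Fᶜ = E := h4.antisymm (b1 ▸ h2)
    have b3 : F = Eᶜ := by rw [← b2, _root_.compl_compl]
    have b4 : h • E = F := by
      have : h' • (h • E) = h' • F := by rw [← mul_smul, a2, b1]
      exact smul_left_cancel _ this
    refine ⟨b3, b4.trans b3, ?_⟩
    rw [← b2, Set.smul_set_compl, b1, b2]
  have orb : ∀ E ∈ C, (∀ h ∈ B, h • E = E ∨ h • E = Eᶜ) → False := by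
    intro E hE hor
    have all : ∀ k : K, k • E = E ∨ k • E = Eᶜ := by
      intro k
      have hk : k ∈ Subgroup.closure B := by rw [hgen]; trivial
      induction hk using Subgroup.closure_induction with
      | mem x hx => exact hor x hx
      | one => simp
      | mul x y _ _ hx hy =>
        rw [mul_smul]
        rcases hy with hy | hy <;> rcases hx with hx | hx <;> simp [hy, hx, Set.smul_set_compl]
      | inv x _ hx =>
        rcases hx with hx | hx
        · left; rw [inv_smul_eq_iff, hx]
        · right; rw [inv_smul_eq_iff, Set.smul_set_compl, hx, _root_.compl_compl]
    have f2 : {k : K | k • E = Eᶜ}.Finite := by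
      rcases Set.eq_empty_or_nonempty {k : K | k • E = Eᶜ} with h0 | ⟨k0, hk0⟩
      · rw [h0]; exact Set.finite_empty
      · refine Set.Finite.of_finite_image (f := fun k => k0⁻¹ * k) ((hstab E hE).subset ?_)
          (fun a _ b _ hab => mul_left_cancel hab)
        rintro _ ⟨k, hk, rfl⟩
        change (k0⁻¹ * k) • E = E
        rw [mul_smul, inv_smul_eq_iff]
        exact hk.trans hk0.symm
    refine Set.infinite_univ (α := K) (((hstab E hE).union f2).subset ?_)
    intro k _
    exact all k
  have fact2 : ∀ h ∈ B, ∀ E ∈ C, h • E = Eᶜ → False := by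
    intro h hh E hE hinvn
    have hc : h • Eᶜ = E := by rw [Set.smul_set_compl, hinvn, _root_.compl_compl]
    refine orb E hE ?_
    intro h' hh'
    rcases hnest _ (hinv E hE h') _ hE with h1 | h1 | h1 | h1
    · left; exact fin_order_smul_eq (hfo h' hh') h1
    · left
      have : h'⁻¹ • E ⊆ E := by rwa [Set.smul_set_subset_iff_subset_inv_smul_set, inv_inv]
      have := fin_order_smul_eq (hfo h' hh').inv this
      rw [inv_smul_eq_iff] at this
      exact this.symm
    · right
      exact (fact1 h' hh' h hh E Eᶜ h1 (by rw [hc, _root_.compl_compl]) subset_rfl).2.1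
    · right
      have h2 : h' • Eᶜ ⊆ Eᶜᶜ := by
        rw [Set.smul_set_compl, _root_.compl_compl]; exact Set.compl_subset_comm.1 h1
      have := (fact1 h' hh' h hh Eᶜ E h2 hinvn.subset (by rw [_root_.compl_compl])).2.1
      rw [Set.smul_set_compl, _root_.compl_compl] at this
      exact (compl_eq_comm.1 this).symm
  let J : Set (Set K) := {E | E ∈ C ∧ ∃ h ∈ B, h • E ⊆ Eᶜ}
  have fact4 : ∀ E ∈ J, ∀ F ∈ J, ¬ Eᶜ ⊆ F := by
    rintro E ⟨hE, h, hh, h1⟩ F ⟨hF, h', hh', h2⟩ h3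
    exact fact2 h hh E hE (fact1 h hh h' hh' E F h1 h2 h3).2.1
  have tri : ∀ h ∈ B, ∀ E ∈ C, h • E = E ∨ E ∈ J ∧ h • E ⊆ Eᶜ ∨ Eᶜ ∈ J := by
    intro h' hh' E hE
    rcases hnest _ (hinv E hE h') _ hE with h1 | h1 | h1 | h1
    · left; exact fin_order_smul_eq (hfo h' hh') h1
    · left
      have : h'⁻¹ • E ⊆ E := by rwa [Set.smul_set_subset_iff_subset_inv_smul_set, inv_inv]
      have := fin_order_smul_eq (hfo h' hh').inv this
      rw [inv_smul_eq_iff] at this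
      exact this.symm
    · right; left; exact ⟨⟨hE, h', hh', h1⟩, h1⟩
    · right; right
      refine ⟨hcompl E hE, h', hh', ?_⟩
      rw [Set.smul_set_compl, _root_.compl_compl]; exact Set.compl_subset_comm.1 h1
  have fact3 : ∀ E ∈ C, E ∈ J ∨ Eᶜ ∈ J := by
    intro E hE
    by_contra hcon
    push Not at hcon
    refine orb E hE fun h hh => ?_
    rcases tri h hh E hE with h1 | h1 | h1
    · exact Or.inl h1
    · exact absurd h1.1 hcon.1
    · exact absurd h1 hcon.2
  have fact5 : ∀ k : K, ∀ E ∈ J, k • E ∈ J := by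
    intro k
    have hk : k ∈ Subgroup.closure B := by rw [hgen]; trivial
    induction hk using Subgroup.closure_induction with
    | mem x hx =>
      intro E hE
      rcases tri x hx E hE.1 with h1 | h1 | h1
      · rwa [h1]
      · refine ⟨hinv E hE.1 x, x, hx, ?_⟩
        rw [← Set.smul_set_compl]
        exact Set.smul_set_mono h1.2
      · exact (fact4 E hE _ h1 subset_rfl).elim
    | one => intro E hE; rwa [one_smul]
    | mul x y _ _ hx hy => intro E hE; rw [mul_smul]; exact hx _ (hy _ hE)
    | inv x _ hx =>
      intro E hE
      rcases fact3 _ (hinv E hE.1 x⁻¹) with h1 | h1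
      · exact h1
      · have := hx _ h1
        rw [← Set.smul_set_compl, smul_inv_smul] at this
        exact (fact4 E hE _ this subset_rfl).elim
  have fact6 : ∀ E ∈ J, ∀ k : K, E ⊆ k • E → k • E = E := by
    intro E hE k hk
    have step : ∀ n : ℕ, E ⊆ k ^ n • E := by
      intro n
      induction n with
      | zero => simp
      | succ n ih =>
        rw [pow_succ', mul_smul]
        exact hk.trans (Set.smul_set_mono ih)
    obtain ⟨x, hx⟩ := (hinf E hE.1).nonempty
    have hfin : (⋃ h ∈ B, {F | F ∈ C ∧ x ∈ F ∧ h * x ∉ F}).Finite :=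
      hB.biUnion fun h _ => hsep x (h * x)
    have hmem : ∀ n : ℕ, k ^ n • E ∈ (⋃ h ∈ B, {F | F ∈ C ∧ x ∈ F ∧ h * x ∉ F}) := by
      intro n
      obtain ⟨hC, h, hh, h1⟩ := fact5 (k ^ n) E hE
      simp only [Set.mem_iUnion]
      exact ⟨h, hh, hC, step n hx, h1 (Set.smul_mem_smul_set (step n hx))⟩
    have hninj : ¬ Function.Injective (fun n : ℕ => k ^ n • E) := by
      intro hi
      exact Set.infinite_of_injective_forall_mem hi hmem hfin
    have : ∃ i d : ℕ, k ^ i • E = k ^ (i + (d + 1)) • E := by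
      simp only [Function.Injective] at hninj
      push Not at hninj
      obtain ⟨i, j, hij, hne⟩ := hninj
      rcases lt_or_gt_of_ne hne with h | h
      · exact ⟨i, j - i - 1, by rw [show i + (j - i - 1 + 1) = j by omega]; exact hij⟩
      · exact ⟨j, i - j - 1, by rw [show j + (i - j - 1 + 1) = i by omega]; exact hij.symm⟩
    obtain ⟨i, d, hid⟩ := this
    rw [pow_add, mul_smul] at hid
    have h2 := smul_left_cancel _ hid
    refine Set.Subset.antisymm ?_ hk
    nth_rewrite 2 [h2]
    rw [pow_succ', mul_smul]
    exact Set.smul_set_mono (step d)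
  have : ∃ E, E ∈ J := by
    obtain ⟨E, hE⟩ := hne
    rcases fact3 E hE with h | h
    exacts [⟨_, h⟩, ⟨_, h⟩]
  obtain ⟨E, hE⟩ := this
  obtain ⟨x, hx⟩ := (hinf E hE.1).nonempty
  refine hinf E hE.1 (Set.Finite.of_finite_image (f := fun y => y * x⁻¹)
    ((hstab E hE.1).subset ?_) (fun a _ b _ hab => mul_right_cancel hab))
  rintro _ ⟨y, hy, rfl⟩
  change (y * x⁻¹) • E = E
  have hy2 : y ∈ (y * x⁻¹) • E := by
    have := Set.smul_mem_smul_set (a := y * x⁻¹) hx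
    simpa using this
  rcases hnest _ (hinv E hE.1 (y * x⁻¹)) _ hE.1 with h1 | h1 | h1 | h1
  · have : E ⊆ (y * x⁻¹)⁻¹ • E := by rwa [← Set.smul_set_subset_iff_subset_inv_smul_set]
    have := fact6 E hE _ this
    rw [inv_smul_eq_iff] at this
    exact this.symm
  · exact fact6 E hE _ h1
  · exact (h1 hy2 hy).elim
  · exact (fact4 E hE _ (fact5 _ E hE) h1).elim

/-- The two endpoints of `p` lie on different sides of `E`. -/
def cutSep {K : Type*} (E : Set K) (p : K × K) : Prop := ¬ (p.1 ∈ E ↔ p.2 ∈ E)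

open Classical in
/-- Weighted size of the boundary of `E`. -/
noncomputable def cutWeight {K : Type*} [Group K] (w : K → ENNReal) (E : Set K) : ENNReal :=
  ∑' p : K × K, if cutSep E p then w (p.1⁻¹ * p.2) else 0

/-- The boundary edges of `E` in the Cayley graph of `S`. -/
def cutEdges {K : Type*} [Group K] (S : Set K) (E : Set K) : Set (K × K) :=
  {p | p.1⁻¹ * p.2 ∈ S ∧ cutSep E p}

theorem cutWeight_compl {K : Type*} [Group K] (w : K → ENNReal) (E : Set K) :
    cutWeight w Eᶜ = cutWeight w E := by
  unfold cutWeight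
  have : ∀ p, cutSep Eᶜ p ↔ cutSep E p := by
    intro p; simp only [cutSep, Set.mem_compl_iff]; tauto
  classical
  exact tsum_congr fun p => if_congr (this p) rfl rfl

theorem cutWeight_smul {K : Type*} [Group K] (w : K → ENNReal) (E : Set K) (k : K) :
    cutWeight w (k • E) = cutWeight w E := by
  unfold cutWeight
  rw [← Equiv.tsum_eq ((Equiv.mulLeft k).prodCongr (Equiv.mulLeft k))]
  classical
  refine tsum_congr fun p => ?_
  have : cutSep (k • E) (k * p.1, k * p.2) ↔ cutSep E p := by
    simp only [cutSep, Set.mem_smul_set_iff_inv_smul_mem, smul_eq_mul, inv_mul_cancel_left]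
  have h2 : (k * p.1)⁻¹ * (k * p.2) = p.1⁻¹ * p.2 := by group
  exact if_congr this (congrArg w h2) rfl

theorem cutWeight_submod {K : Type*} [Group K] (w : K → ENNReal) (E F : Set K) :
    cutWeight w (E ∩ F) + cutWeight w (E ∪ F) ≤ cutWeight w E + cutWeight w F := by
  unfold cutWeight
  rw [← ENNReal.tsum_add, ← ENNReal.tsum_add]
  refine ENNReal.tsum_le_tsum fun p => ?_
  simp only [cutSep, Set.mem_inter_iff, Set.mem_union]
  by_cases h1 : p.1 ∈ E <;> by_cases h2 : p.2 ∈ E <;> by_cases h3 : p.1 ∈ F <;>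
    by_cases h4 : p.2 ∈ F <;> simp [h1, h2, h3, h4]

theorem cutWeight_strict {K : Type*} [Group K] (w : K → ENNReal) (hw : ∀ k, w k ≠ 0)
    (E F : Set K) (x y : K) (hx : x ∈ E) (hx' : x ∉ F) (hy : y ∈ F) (hy' : y ∉ E)
    (hE : cutWeight w E ≠ ⊤) (hF : cutWeight w F ≠ ⊤) :
    cutWeight w (E ∩ F) + cutWeight w (E ∪ F) < cutWeight w E + cutWeight w F := by
  have hfin : cutWeight w (E ∩ F) + cutWeight w (E ∪ F) ≠ ⊤ :=
    ne_top_of_le_ne_top (ENNReal.add_ne_top.2 ⟨hE, hF⟩) (cutWeight_submod w E F)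
  unfold cutWeight at hfin ⊢
  rw [← ENNReal.tsum_add] at hfin ⊢
  rw [← ENNReal.tsum_add]
  refine ENNReal.tsum_lt_tsum (i := (x, y)) hfin (fun p => ?_) ?_
  · simp only [cutSep, Set.mem_inter_iff, Set.mem_union]
    by_cases h1 : p.1 ∈ E <;> by_cases h2 : p.2 ∈ E <;> by_cases h3 : p.1 ∈ F <;>
      by_cases h4 : p.2 ∈ F <;> simp [h1, h2, h3, h4]
  · simp [cutSep, hx, hx', hy, hy', pos_iff_ne_zero, hw]

theorem cutWeight_indicator {K : Type*} [Group K] (S : Set K) (E : Set K) :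
    cutWeight (S.indicator 1) E = ((cutEdges S E).encard : ENNReal) := by
  classical
  rw [← ENNReal.tsum_set_one, tsum_subtype (cutEdges S E) (fun _ => (1 : ENNReal))]
  unfold cutWeight
  congr 1; ext p
  by_cases h1 : p.1⁻¹ * p.2 ∈ S <;> by_cases h2 : cutSep E p <;>
    simp [cutEdges, Set.indicator, h1, h2]

theorem cutEdges_submod {K : Type*} [Group K] (S : Set K) (E F : Set K) :
    (cutEdges S (E ∩ F)).encard + (cutEdges S (E ∪ F)).encard ≤
      (cutEdges S E).encard + (cutEdges S F).encard := by
  have := cutWeight_submod (S.indicator 1) E F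
  simp only [cutWeight_indicator] at this
  exact_mod_cast this

theorem cutEdges_compl {K : Type*} [Group K] (S : Set K) (E : Set K) :
    cutEdges S Eᶜ = cutEdges S E := by
  ext p; simp only [cutEdges, cutSep, Set.mem_compl_iff, Set.mem_ofPred_eq]; tauto

theorem cutEdges_smul {K : Type*} [Group K] (S : Set K) (E : Set K) (k : K) :
    (cutEdges S (k • E)).encard = (cutEdges S E).encard := by
  have := cutWeight_smul (S.indicator 1) E k
  simp only [cutWeight_indicator] at this
  exact_mod_cast this

theorem cutEdges_nonempty {K : Type*} [Group K] (S : Set K) (hS : Subgroup.closure S = ⊤)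
    (E : Set K) (x y : K) (hx : x ∈ E) (hy : y ∉ E) : (cutEdges S E).Nonempty := by
  by_contra hcon
  rw [Set.not_nonempty_iff_eq_empty] at hcon
  have key : ∀ k x : K, x ∈ E ↔ x * k ∈ E := by
    intro k
    have hk : k ∈ Subgroup.closure S := by rw [hS]; trivial
    induction hk using Subgroup.closure_induction with
    | mem s hs =>
      intro x
      by_contra h
      have : (x, x * s) ∈ cutEdges S E := ⟨by simpa using hs, h⟩
      rw [hcon] at this; exact this
    | one => simp
    | mul a b _ _ ha hb => intro x; rw [← mul_assoc, ← hb, ← ha]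
    | inv a _ ha => intro x; rw [ha (x * a⁻¹), inv_mul_cancel_right]
  apply hy
  have := (key (x⁻¹ * y) x).1 hx
  simpa using this

/-- Infinite and co-infinite. -/
def BigCut {K : Type*} (E : Set K) : Prop := E.Infinite ∧ Eᶜ.Infinite

theorem BigCut.compl {K : Type*} {E : Set K} (h : BigCut E) : BigCut Eᶜ :=
  ⟨h.2, by rw [_root_.compl_compl]; exact h.1⟩

theorem BigCut.smul {K : Type*} [Group K] {E : Set K} (h : BigCut E) (k : K) :
    BigCut (k • E) :=
  ⟨h.1.smul_set, by rw [← Set.smul_set_compl]; exact h.2.smul_set⟩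

/-- Minimal cuts. -/
def minCuts {K : Type*} [Group K] (S : Set K) (m : ℕ) : Set (Set K) :=
  {E | BigCut E ∧ (cutEdges S E).encard = m}

theorem minCuts_compl {K : Type*} [Group K] {S : Set K} {m : ℕ} {E : Set K}
    (h : E ∈ minCuts S m) : Eᶜ ∈ minCuts S m :=
  ⟨h.1.compl, by rw [cutEdges_compl]; exact h.2⟩

theorem minCuts_smul {K : Type*} [Group K] {S : Set K} {m : ℕ} {E : Set K}
    (h : E ∈ minCuts S m) (k : K) : k • E ∈ minCuts S m :=
  ⟨h.1.smul k, by rw [cutEdges_smul]; exact h.2⟩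

theorem minCuts_conn {K : Type*} [Group K] {S : Set K} (hS : Subgroup.closure S = ⊤) {m : ℕ}
    (hmin : ∀ E : Set K, BigCut E → (m : ℕ∞) ≤ (cutEdges S E).encard)
    {E : Set K} (hE : E ∈ minCuts S m) (T : Set K) (hT : T.Finite) (x : K) (hx : x ∈ E)
    (hxT : x ∈ T) :
    ∃ p : K × K, p.1⁻¹ * p.2 ∈ S ∧ p.1 ∈ E ∧ p.2 ∈ E ∧ ¬ (p.1 ∈ T ↔ p.2 ∈ T) := by
  by_contra hcon
  push Not at hcon
  obtain ⟨y, hy⟩ := hE.1.2.nonempty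
  obtain ⟨q, hq⟩ := cutEdges_nonempty S hS (E ∩ T) x y ⟨hx, hxT⟩ (fun h => hy h.1)
  have hbig : BigCut (E \ T) :=
    ⟨hE.1.1.sdiff hT, hE.1.2.mono (Set.compl_subset_compl.2 Set.sdiff_subset)⟩
  have h1 := hmin _ hbig
  have hfin : (cutEdges S E).Finite := Set.finite_of_encard_eq_coe hE.2
  have hss : cutEdges S (E \ T) ⊂ cutEdges S E := by
    refine (Set.ssubset_iff_of_subset ?_).2 ⟨q, ?_, ?_⟩
    · rintro p ⟨hp1, hp2⟩
      refine ⟨hp1, ?_⟩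
      have := hcon p hp1
      simp only [cutSep, Set.mem_sdiff] at hp2 ⊢
      tauto
    · obtain ⟨hp1, hp2⟩ := hq
      refine ⟨hp1, ?_⟩
      have := hcon q hp1
      simp only [cutSep, Set.mem_inter_iff] at hp2 ⊢
      tauto
    · obtain ⟨hp1, hp2⟩ := hq
      rintro ⟨_, hp3⟩
      have := hcon q hp1
      simp only [cutSep, Set.mem_inter_iff, Set.mem_sdiff] at hp2 hp3
      tauto
  have h2 := (hfin.subset hss.subset).encard_lt_encard hss
  rw [hE.2] at h2
  exact absurd h1 (not_le.2 h2)

theorem minCuts_sep_finite {K : Type*} [Group K] {S : Set K} (hSf : S.Finite)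
    (hS : Subgroup.closure S = ⊤) {m : ℕ}
    (hmin : ∀ E : Set K, BigCut E → (m : ℕ∞) ≤ (cutEdges S E).encard) (x y : K) :
    {E | E ∈ minCuts S m ∧ x ∈ E ∧ y ∉ E}.Finite := by
  by_contra hinf
  have hne := Set.Infinite.cofinite_inf_principal_neBot hinf
  set M0 := {E | E ∈ minCuts S m ∧ x ∈ E ∧ y ∉ E} with hM0
  let U : Ultrafilter (Set K) := Ultrafilter.of (Filter.cofinite ⊓ Filter.principal M0)
  have hU : (U : Filter (Set K)) ≤ Filter.cofinite ⊓ Filter.principal M0 := Ultrafilter.of_le _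
  have hUM : ∀ᶠ E in (U : Filter (Set K)), E ∈ M0 :=
    Filter.le_principal_iff.1 (hU.trans inf_le_right)
  let L : Set K := {z | ∀ᶠ E in (U : Filter (Set K)), z ∈ E}
  have agree1 : ∀ z : K, ∀ᶠ E in (U : Filter (Set K)), (z ∈ E ↔ z ∈ L) := by
    intro z
    by_cases hz : z ∈ L
    · have hz' : ∀ᶠ E in (U : Filter (Set K)), z ∈ E := hz
      filter_upwards [hz'] with E hE
      simp [hE, hz]
    · have hz' : ∀ᶠ E in (U : Filter (Set K)), ¬ z ∈ E := Ultrafilter.eventually_not.2 hz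
      filter_upwards [hz'] with E hE
      simp [hE, hz]
  have agree : ∀ T : Set K, T.Finite →
      ∀ᶠ E in (U : Filter (Set K)), ∀ z ∈ T, (z ∈ E ↔ z ∈ L) := by
    intro T hT
    exact (Filter.eventually_all_finite hT).2 fun z _ => agree1 z
  have hxL : x ∈ L := hUM.mono fun E hE => hE.2.1
  have hyL : y ∉ L := by
    obtain ⟨E, h1, h2⟩ := ((agree1 y).and hUM).exists
    exact fun h => h2.2.2 (h1.2 h)
  have hsub : ∀ t : Set (K × K), t.Finite → t ⊆ cutEdges S L →
      ∀ᶠ E in (U : Filter (Set K)), t ⊆ cutEdges S E := by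
    intro t ht htL
    filter_upwards [agree _ ((ht.image Prod.fst).union (ht.image Prod.snd))] with E hE p hp
    refine ⟨(htL hp).1, ?_⟩
    have h1 := hE p.1 (Or.inl ⟨p, hp, rfl⟩)
    have h2 := hE p.2 (Or.inr ⟨p, hp, rfl⟩)
    have h3 := (htL hp).2
    unfold cutSep at h3 ⊢
    rwa [h1, h2]
  have hle : (cutEdges S L).encard ≤ m := by
    by_contra hcon
    push Not at hcon
    have : ((m + 1 : ℕ) : ℕ∞) ≤ (cutEdges S L).encard := by
      push_cast
      exact Order.add_one_le_of_lt hcon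
    obtain ⟨t, htL, ht⟩ := Set.exists_subset_encard_eq this
    obtain ⟨E, h1, h2⟩ := ((hsub t (Set.finite_of_encard_eq_coe ht) htL).and hUM).exists
    have := Set.encard_le_encard h1
    rw [ht, h2.1.2] at this
    have := ENat.natCast_le_natCast.1 this
    omega
  have inf_aux : ∀ (L' : Set K) (f : Set K → Set K) (x : K), x ∈ L' →
      (∀ E ∈ M0, f E ∈ minCuts S m ∧ x ∈ f E) →
      (∀ T : Set K, T.Finite → ∀ᶠ E in (U : Filter (Set K)), ∀ z ∈ T, (z ∈ f E ↔ z ∈ L')) →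
      L'.Infinite := by
    intro L' f x hx hf hag hL'
    let T : Set K := L' ∪ (L' * S ∪ L' * S⁻¹)
    have hT : T.Finite := hL'.union ((hL'.mul hSf).union (hL'.mul hSf.inv))
    obtain ⟨E, h1, h2⟩ := ((hag T hT).and hUM).exists
    obtain ⟨p, hp, hp1, hp2, hp3⟩ := minCuts_conn hS hmin (hf E h2).1 L' hL' x (hf E h2).2 hx
    apply hp3
    constructor
    · intro h
      refine (h1 _ (Or.inr (Or.inl ?_))).1 hp2
      exact ⟨p.1, h, _, hp, by simp⟩
    · intro h
      refine (h1 _ (Or.inr (Or.inr ?_))).1 hp1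
      exact ⟨p.2, h, (p.1⁻¹ * p.2)⁻¹, Set.inv_mem_inv.2 hp, by simp⟩
  have hbig : BigCut L := by
    constructor
    · exact inf_aux L id x hxL (fun E hE => ⟨hE.1, hE.2.1⟩) agree
    · refine inf_aux Lᶜ compl y hyL (fun E hE => ⟨minCuts_compl hE.1, hE.2.2⟩) ?_
      intro T hT
      filter_upwards [agree T hT] with E hE z hz
      exact not_congr (hE z hz)
  have hL : (cutEdges S L).encard = m := le_antisymm hle (hmin L hbig)
  have hLf : (cutEdges S L).Finite := Set.finite_of_encard_eq_coe hL
  have hev : ∀ᶠ E in (U : Filter (Set K)), E = L := by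
    filter_upwards [hsub _ hLf subset_rfl, hUM] with E h1 h2
    have heq : cutEdges S L = cutEdges S E := by
      refine hLf.eq_of_subset_of_encard_le h1 ?_
      rw [hL, h2.1.2]
    by_contra hne
    have : ∃ z, ¬ (z ∈ E ↔ z ∈ L) := by
      by_contra h
      push Not at h
      exact hne (Set.ext h)
    obtain ⟨z, hz⟩ := this
    obtain ⟨p, hp1, hp2⟩ := cutEdges_nonempty S hS {z | z ∈ E ↔ z ∈ L} x z
      (by simp [h2.2.1, hxL]) hz
    have h3 : p ∈ cutEdges S L ↔ p ∈ cutEdges S E := by rw [heq]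
    simp only [cutEdges, cutSep, Set.mem_ofPred_eq] at h3 hp2
    tauto
  have hcof : ∀ᶠ E in (U : Filter (Set K)), E ≠ L := by
    have : ∀ᶠ E in (Filter.cofinite : Filter (Set K)), E ≠ L := by
      simp
    exact (hU.trans inf_le_left) this
  obtain ⟨E, h1, h2⟩ := (hev.and hcof).exists
  exact h2 h1

theorem minCuts_bound {K : Type*} [Group K] {S : Set K} (hS : Subgroup.closure S = ⊤) (m : ℕ)
    (g : K) : ∃ c : ℕ, ∀ E ∈ minCuts S m, {x : K | cutSep E (x, x * g)}.encard ≤ c := by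
  have hk : g ∈ Subgroup.closure S := by rw [hS]; trivial
  induction hk using Subgroup.closure_induction with
  | mem s hs =>
    refine ⟨m, fun E hE => ?_⟩
    rw [← hE.2]
    have hinj : Function.Injective (fun x : K => (x, x * s)) := fun a b h => (Prod.ext_iff.1 h).1
    rw [← hinj.encard_image]
    apply Set.encard_le_encard
    rintro _ ⟨x, hx, rfl⟩
    exact ⟨by simpa using hs, hx⟩
  | one => exact ⟨0, fun E _ => by simp [cutSep]⟩
  | mul a b _ _ ha hb =>
    obtain ⟨c, hc⟩ := ha
    obtain ⟨d, hd⟩ := hb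
    refine ⟨c + d, fun E hE => ?_⟩
    have h1 : {x : K | cutSep E (x, x * (a * b))} ⊆ {x : K | cutSep E (x, x * a)} ∪
        (fun x => x * a) ⁻¹' {x : K | cutSep E (x, x * b)} := by
      intro x hx
      simp only [cutSep, Set.mem_ofPred_eq, Set.mem_union, Set.mem_preimage, ← mul_assoc] at hx ⊢
      tauto
    refine (Set.encard_le_encard h1).trans ((Set.encard_union_le _ _).trans ?_)
    rw [Set.encard_preimage_of_bijective (Group.mulRight_bijective a)]
    push_cast
    exact add_le_add (hc E hE) (hd E hE)
  | inv a _ ha =>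
    obtain ⟨c, hc⟩ := ha
    refine ⟨c, fun E hE => ?_⟩
    have h1 : {x : K | cutSep E (x, x * a⁻¹)} =
        (fun x => x * a⁻¹) ⁻¹' {x : K | cutSep E (x, x * a)} := by
      ext x
      simp only [cutSep, Set.mem_ofPred_eq, Set.mem_preimage, inv_mul_cancel_right]
      tauto
    rw [h1, Set.encard_preimage_of_bijective (Group.mulRight_bijective a⁻¹)]
    exact hc E hE

theorem cutWeight_eq {K : Type*} [Group K] (w : K → ENNReal) (E : Set K) :
    cutWeight w E = ∑' g : K, ({x : K | cutSep E (x, x * g)}.encard : ENNReal) * w g := by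
  classical
  unfold cutWeight
  let e : K × K ≃ K × K :=
    { toFun := fun q => (q.2, q.2 * q.1)
      invFun := fun p => (p.1⁻¹ * p.2, p.1)
      left_inv := fun q => by simp
      right_inv := fun p => by simp }
  rw [← Equiv.tsum_eq e, ENNReal.tsum_prod']
  congr 1; ext g
  rw [← ENNReal.tsum_set_one, tsum_subtype _ (fun _ => (1 : ENNReal)), ← ENNReal.tsum_mul_right]
  congr 1; ext x
  by_cases h : cutSep E (x, x * g)
  · have h' : x ∈ {x : K | cutSep E (x, x * g)} := h
    simp [e, h]
  · have h' : x ∉ {x : K | cutSep E (x, x * g)} := h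
    simp [e, h]

theorem countable_of_closure {K : Type*} [Group K] {S : Set K} (hSf : S.Finite)
    (hS : Subgroup.closure S = ⊤) : Countable K := by
  have : Countable S := hSf.countable
  have h1 : Function.Surjective (FreeGroup.mk (α := S)) := Quot.mk_surjective
  have : Countable (FreeGroup S) := h1.countable
  have h2 : Function.Surjective (FreeGroup.lift (Subtype.val : S → K)) := by
    rw [← MonoidHom.range_eq_top, FreeGroup.range_lift_eq_closure]
    simpa using hS
  exact h2.countable

theorem minCuts_stab {K : Type*} [Group K] {S : Set K} (hS : Subgroup.closure S = ⊤) {m : ℕ}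
    {E : Set K} (hE : E ∈ minCuts S m) : {k : K | k • E = E}.Finite := by
  obtain ⟨x, hx⟩ := hE.1.1.nonempty
  obtain ⟨y, hy⟩ := hE.1.2.nonempty
  obtain ⟨q, hq1, hq2⟩ := cutEdges_nonempty S hS E x y hx hy
  have hfin : (cutEdges S E).Finite := Set.finite_of_encard_eq_coe hE.2
  refine Set.Finite.of_finite_image (f := fun k => (k * q.1, k * q.2)) (hfin.subset ?_)
    (fun a _ b _ hab => mul_right_cancel (Prod.ext_iff.1 hab).1)
  rintro _ ⟨k, hk, rfl⟩
  refine ⟨by simpa [mul_assoc] using hq1, ?_⟩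
  have hk' : k • E = E := hk
  have aux : ∀ z, k * z ∈ E ↔ z ∈ E := by
    intro z
    nth_rewrite 1 [← hk']
    simp [Set.mem_smul_set_iff_inv_smul_mem]
  simpa [cutSep, aux] using hq2

theorem serre_main {K : Type*} [Group K] (E0 : Set K) (hE0 : BigCut E0)
    (hai : ∀ k : K, {x : K | cutSep E0 (x, x * k)}.Finite)
    (B : Set K) (hB : B.Finite) (hgen : Subgroup.closure B = ⊤)
    (hfo : ∀ h ∈ B, IsOfFinOrder h)
    (hfo2 : ∀ h ∈ B, ∀ h' ∈ B, IsOfFinOrder (h' * h)) : False := by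
  have : Countable K := countable_of_closure hB hgen
  have : Infinite K := Set.infinite_univ_iff.1 (hE0.1.mono (Set.subset_univ _))
  -- the minimal boundary size
  have hfin0 : (cutEdges B E0).Finite := by
    have : (⋃ s ∈ B, (fun x => (x, x * s)) '' {x : K | cutSep E0 (x, x * s)}).Finite :=
      hB.biUnion fun s _ => (hai s).image _
    refine this.subset ?_
    rintro ⟨a, b⟩ ⟨hp1, hp2⟩
    simp only [Set.mem_iUnion]
    exact ⟨_, hp1, a, by simpa using hp2, by simp⟩
  have hex : ∃ m : ℕ, ∃ E : Set K, BigCut E ∧ (cutEdges B E).encard = m :=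
    ⟨_, E0, hE0, hfin0.encard_eq_coe⟩
  classical
  obtain ⟨m, hm, hm'⟩ : ∃ m : ℕ, (∃ E : Set K, BigCut E ∧ (cutEdges B E).encard = m) ∧
      ∀ n : ℕ, n < m → ¬ ∃ E : Set K, BigCut E ∧ (cutEdges B E).encard = n :=
    ⟨Nat.find hex, Nat.find_spec hex, fun n hn => Nat.find_min hex hn⟩
  have hmin : ∀ E : Set K, BigCut E → (m : ℕ∞) ≤ (cutEdges B E).encard := by
    intro E hE
    by_contra hcon
    push Not at hcon
    obtain ⟨n, hn⟩ := ENat.ne_top_iff_exists.1 (ne_top_of_lt hcon)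
    rw [← hn] at hcon
    exact hm' n (by exact_mod_cast hcon) ⟨E, hE, hn.symm⟩
  -- weights
  choose c hc using minCuts_bound hgen m
  obtain ⟨w, hw0, hw⟩ := ENNReal.exists_pos_tsum_mul_lt_of_countable (ε := 1) one_ne_zero
    (fun g : K => (c g : ENNReal)) (fun g => ENNReal.natCast_ne_top _)
  let W : K → ENNReal := fun g => (w g : ENNReal)
  have hW0 : ∀ k, W k ≠ 0 := fun k => by simpa [W] using (hw0 k).ne'
  have hWfin : ∀ E ∈ minCuts B m, cutWeight W E ≠ ⊤ := by
    intro E hE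
    rw [cutWeight_eq]
    refine ne_top_of_le_ne_top (ne_top_of_lt hw) (ENNReal.tsum_le_tsum fun g => ?_)
    gcongr
    have := hc g E hE
    exact_mod_cast ENat.toENNReal_le.2 this
  -- the minimum of the weight is attained
  have hM0 : (⋃ s ∈ B, {E | E ∈ minCuts B m ∧ 1 ∈ E ∧ s ∉ E}).Finite :=
    hB.biUnion fun s _ => minCuts_sep_finite hB hgen hmin 1 s
  have hrep : ∀ E ∈ minCuts B m, ∃ E' ∈ (⋃ s ∈ B, {E | E ∈ minCuts B m ∧ 1 ∈ E ∧ s ∉ E}),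
      cutWeight W E' = cutWeight W E := by
    intro E hE
    obtain ⟨x, hx⟩ := hE.1.1.nonempty
    obtain ⟨y, hy⟩ := hE.1.2.nonempty
    obtain ⟨q, hq1, hq2⟩ := cutEdges_nonempty B hgen E x y hx hy
    have aux : ∀ F ∈ minCuts B m, q.1 ∈ F → q.2 ∉ F →
        q.1⁻¹ • F ∈ (⋃ s ∈ B, {E | E ∈ minCuts B m ∧ 1 ∈ E ∧ s ∉ E}) := by
      intro F hF h1 h2
      simp only [Set.mem_iUnion]
      refine ⟨_, hq1, minCuts_smul hF _, ?_, ?_⟩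
      · simpa [Set.mem_smul_set_iff_inv_smul_mem] using h1
      · simpa [Set.mem_smul_set_iff_inv_smul_mem] using h2
    by_cases h1 : q.1 ∈ E
    · exact ⟨_, aux E hE h1 (by simp only [cutSep] at hq2; tauto), cutWeight_smul _ _ _⟩
    · refine ⟨_, aux Eᶜ (minCuts_compl hE) h1 ?_, ?_⟩
      · simp only [cutSep] at hq2; simp only [Set.mem_compl_iff]; tauto
      · rw [cutWeight_smul, cutWeight_compl]
  obtain ⟨Em, hEm⟩ := hm
  have hEm : Em ∈ minCuts B m := hEm
  obtain ⟨E', hE', _⟩ := hrep Em hEm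
  obtain ⟨E1, hE1, hE1min⟩ := Set.exists_min_image _ (cutWeight W) hM0 ⟨E', hE'⟩
  have hE1M : E1 ∈ minCuts B m := by
    simp only [Set.mem_iUnion] at hE1
    obtain ⟨s, _, h, _⟩ := hE1
    exact h
  have hE1' : ∀ E ∈ minCuts B m, cutWeight W E1 ≤ cutWeight W E := by
    intro E hE
    obtain ⟨E'', h1, h2⟩ := hrep E hE
    rw [← h2]; exact hE1min _ h1
  let C : Set (Set K) := {E | E ∈ minCuts B m ∧ cutWeight W E = cutWeight W E1}
  have hCc : ∀ E ∈ C, Eᶜ ∈ C := fun E hE =>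
    ⟨minCuts_compl hE.1, by rw [cutWeight_compl]; exact hE.2⟩
  -- uncrossing
  have uncross : ∀ E ∈ C, ∀ F ∈ C, (E ∩ F).Infinite → (E ∪ F)ᶜ.Infinite → E ⊆ F ∨ F ⊆ E := by
    intro E hE F hF h1 h2
    have b1 : BigCut (E ∩ F) :=
      ⟨h1, hE.1.1.2.mono (Set.compl_subset_compl.2 Set.inter_subset_left)⟩
    have b2 : BigCut (E ∪ F) := ⟨hE.1.1.1.mono Set.subset_union_left, h2⟩
    have s1 := cutEdges_submod B E F
    rw [hE.1.2, hF.1.2] at s1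
    have m1 := hmin _ b1
    have m2 := hmin _ b2
    have fin1 : (cutEdges B (E ∩ F)).encard ≠ ⊤ := by
      intro h; rw [h, top_add] at s1; exact absurd s1 (by simp [← Nat.cast_add])
    have fin2 : (cutEdges B (E ∪ F)).encard ≠ ⊤ := by
      intro h; rw [h, add_top] at s1; exact absurd s1 (by simp [← Nat.cast_add])
    obtain ⟨n1, hn1⟩ := ENat.ne_top_iff_exists.1 fin1
    obtain ⟨n2, hn2⟩ := ENat.ne_top_iff_exists.1 fin2
    rw [← hn1, ← hn2] at s1
    rw [← hn1] at m1
    rw [← hn2] at m2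
    norm_cast at s1 m1 m2
    have M1 : E ∩ F ∈ minCuts B m := ⟨b1, by rw [← hn1]; congr 1; omega⟩
    have M2 : E ∪ F ∈ minCuts B m := ⟨b2, by rw [← hn2]; congr 1; omega⟩
    by_contra hcon
    push Not at hcon
    obtain ⟨x, hx, hx'⟩ := Set.not_subset.1 hcon.1
    obtain ⟨y, hy, hy'⟩ := Set.not_subset.1 hcon.2
    have hlt := cutWeight_strict W hW0 E F x y hx hx' hy hy' (hWfin E hE.1) (hWfin F hF.1)
    rw [hE.2, hF.2] at hlt
    exact absurd (add_le_add (hE1' _ M1) (hE1' _ M2)) (not_le.2 hlt)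
  refine serre_nested C (fun E hE k => ⟨minCuts_smul hE.1 k, by rw [cutWeight_smul]; exact hE.2⟩)
    hCc ?_ ?_ (fun E hE => minCuts_stab hgen hE.1) (fun E hE => hE.1.1.1) ⟨E1, hE1M, rfl⟩
    B hB hgen hfo hfo2
  · intro E hE F hF
    by_cases h : (E ∩ F).Infinite ∧ (E ∪ F)ᶜ.Infinite
    · rcases uncross E hE F hF h.1 h.2 with h | h
      · exact Or.inl h
      · exact Or.inr (Or.inl h)
    by_cases h' : (E ∩ Fᶜ).Infinite ∧ (E ∪ Fᶜ)ᶜ.Infinite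
    · rcases uncross E hE Fᶜ (hCc F hF) h'.1 h'.2 with h | h
      · exact Or.inr (Or.inr (Or.inl h))
      · exact Or.inr (Or.inr (Or.inr h))
    exfalso
    simp only [Set.compl_union, _root_.compl_compl, not_and_or, Set.not_infinite] at h h'
    have e1 : (E ∩ F) ∪ (E ∩ Fᶜ) = E := Set.inter_union_compl E F
    have e2 : (Eᶜ ∩ F) ∪ (Eᶜ ∩ Fᶜ) = Eᶜ := Set.inter_union_compl Eᶜ F
    have e3 : (E ∩ F) ∪ (Eᶜ ∩ F) = F := by
      rw [← Set.union_inter_distrib_right, Set.union_compl_self, Set.univ_inter]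
    have e4 : (E ∩ Fᶜ) ∪ (Eᶜ ∩ Fᶜ) = Fᶜ := by
      rw [← Set.union_inter_distrib_right, Set.union_compl_self, Set.univ_inter]
    rcases h with h | h <;> rcases h' with h' | h'
    · exact hE.1.1.1 (e1 ▸ h.union h')
    · exact hF.1.1.1 (e3 ▸ h.union h')
    · exact hF.1.1.2 (e4 ▸ h'.union h)
    · exact hE.1.1.2 (e2 ▸ h'.union h)
  · intro x y
    exact (minCuts_sep_finite hB hgen hmin x y).subset fun E hE => ⟨hE.1.1, hE.2⟩

/-- A nonabelian or cyclic free group has an almost invariant subset. -/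
theorem freeGroup_bigCut {X : Type*} (x : X) :
    ∃ E : Set (FreeGroup X), BigCut E ∧
      ∀ k : FreeGroup X, {z | cutSep E (z, z * k)}.Finite := by
  classical
  let E0 : Set (FreeGroup X) := {z | z⁻¹.toWord.getLast? = some (x, true)}
  have hpow : ∀ n : ℕ, (FreeGroup.of x)⁻¹ ^ (n + 1) ∈ E0 := by
    intro n
    change ((FreeGroup.of x)⁻¹ ^ (n + 1))⁻¹.toWord.getLast? = some (x, true)
    rw [inv_pow, inv_inv, FreeGroup.toWord_of_pow, List.getLast?_replicate]
    simp
  have hpow' : ∀ n : ℕ, FreeGroup.of x ^ n ∉ E0 := by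
    intro n
    change ¬ (FreeGroup.of x ^ n)⁻¹.toWord.getLast? = some (x, true)
    rw [FreeGroup.toWord_inv, FreeGroup.toWord_of_pow]
    simp [FreeGroup.invRev, List.getLast?_replicate]
  have hinj : Function.Injective (fun n : ℕ => FreeGroup.of x ^ n) := by
    intro a b h
    have := congrArg FreeGroup.norm h
    simpa using this
  refine ⟨E0, ⟨?_, ?_⟩, ?_⟩
  · refine Set.infinite_of_injective_forall_mem (f := fun n : ℕ => (FreeGroup.of x)⁻¹ ^ (n + 1))
      ?_ hpow
    intro a b h
    simp only [inv_pow, inv_inj] at h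
    have := hinj h
    omega
  · exact Set.infinite_of_injective_forall_mem hinj hpow'
  · have gen : ∀ y : X, {z | cutSep E0 (z, z * FreeGroup.of y)}.Finite := by
      intro y
      refine (Set.toFinite {1, (FreeGroup.of y)⁻¹}).subset ?_
      intro z hz
      by_contra hcon
      simp only [Set.mem_insert_iff, Set.mem_singleton_iff, not_or] at hcon
      apply hz
      change z⁻¹.toWord.getLast? = some (x, true) ↔
        (z * FreeGroup.of y)⁻¹.toWord.getLast? = some (x, true)
      have hv1 : z⁻¹.toWord ≠ [] := by
        rw [Ne, FreeGroup.toWord_eq_nil_iff]; simpa using hcon.1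
      have hv2 : z⁻¹.toWord ≠ [(y, true)] := by
        rw [← FreeGroup.toWord_of, Ne, FreeGroup.toWord_inj]
        intro h; exact hcon.2 (by rw [← h, inv_inv])
      have hw : (z * FreeGroup.of y)⁻¹.toWord = FreeGroup.reduce ((y, false) :: z⁻¹.toWord) := by
        rw [mul_inv_rev, FreeGroup.toWord_mul, FreeGroup.toWord_inv (FreeGroup.of y),
          FreeGroup.toWord_of]
        simp [FreeGroup.invRev]
      rw [hw, FreeGroup.reduce.cons, FreeGroup.reduce_toWord]
      generalize z⁻¹.toWord = L at hv1 hv2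
      match L, hv1, hv2 with
      | [a], _, h2 =>
        obtain ⟨a1, a2⟩ := a
        by_cases hc : y = a1 ∧ a2 = true
        · exact absurd (by rw [hc.1, hc.2]) h2
        · simp [hc]
      | a :: b :: L', _, _ =>
        by_cases hc : y = a.1 ∧ a.2 = true
        · simp [hc]
        · simp [hc]
    intro k
    induction k using FreeGroup.induction_on with
    | C1 => simp [cutSep]
    | of y => exact gen y
    | inv_of y _ => 
      refine ((gen y).preimage (f := fun z => z * (FreeGroup.of y)⁻¹)
        (fun a _ b _ hab => mul_right_cancel hab)).subset ?_
      intro z hz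
      simp only [cutSep, Set.mem_ofPred_eq, Set.mem_preimage, inv_mul_cancel_right] at hz ⊢
      tauto
    | mul a b ha hb =>
      refine (ha.union (hb.preimage (f := fun z => z * a)
        (fun c _ d _ hab => mul_right_cancel hab))).subset ?_
      intro z hz
      simp only [cutSep, Set.mem_ofPred_eq, Set.mem_union, Set.mem_preimage, ← mul_assoc] at hz ⊢
      tauto

theorem virtuallyFree_bigCut {K : Type*} [Group K] [Infinite K] (H : Subgroup K)
    [hH : H.FiniteIndex] [IsFreeGroup H] :
    ∃ E : Set K, BigCut E ∧ ∀ k : K, {z | cutSep E (z, z * k)}.Finite := by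
  classical
  have hHinf : Infinite H := by
    by_contra hcon
    rw [not_infinite_iff_finite] at hcon
    have : Finite (K ⧸ H) := inferInstance
    have : Finite K := Finite.of_equiv _ (Subgroup.groupEquivQuotientProdSubgroup (s := H)).symm
    exact not_finite K
  let e : H ≃* FreeGroup (IsFreeGroup.Generators H) := IsFreeGroup.toFreeGroup H
  have hne : Nonempty (IsFreeGroup.Generators H) := by
    by_contra hcon
    rw [not_nonempty_iff] at hcon
    have : Finite H := Finite.of_equiv _ e.symm.toEquiv
    exact not_finite H
  obtain ⟨x⟩ := hne
  obtain ⟨E0, hbig, hai⟩ := freeGroup_bigCut x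
  -- right transversal
  obtain ⟨T, hT, _⟩ := H.exists_isComplement_right 1
  have hTfin : T.Finite := hT.finite_right_iff.2 inferInstance
  let φ : K → FreeGroup (IsFreeGroup.Generators H) := fun k => e (hT.equiv k).1
  have hφ : ∀ (h : H) (k : K), φ (h * k) = e h * φ k := by
    intro h k
    simp only [φ]
    rw [Subgroup.IsComplement.equiv_mul_left, map_mul]
  have hφs : Function.Surjective φ := by
    intro f
    refine ⟨(e.symm (f * (φ 1)⁻¹) : H), ?_⟩
    have := hφ (e.symm (f * (φ 1)⁻¹)) 1
    rw [mul_one] at this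
    rw [this]; simp
  refine ⟨φ ⁻¹' E0, ⟨hbig.1.preimage (by rw [hφs.range_eq]; exact Set.subset_univ _),
    hbig.2.preimage (by rw [hφs.range_eq]; exact Set.subset_univ _)⟩, ?_⟩
  intro k
  -- write z = h t
  have hfin : (⋃ t ∈ T, (fun f => ((e.symm (f * (φ t)⁻¹) : H) : K) * t) ''
      {f | cutSep E0 (f, f * ((φ t)⁻¹ * φ (t * k)))}).Finite :=
    hTfin.biUnion fun t _ => (hai _).image _
  refine hfin.subset ?_
  intro z hz
  have hzt := hT.equiv_fst_mul_equiv_snd z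
  set h := (hT.equiv z).1 with hh
  set t := (hT.equiv z).2 with ht
  simp only [Set.mem_iUnion]
  refine ⟨t, t.2, φ z, ?_, ?_⟩
  · have h1 : φ z = e h * φ t := by rw [← hφ, hzt]
    have h2 : φ (z * k) = e h * φ (t * k) := by rw [← hφ, ← mul_assoc, hzt]
    have h3 : φ z * ((φ t)⁻¹ * φ (t * k)) = φ (z * k) := by rw [h1, h2]; group
    change cutSep E0 (φ z, φ z * ((φ t)⁻¹ * φ (t * k)))
    rw [h3]
    exact hz
  · have h1 : φ z = e h * φ t := by rw [← hφ, hzt]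
    change ((e.symm (φ z * (φ t)⁻¹) : H) : K) * t = z
    rw [h1]; simp [hzt]

theorem isFreeGroup_subgroupOf {G : Type*} [Group G] (H K : Subgroup G) [IsFreeGroup H] :
    IsFreeGroup (H.subgroupOf K) := by
  let f : H.subgroupOf K →* H :=
    { toFun := fun x => ⟨((x : K) : G), Subgroup.mem_subgroupOf.1 x.2⟩
      map_one' := rfl
      map_mul' := fun _ _ => rfl }
  have hf : Function.Injective f := by
    intro a b h
    have := congrArg (fun x : H => (x : G)) h
    exact Subtype.ext (Subtype.ext this)
  exact IsFreeGroup.ofMulEquiv (MonoidHom.ofInjective hf).symm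

/-- Characterization of maximal finite subgroups of a finitely generated
virtually free group. -/
theorem maximal_finite_subgroup_iff
    (G : Type*) [Group G] (hfg : Group.FG G) (hvf : VirtuallyFree G)
    (A : Subgroup G) (hA : (A : Set G).Finite) :
    (∀ B : Subgroup G, (B : Set G).Finite → A ≤ B → A = B) ↔
      (∀ g : G, g ∉ A → IsOfFinOrder g → ∃ a ∈ A, ¬ IsOfFinOrder (g * a)) := by
  constructor
  · intro hmax g hg hgo
    by_contra hcon
    push Not at hcon
    obtain ⟨H, hHf, ⟨hHfree⟩⟩ := hvf
    let B : Set G := (A : Set G) ∪ {g}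
    have hBf : B.Finite := hA.union (Set.finite_singleton g)
    let K : Subgroup G := Subgroup.closure B
    have hAK : A ≤ K := fun a ha => Subgroup.subset_closure (Or.inl ha)
    have hgK : g ∈ K := Subgroup.subset_closure (Or.inr rfl)
    have hKinf : Infinite K := by
      by_contra hfin
      rw [not_infinite_iff_finite] at hfin
      have := hmax K (Set.toFinite _) hAK
      exact hg (this ▸ hgK)
    have : IsFreeGroup (H.subgroupOf K) := isFreeGroup_subgroupOf H K
    obtain ⟨E0, hE0, hai⟩ := virtuallyFree_bigCut (H.subgroupOf K)
    have hAo : ∀ a ∈ A, IsOfFinOrder a := by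
      intro a ha
      have : Finite A := hA
      exact (Submonoid.isOfFinOrder_coe (H := A.toSubmonoid) (x := ⟨a, ha⟩)).2 (isOfFinOrder_of_finite (⟨a, ha⟩ : A))
    have hlift : ∀ k : K, IsOfFinOrder (k : G) → IsOfFinOrder k := fun k hk =>
      (Submonoid.isOfFinOrder_coe (H := K.toSubmonoid)).1 hk
    refine serre_main E0 hE0 hai (Subtype.val ⁻¹' B)
      (hBf.preimage Subtype.val_injective.injOn) (Subgroup.closure_closure_coe_preimage) ?_ ?_
    · rintro ⟨h, hK⟩ hh
      apply hlift
      rcases hh with hh | hh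
      · exact hAo h hh
      · have : h = g := hh
        exact this ▸ hgo
    · rintro ⟨h, hK⟩ hh ⟨h', hK'⟩ hh'
      apply hlift
      change IsOfFinOrder (h' * h)
      rcases hh with hh | hh <;> rcases hh' with hh' | hh'
      · exact hAo _ (A.mul_mem hh' hh)
      · have : h' = g := hh'
        rw [this]; exact hcon h hh
      · have : h = g := hh
        subst this
        have h1 := hcon h' hh'
        have h2 : h' * h = MulAut.conj h' (h * h') := by simp [mul_assoc]
        rw [h2]
        exact MonoidHom.isOfFinOrder (MulAut.conj h').toMonoidHom h1
      · have e1 : h = g := hh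
        have e2 : h' = g := hh'
        rw [e1, e2, ← pow_two]
        exact hgo.pow
  · intro h B hB hAB
    refine le_antisymm hAB fun g hg => ?_
    have hBo : ∀ b ∈ B, IsOfFinOrder b := by
      intro b hb
      have : Finite B := hB
      exact (Submonoid.isOfFinOrder_coe (H := B.toSubmonoid) (x := ⟨b, hb⟩)).2 (isOfFinOrder_of_finite (⟨b, hb⟩ : B))
    by_contra hgA
    obtain ⟨a, ha, hna⟩ := h g hgA (hBo g hg)
    exact hna (hBo _ (B.mul_mem hg (hAB ha)))
end
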